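/- arXiv:1407.7565 — 4 statements merged into one kernel-verified Lean document; each statement's English description precedes it below -/
import Mathlib

section
/- Let V be a finite-dimensional real vector space, let V₁, …, Vₙ (n ≥ 1) be linear subspaces of V, and let A⁺ ⊆ V be a convex cone such that A⁺ ⊆ V₁ ∪ ⋯ ∪ Vₙ. Then there exists an index k ∈ {1, …, n} such that A⁺ ⊆ Vₖ. -/
/-- A convex cone in a finite-dimensional real vector space that is
contained in a finite union of linear subspaces is contained in one of them. -/
theorem convex_cone_subset_of_subset_finite_union_subspaces
    {V : Type*} [AddCommGroup V] [Module ℝ V] [FiniteDimensional ℝ V]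
    {n : ℕ} (hn : 1 ≤ n) (W : Fin n → Submodule ℝ V) (A : Set V)
    (hA_add : ∀ x ∈ A, ∀ y ∈ A, x + y ∈ A)
    (hA_smul : ∀ c : ℝ, 0 < c → ∀ x ∈ A, c • x ∈ A)
    (hA_sub : A ⊆ ⋃ i : Fin n, (W i : Set V)) :
    ∃ k : Fin n, A ⊆ (W k : Set V) := by
  by_contra hcon
  simp only [not_exists, Set.not_subset] at hcon
  have key : ∀ s : Finset (Fin n), ∃ x ∈ A, ∀ i ∈ s, x ∉ W i := by
    intro s
    induction s using Finset.induction_on with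
    | empty =>
      obtain ⟨a, ha, _⟩ := hcon ⟨0, hn⟩
      exact ⟨a, ha, by simp⟩
    | insert j s hj ih =>
      obtain ⟨x, hx, hxs⟩ := ih
      obtain ⟨y, hy, hyj⟩ := hcon j
      by_contra hno
      push Not at hno
      have h1 : ∀ m : ℕ, ∃ i ∈ insert j s, x + ((m : ℝ) + 1) • y ∈ W i := fun m =>
        hno _ (hA_add _ hx _ (hA_smul _ (by positivity) _ hy))
      choose f hf hfW using h1
      obtain ⟨a, b, hab, hfab⟩ := Finite.exists_ne_map_eq_of_infinite f
      have ha := hfW a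
      have hb := hfW b
      rw [← hfab] at hb
      have hd := (W (f a)).sub_mem ha hb
      have he : x + ((a : ℝ) + 1) • y - (x + ((b : ℝ) + 1) • y) = ((a : ℝ) - b) • y := by
        module
      rw [he] at hd
      have hne : (a : ℝ) - b ≠ 0 := sub_ne_zero.mpr (by exact_mod_cast hab)
      have hyW : y ∈ W (f a) := ((W (f a)).smul_mem_iff hne).1 hd
      rcases Finset.mem_insert.1 (hf a) with h | h
      · rw [h] at hyW
        exact hyj hyW
      · exact hxs _ h (((W (f a)).add_mem_iff_left ((W (f a)).smul_mem _ hyW)).1 ha)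
  obtain ⟨x, hx, hxs⟩ := key Finset.univ
  obtain ⟨i, hi⟩ := Set.mem_iUnion.1 (hA_sub hx)
  exact hxs i (Finset.mem_univ i) hi
end

section
/- Let V be a finite-dimensional real vector space, W a finite subgroup of the group of linear automorphisms of V, b ⊆ V a linear subspace, and C₁, C₂ ⊆ V convex cones such that C₁ ⊆ ⋃_{w ∈ W} w(b) and C₂ ⊆ ⋃_{w ∈ W} w(b). If dim span(C₁) + dim span(C₂) > dim b, then there exist w ∈ W and a nonzero vector x ∈ V with x ∈ span(C₁) and x ∈ w(span(C₂)). -/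
theorem cone_subset_of_cover {V ι : Type*} [AddCommGroup V] [Module ℝ V] (C : Set V)
    (hadd : ∀ x ∈ C, ∀ y ∈ C, x + y ∈ C)
    (hsmul : ∀ c : ℝ, 0 < c → ∀ x ∈ C, c • x ∈ C) (p : ι → Submodule ℝ V) (s : Finset ι)
    (h : ∀ x ∈ C, ∃ i ∈ s, x ∈ p i) : C = ∅ ∨ ∃ i ∈ s, C ⊆ p i := by
  classical
  induction s using Finset.induction_on with
  | empty =>
    left
    ext x
    simp at h
    simp [h x]
  | insert a s ha ih =>
    by_cases h1 : C ⊆ p a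
    · exact Or.inr ⟨a, Finset.mem_insert_self _ _, h1⟩
    by_cases h2 : ∀ x ∈ C, ∃ i ∈ s, x ∈ p i
    · rcases ih h2 with h3 | ⟨i, hi, h3⟩
      · exact Or.inl h3
      · exact Or.inr ⟨i, Finset.mem_insert_of_mem hi, h3⟩
    exfalso
    obtain ⟨x, hx, hxa⟩ := Set.not_subset.1 h1
    push Not at h2
    obtain ⟨y, hy, hys⟩ := h2
    have hya : y ∈ p a := by
      obtain ⟨i, hi, hyi⟩ := h y hy
      rcases Finset.mem_insert.1 hi with rfl | hi
      · exact hyi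
      · exact absurd hyi (hys i hi)
    have key : ∀ n : ℕ, ∃ i : s, x + ((n : ℝ) + 1) • y ∈ p i := by
      intro n
      obtain ⟨i, hi, hm⟩ := h _ (hadd x hx _ (hsmul ((n : ℝ) + 1) (by positivity) y hy))
      rcases Finset.mem_insert.1 hi with rfl | hi
      · exact absurd ((Submodule.add_mem_iff_left _ (Submodule.smul_mem _ _ hya)).1 hm) hxa
      · exact ⟨⟨i, hi⟩, hm⟩
    choose f hf using key
    obtain ⟨m, n, hmn, hfe⟩ := Finite.exists_ne_map_eq_of_infinite f
    have hm := hf m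
    rw [hfe] at hm
    have hd := Submodule.sub_mem _ hm (hf n)
    have he : x + ((m : ℝ) + 1) • y - (x + ((n : ℝ) + 1) • y) = ((m : ℝ) - n) • y := by module
    rw [he, Submodule.smul_mem_iff _ (sub_ne_zero.2 (by exact_mod_cast hmn))] at hd
    exact hys _ (f n).2 hd

theorem cone_span_le {V : Type*} [AddCommGroup V] [Module ℝ V]
    (W : Subgroup (V ≃ₗ[ℝ] V)) (hW : (W : Set (V ≃ₗ[ℝ] V)).Finite)
    (b : Submodule ℝ V) (C : Set V)
    (hadd : ∀ x ∈ C, ∀ y ∈ C, x + y ∈ C)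
    (hsmul : ∀ c : ℝ, 0 < c → ∀ x ∈ C, c • x ∈ C)
    (hsub : C ⊆ ⋃ w ∈ (W : Set (V ≃ₗ[ℝ] V)), w '' (b : Set V)) :
    ∃ w ∈ W, (Submodule.span ℝ C).map (w⁻¹ : V ≃ₗ[ℝ] V).toLinearMap ≤ b := by
  have := cone_subset_of_cover C hadd hsmul
    (fun w : V ≃ₗ[ℝ] V => b.map w.toLinearMap) hW.toFinset (by
      intro x hx
      have := hsub hx
      simp only [Set.mem_iUnion] at this
      obtain ⟨w, hw, z, hz, rfl⟩ := this
      exact ⟨w, hW.mem_toFinset.2 hw, z, hz, rfl⟩)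
  rcases this with rfl | ⟨w, hw, h⟩
  · exact ⟨1, W.one_mem, by simp⟩
  · refine ⟨w, hW.mem_toFinset.1 hw, ?_⟩
    rw [Submodule.map_le_iff_le_comap, Submodule.span_le]
    intro x hx
    obtain ⟨z, hz, rfl⟩ := h hx
    change w.symm (w z) ∈ b
    simpa using hz

/-- If two convex cones in a finite-dimensional real vector space are each
contained in the union of the images of a subspace `b` under a finite group `W` of linear
automorphisms, and the sum of the dimensions of their spans exceeds `dim b`, then some
`W`-translate of the span of the second cone meets the span of the first cone nontrivially. -/
theorem exists_weyl_translate_inter_ne_bot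
    {V : Type*} [AddCommGroup V] [Module ℝ V] [FiniteDimensional ℝ V]
    (W : Subgroup (V ≃ₗ[ℝ] V)) (hW : (W : Set (V ≃ₗ[ℝ] V)).Finite)
    (b : Submodule ℝ V) (C₁ C₂ : Set V)
    (hC₁_add : ∀ x ∈ C₁, ∀ y ∈ C₁, x + y ∈ C₁)
    (hC₁_smul : ∀ c : ℝ, 0 < c → ∀ x ∈ C₁, c • x ∈ C₁)
    (hC₂_add : ∀ x ∈ C₂, ∀ y ∈ C₂, x + y ∈ C₂)
    (hC₂_smul : ∀ c : ℝ, 0 < c → ∀ x ∈ C₂, c • x ∈ C₂)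
    (hC₁_sub : C₁ ⊆ ⋃ w ∈ (W : Set (V ≃ₗ[ℝ] V)), w '' (b : Set V))
    (hC₂_sub : C₂ ⊆ ⋃ w ∈ (W : Set (V ≃ₗ[ℝ] V)), w '' (b : Set V))
    (hdim : Module.finrank ℝ b <
      Module.finrank ℝ (Submodule.span ℝ C₁) + Module.finrank ℝ (Submodule.span ℝ C₂)) :
    ∃ w ∈ W, ∃ x : V, x ≠ 0 ∧ x ∈ Submodule.span ℝ C₁ ∧
      x ∈ (w : V ≃ₗ[ℝ] V) '' (Submodule.span ℝ C₂ : Set V) := by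
  obtain ⟨w₁, hw₁, h₁⟩ := cone_span_le W hW b C₁ hC₁_add hC₁_smul hC₁_sub
  obtain ⟨w₂, hw₂, h₂⟩ := cone_span_le W hW b C₂ hC₂_add hC₂_smul hC₂_sub
  have e := Submodule.finrank_sup_add_finrank_inf_eq
    ((Submodule.span ℝ C₁).map (w₁⁻¹ : V ≃ₗ[ℝ] V).toLinearMap)
    ((Submodule.span ℝ C₂).map (w₂⁻¹ : V ≃ₗ[ℝ] V).toLinearMap)
  have l := Submodule.finrank_mono (sup_le h₁ h₂)
  rw [LinearEquiv.finrank_map_eq, LinearEquiv.finrank_map_eq] at e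
  have hne : (Submodule.span ℝ C₁).map (w₁⁻¹ : V ≃ₗ[ℝ] V).toLinearMap ⊓
      (Submodule.span ℝ C₂).map (w₂⁻¹ : V ≃ₗ[ℝ] V).toLinearMap ≠ ⊥ := by
    intro h0
    rw [h0, finrank_bot] at e
    omega
  obtain ⟨z, ⟨⟨x, hx, hxz⟩, ⟨y, hy, hyz⟩⟩, hz⟩ := Submodule.exists_mem_ne_zero_of_ne_bot hne
  change w₁.symm x = z at hxz
  change w₂.symm y = z at hyz
  refine ⟨w₁ * w₂⁻¹, W.mul_mem hw₁ (W.inv_mem hw₂), x, ?_, hx, y, hy, ?_⟩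
  · rintro rfl
    exact hz (by simpa using hxz.symm)
  · change w₁ (w₂.symm y) = x
    rw [hyz, ← hxz]
    simp
end

section
/- Let k ≥ 5, let G = SL(2k+1, ℝ) with its standard topology, let J = diag(I_{k−1}, −I_{k+2}) be the diagonal (2k+1)×(2k+1) matrix with the first k−1 diagonal entries equal to 1 and the remaining k+2 diagonal entries equal to −1, and let H = SO(k−1, k+2) = {A ∈ G : Aᵀ J A = J}, a closed subgroup of G. Then there is no closed subgroup L of G satisfying all of the following: (a) L has finitely many connected components; (b) there exists g ∈ G such that g L g⁻¹ is invariant under the map A ↦ (Aᵀ)⁻¹; (c) the action of L on the quotient space G/H by left translations is proper; and (d) the orbit space L\(G/H) of this action is compact. In other words, SL(2k+1, ℝ)/SO(k−1, k+2) admits no standard compact Clifford–Klein form. -/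
open scoped Matrix

/-- `SL(n, ℝ)` with its standard topology (as a subspace of the space of matrices,
which carries the product topology). -/
instance specialLinearGroup.topologicalSpace (n : Type*) [DecidableEq n] [Fintype n] :
    TopologicalSpace (Matrix.SpecialLinearGroup n ℝ) :=
  instTopologicalSpaceSubtype

instance aux_topgrp (n : Type*) [DecidableEq n] [Fintype n] :
    @IsTopologicalGroup (Matrix.SpecialLinearGroup n ℝ) (specialLinearGroup.topologicalSpace n) _ :=
  Matrix.SpecialLinearGroup.topologicalGroup

open Matrix Filter Topology
attribute [local instance] Matrix.linftyOpNormedRing Matrix.linftyOpNormedAlgebra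

set_option linter.unusedSectionVars false
set_option linter.style.haveILetI false

section tele
variable {R : Type*} [NormedRing R] [NormOneClass R]

lemma aux_pow_sub_pow (a b : R) (M : ℝ) (hM : 1 ≤ M) (ha : ‖a‖ ≤ M) (hb : ‖b‖ ≤ M) (m : ℕ) :
    ‖a ^ m - b ^ m‖ ≤ m * ‖a - b‖ * M ^ m := by
  induction m with
  | zero => simp
  | succ m ih =>
    have e : a ^ (m+1) - b ^ (m+1) = (a ^ m - b ^ m) * a + b ^ m * (a - b) := by
      rw [pow_succ, pow_succ]; noncomm_ring
    have h1 : ‖b ^ m‖ ≤ M ^ m := (norm_pow_le b m).trans (pow_le_pow_left₀ (norm_nonneg _) hb m)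
    have hMm : 1 ≤ M ^ m := one_le_pow₀ hM
    rw [e]
    calc ‖(a ^ m - b ^ m) * a + b ^ m * (a - b)‖
        ≤ ‖a ^ m - b ^ m‖ * ‖a‖ + ‖b ^ m‖ * ‖a - b‖ :=
          (norm_add_le _ _).trans (add_le_add (norm_mul_le _ _) (norm_mul_le _ _))
      _ ≤ (m * ‖a - b‖ * M ^ m) * M + M ^ m * ‖a - b‖ := by gcongr
      _ ≤ (m * ‖a - b‖ * M ^ m) * M + M ^ m * M * ‖a - b‖ := by
          gcongr
          nlinarith
      _ = _ := by push_cast; ring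

end tele

section expo
variable {R : Type*} [NormedRing R] [NormOneClass R] [NormedAlgebra ℝ R] [CompleteSpace R]

lemma aux_exp_deriv (X : R) (c : ℕ → ℝ) (hc : Tendsto c atTop atTop) :
    Tendsto (fun j => c j • (NormedSpace.exp ((c j)⁻¹ • X) - 1)) atTop (𝓝 X) := by
  have h := (hasDerivAt_exp_smul_const (𝕂 := ℝ) X (0:ℝ)).tendsto_slope_zero
  simp only [zero_smul, NormedSpace.exp_zero, one_mul, zero_add] at h
  have h2 : Tendsto (fun j => (c j)⁻¹) atTop (𝓝[≠] 0) := by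
    rw [tendsto_nhdsWithin_iff]
    refine ⟨hc.inv_tendsto_atTop, ?_⟩
    filter_upwards [hc.eventually_gt_atTop 0] with j hj
    simp [hj.ne']
  have h3 := h.comp h2
  simpa [Function.comp_def] using h3

lemma aux_trotter (X Y : R) (c : ℕ → ℝ) (hc : Tendsto c atTop atTop) :
    Tendsto (fun j => c j • (NormedSpace.exp ((c j)⁻¹ • X) * NormedSpace.exp ((c j)⁻¹ • Y) - 1))
      atTop (𝓝 (X + Y)) := by
  have h1 := aux_exp_deriv X _ hc
  have h2 := aux_exp_deriv Y _ hc
  have h0 : Tendsto (fun j : ℕ => NormedSpace.exp ((c j)⁻¹ • Y)) atTop (𝓝 1) := by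
    letI : NormedAlgebra ℚ R := NormedAlgebra.restrictScalars ℚ ℝ R
    have h3 : Tendsto (fun j : ℕ => (c j)⁻¹ • Y) atTop (𝓝 ((0:ℝ) • Y)) :=
      (hc.inv_tendsto_atTop).smul_const Y
    rw [zero_smul] at h3
    have := ((NormedSpace.exp_continuous (𝔸 := R)).tendsto 0).comp h3
    simpa [Function.comp_def] using this
  have h4 := (h1.mul h0).add h2
  rw [mul_one] at h4
  refine h4.congr fun j => ?_
  rw [smul_mul_assoc, ← smul_add]
  congr 1
  rw [sub_mul, one_mul]; abel

lemma aux_pow_tendsto (g : ℕ → R) (N : ℕ → ℕ) (hN : Tendsto N atTop atTop) (X : R)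
    (h : Tendsto (fun j => (N j : ℝ) • (g j - 1)) atTop (𝓝 X)) :
    Tendsto (fun j => g j ^ N j) atTop (𝓝 (NormedSpace.exp X)) := by
  have hN' : Tendsto (fun j => (N j : ℝ)) atTop atTop := tendsto_natCast_atTop_atTop.comp hN
  have hv := aux_exp_deriv X _ hN'
  set v : ℕ → R := fun j => NormedSpace.exp (((N j : ℝ))⁻¹ • X) with hvdef
  have hvp : ∀ᶠ j in atTop, v j ^ N j = NormedSpace.exp X := by
    filter_upwards [hN'.eventually_gt_atTop 0] with j hj
    letI : NormedAlgebra ℚ R := NormedAlgebra.restrictScalars ℚ ℝ R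
    rw [hvdef]
    simp only
    rw [← NormedSpace.exp_nsmul, ← Nat.cast_smul_eq_nsmul ℝ, smul_smul, mul_inv_cancel₀ hj.ne',
      one_smul]
  have hd : Tendsto (fun j => ‖(N j : ℝ) • (g j - 1) - (N j : ℝ) • (v j - 1)‖) atTop (𝓝 0) := by
    have := (h.sub hv).norm
    simpa using this
  set K := ‖X‖ + 1 with hK
  have hb : ∀ u : ℕ → R, Tendsto (fun j => (N j : ℝ) • (u j - 1)) atTop (𝓝 X) →
      ∀ᶠ j in atTop, ‖u j‖ ≤ 1 + K / N j := by
    intro u hu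
    have h1 : ∀ᶠ j in atTop, ‖(N j : ℝ) • (u j - 1)‖ < K :=
      hu.norm.eventually_lt_const (by simp [hK])
    filter_upwards [h1, hN'.eventually_gt_atTop 0] with j hj hp
    rw [norm_smul, Real.norm_of_nonneg hp.le] at hj
    have h2 : ‖u j - 1‖ ≤ K / N j := by
      rw [le_div_iff₀ hp]; linarith
    calc ‖u j‖ = ‖1 + (u j - 1)‖ := by congr 1; abel
      _ ≤ ‖(1:R)‖ + ‖u j - 1‖ := norm_add_le _ _
      _ ≤ _ := by rw [norm_one]; linarith
  have hKp : 0 < K := by positivity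
  have key : Tendsto (fun j => g j ^ N j - v j ^ N j) atTop (𝓝 0) := by
    apply squeeze_zero_norm' (a := fun j => ‖(N j : ℝ) • (g j - 1) - (N j : ℝ) • (v j - 1)‖
      * Real.exp K)
    · filter_upwards [hb g h, hb v hv, hN'.eventually_gt_atTop 0] with j h1 h2 hp
      have h3 := aux_pow_sub_pow (g j) (v j) (1 + K / N j) (by
        have : 0 ≤ K / N j := by positivity
        linarith) h1 h2 (N j)
      refine h3.trans ?_
      have e : (N j : ℝ) • (g j - 1) - (N j : ℝ) • (v j - 1) = (N j : ℝ) • (g j - v j) := by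
        rw [← smul_sub]; congr 1; abel
      rw [e, norm_smul, Real.norm_of_nonneg hp.le]
      gcongr
      calc (1 + K / N j) ^ N j ≤ (Real.exp (K / N j)) ^ N j := by
            apply pow_le_pow_left₀ (by positivity)
            linarith [Real.add_one_le_exp (K / N j)]
        _ = Real.exp K := by
            rw [← Real.exp_nat_mul]; congr 1; field_simp
    · simpa using hd.mul_const (Real.exp K)
  have : Tendsto (fun j => (g j ^ N j - v j ^ N j) + v j ^ N j) atTop (𝓝 (0 + NormedSpace.exp X)) :=
    key.add (tendsto_const_nhds.congr' (hvp.mono fun j hj => hj.symm))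
  simpa using this

end expo

structure MGrp (n : Type*) [Fintype n] [DecidableEq n] where
  carrier : Set (Matrix n n ℝ)
  one_mem : 1 ∈ carrier
  mul_mem : ∀ A ∈ carrier, ∀ B ∈ carrier, A * B ∈ carrier
  inv_mem : ∀ A ∈ carrier, A⁻¹ ∈ carrier
  det_one : ∀ A ∈ carrier, A.det = 1
  tr_mem : ∀ A ∈ carrier, Aᵀ ∈ carrier
  closed : IsClosed carrier

section lie
variable {n : Type*} [Fintype n] [DecidableEq n] [Nonempty n]

lemma MGrp.pow_mem (L : MGrp n) (A : Matrix n n ℝ) (hA : A ∈ L.carrier) (m : ℕ) :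
    A ^ m ∈ L.carrier := by
  induction m with
  | zero => simpa using L.one_mem
  | succ m ih => rw [pow_succ]; exact L.mul_mem _ ih _ hA

def MGrp.IsLie (L : MGrp n) (X : Matrix n n ℝ) : Prop :=
  ∀ t : ℝ, NormedSpace.exp (t • X) ∈ L.carrier

lemma MGrp.isLie_of_tendsto (L : MGrp n) (g : ℕ → Matrix n n ℝ) (hg : ∀ j, g j ∈ L.carrier)
    (c : ℕ → ℝ) (hc : Tendsto c atTop atTop) (X : Matrix n n ℝ)
    (h : Tendsto (fun j => c j • (g j - 1)) atTop (𝓝 X)) : L.IsLie X := by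
  have pos : ∀ t : ℝ, 0 < t → NormedSpace.exp (t • X) ∈ L.carrier := by
    intro t ht
    have hN : Tendsto (fun j => ⌊t * c j⌋₊) atTop atTop :=
      tendsto_nat_floor_atTop.comp (hc.const_mul_atTop ht)
    have h1 : Tendsto (fun j => ((⌊t * c j⌋₊ : ℕ) : ℝ) / c j) atTop (𝓝 t) :=
      (tendsto_nat_floor_mul_div_atTop ht.le).comp hc
    have h2 := aux_pow_tendsto g _ hN (t • X) (by
      refine (h1.smul h).congr' ?_
      filter_upwards [hc.eventually_gt_atTop 0] with j hj
      rw [smul_smul, div_mul_cancel₀ _ hj.ne'])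
    exact L.closed.mem_of_tendsto h2 (Eventually.of_forall fun j => L.pow_mem _ (hg j) _)
  intro t
  rcases lt_trichotomy t 0 with ht | ht | ht
  · have h1 := L.inv_mem _ (pos (-t) (by linarith))
    rwa [← Matrix.exp_neg, neg_smul, neg_neg] at h1
  · simpa [ht] using L.one_mem
  · exact pos t ht

def MGrp.lie (L : MGrp n) : Submodule ℝ (Matrix n n ℝ) where
  carrier := {X | L.IsLie X}
  zero_mem' := by intro t; simpa using L.one_mem
  smul_mem' := by
    intro c X hX t
    rw [smul_smul]; exact hX _
  add_mem' := by
    intro X Y hX hY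
    have hc : Tendsto (fun j : ℕ => (j:ℝ)) atTop atTop := tendsto_natCast_atTop_atTop
    exact L.isLie_of_tendsto (fun j : ℕ => NormedSpace.exp (((j:ℝ))⁻¹ • X) *
      NormedSpace.exp (((j:ℝ))⁻¹ • Y)) (fun j => L.mul_mem _ (hX _) _ (hY _)) _ hc _
      (aux_trotter X Y _ hc)

lemma MGrp.mem_lie (L : MGrp n) (X : Matrix n n ℝ) : X ∈ L.lie ↔ L.IsLie X := Iff.rfl

lemma MGrp.exists_lie (L : MGrp n) (g : ℕ → Matrix n n ℝ) (hg : ∀ j, g j ∈ L.carrier)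
    (h1 : ∀ j, g j ≠ 1) (ht : Tendsto g atTop (𝓝 1)) : ∃ X ∈ L.lie, X ≠ 0 := by
  have hpos : ∀ j, 0 < ‖g j - 1‖ := fun j => norm_pos_iff.2 (sub_ne_zero.2 (h1 j))
  have hs : ∀ j, (‖g j - 1‖⁻¹ : ℝ) • (g j - 1) ∈ Metric.sphere (0 : Matrix n n ℝ) 1 := by
    intro j
    simp [norm_smul, (hpos j).ne']
  haveI : ProperSpace (Matrix n n ℝ) := FiniteDimensional.proper ℝ _
  obtain ⟨X, hX, φ, hφ, hl⟩ := (isCompact_sphere (0 : Matrix n n ℝ) 1).tendsto_subseq hs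
  refine ⟨X, ?_, ?_⟩
  · refine L.isLie_of_tendsto (fun j => g (φ j)) (fun j => hg _) (fun j => ‖g (φ j) - 1‖⁻¹) ?_ X hl
    apply Tendsto.inv_tendsto_nhdsGT_zero
    rw [tendsto_nhdsWithin_iff]
    refine ⟨?_, Eventually.of_forall fun j => hpos _⟩
    have := ((ht.comp hφ.tendsto_atTop).sub_const 1).norm
    simpa using this
  · rintro rfl
    simp at hX

lemma MGrp.conj_lie (L : MGrp n) (A : Matrix n n ℝ) (hA : A ∈ L.carrier) (Z : Matrix n n ℝ)
    (hZ : Z ∈ L.lie) : A * Z * A⁻¹ ∈ L.lie := by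
  intro t
  have hu : IsUnit A := by
    rw [Matrix.isUnit_iff_isUnit_det, L.det_one A hA]; exact isUnit_one
  have : t • (A * Z * A⁻¹) = A * (t • Z) * A⁻¹ := by simp
  rw [this, Matrix.exp_conj _ _ hu]
  exact L.mul_mem _ (L.mul_mem _ hA _ (hZ t)) _ (L.inv_mem _ hA)

end lie

section alg
variable {n : Type*} [Fintype n] [DecidableEq n] [Nonempty n]

lemma aux_spec (X : Matrix n n ℝ) (hX : Xᵀ = X) : ∃ (U : Matrix n n ℝ) (x : n → ℝ),
    U * Uᵀ = 1 ∧ Uᵀ * U = 1 ∧ X = U * diagonal x * Uᵀ := by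
  have h : X.IsHermitian := by
    rw [Matrix.IsHermitian, Matrix.conjTranspose_eq_transpose_of_trivial]; exact hX
  have h1 := h.spectral_theorem
  have e : ((star h.eigenvectorUnitary : unitary _) : Matrix n n ℝ)
      = (h.eigenvectorUnitary : Matrix n n ℝ)ᵀ := by
    rw [Unitary.coe_star, Matrix.star_eq_conjTranspose,
      Matrix.conjTranspose_eq_transpose_of_trivial]
  refine ⟨h.eigenvectorUnitary, h.eigenvalues, ?_, ?_, ?_⟩
  · rw [← e]; simp
  · rw [← e]; simp
  · rw [Unitary.conjStarAlgAut_apply] at h1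
    rw [← e]; exact h1

lemma aux_exp (U : Matrix n n ℝ) (x : n → ℝ) (h1 : U * Uᵀ = 1) :
    NormedSpace.exp (U * diagonal x * Uᵀ) = U * diagonal (fun i => Real.exp (x i)) * Uᵀ := by
  have hi : U⁻¹ = Uᵀ := Matrix.inv_eq_right_inv h1
  have hu : IsUnit U := IsUnit.of_mul_eq_one _ h1
  rw [← hi, Matrix.exp_conj _ _ hu, Matrix.exp_diagonal]
  congr 3
  ext i
  rw [Pi.coe_exp, Real.exp_eq_exp_ℝ]

lemma aux_exp_smul (U : Matrix n n ℝ) (x : n → ℝ) (h1 : U * Uᵀ = 1) (t : ℝ) :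
    NormedSpace.exp (t • (U * diagonal x * Uᵀ))
      = U * diagonal (fun i => Real.exp (t * x i)) * Uᵀ := by
  have : t • (U * diagonal x * Uᵀ) = U * diagonal (fun i => t * x i) * Uᵀ := by
    rw [← smul_mul_assoc, ← mul_smul_comm, ← Matrix.diagonal_smul]; rfl
  rw [this, aux_exp _ _ h1]

lemma MGrp.ad_lie (L : MGrp n) (X : Matrix n n ℝ) (hX : Xᵀ = X)
    (hL : NormedSpace.exp X ∈ L.carrier) (Z : Matrix n n ℝ) (hZ : Z ∈ L.lie) :
    X * Z - Z * X ∈ L.lie := by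
  obtain ⟨U, x, h1, h2, rfl⟩ := aux_spec X hX
  set X := U * diagonal x * Uᵀ with hXd
  set s : Finset ℝ := Finset.univ.image (fun p : n × n => Real.exp (x p.1 - x p.2)) with hs
  set p := Lagrange.interpolate s id Real.log with hp
  have hev : ∀ a b, p.eval (Real.exp (x a - x b)) = x a - x b := by
    intro a b
    have hm : Real.exp (x a - x b) ∈ s :=
      Finset.mem_image.2 ⟨(a, b), Finset.mem_univ _, rfl⟩
    have := Lagrange.eval_interpolate_at_node (s := s) (v := id) Real.log
      (Set.injOn_id _) hm
    rw [hp]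
    simpa using this
  have hA : ∀ j : ℕ, NormedSpace.exp X ^ j * Z * (NormedSpace.exp X ^ j)⁻¹ ∈ L.lie :=
    fun j => L.conj_lie _ (L.pow_mem _ hL j) _ hZ
  have hA2 : ∀ j : ℕ, NormedSpace.exp X ^ j * Z * (NormedSpace.exp X ^ j)⁻¹
      = U * (diagonal (fun i => Real.exp ((j:ℝ) * x i)) * (Uᵀ * Z * U)
        * diagonal (fun i => Real.exp (-(j:ℝ) * x i))) * Uᵀ := by
    intro j
    rw [← Matrix.exp_nsmul, ← Matrix.exp_neg, ← Nat.cast_smul_eq_nsmul ℝ, ← neg_smul,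
      hXd, aux_exp_smul _ _ h1, aux_exp_smul _ _ h1]
    simp only [Matrix.mul_assoc]
  have key : X * Z - Z * X = p.sum (fun j c => c •
      (NormedSpace.exp X ^ j * Z * (NormedSpace.exp X ^ j)⁻¹)) := by
    have hl : X * Z - Z * X = U * (diagonal x * (Uᵀ * Z * U) - (Uᵀ * Z * U) * diagonal x) * Uᵀ := by
      have e1 : Z * X = U * (Uᵀ * Z * U * diagonal x) * Uᵀ := by
        calc Z * X = (U * Uᵀ) * Z * X := by rw [h1, Matrix.one_mul]
          _ = _ := by rw [hXd]; simp only [Matrix.mul_assoc]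
      have e2 : X * Z = U * (diagonal x * (Uᵀ * Z * U)) * Uᵀ := by
        calc X * Z = X * Z * (U * Uᵀ) := by rw [h1, Matrix.mul_one]
          _ = _ := by rw [hXd]; simp only [Matrix.mul_assoc]
      rw [e1, e2, Matrix.mul_sub, Matrix.sub_mul]
    rw [hl, Polynomial.sum_def]
    simp only [hA2]
    have hc : ∀ (c : ℝ) (M : Matrix n n ℝ), c • (U * M * Uᵀ) = U * (c • M) * Uᵀ := by
      intro c M; simp
    simp only [hc]
    rw [← Finset.sum_mul, ← Finset.mul_sum]
    congr 2
    ext a b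
    set W := Uᵀ * Z * U
    rw [Matrix.sum_apply]
    have := hev a b
    rw [Polynomial.eval_eq_sum, Polynomial.sum_def] at this
    rw [Matrix.sub_apply, Matrix.diagonal_mul, Matrix.mul_diagonal]
    calc x a * W a b - W a b * x b = (x a - x b) * W a b := by ring
      _ = _ := by
        rw [← this, Finset.sum_mul]
        refine Finset.sum_congr rfl fun j _ => ?_
        simp only [Matrix.mul_diagonal, Matrix.diagonal_mul, Matrix.smul_apply, smul_eq_mul,
          smul_mul_assoc, mul_smul_comm]
        rw [← Real.exp_nat_mul]
        have : Real.exp ((j:ℝ) * (x a - x b)) = Real.exp (j * x a) * Real.exp (-(j:ℝ) * x b) := by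
          rw [← Real.exp_add]; congr 1; ring
        rw [this]; ring
  rw [key, Polynomial.sum_def]
  exact L.lie.sum_mem fun j _ => L.lie.smul_mem _ (hA j)

def MGrp.nor (L : MGrp n) : Submodule ℝ (Matrix n n ℝ) where
  carrier := {X | ∀ Z ∈ L.lie, X * Z - Z * X ∈ L.lie}
  zero_mem' := by intro Z _; simp
  smul_mem' := by
    intro c X hX Z hZ
    have := L.lie.smul_mem c (hX Z hZ)
    simpa [smul_sub] using this
  add_mem' := by
    intro X Y hX hY Z hZ
    have := L.lie.add_mem (hX Z hZ) (hY Z hZ)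
    convert this using 1
    noncomm_ring

lemma MGrp.nor_bracket (L : MGrp n) (X Y : Matrix n n ℝ) (hX : X ∈ L.nor) (hY : Y ∈ L.nor) :
    X * Y - Y * X ∈ L.nor := by
  intro Z hZ
  have := L.lie.sub_mem (hX _ (hY Z hZ)) (hY _ (hX Z hZ))
  convert this using 1
  noncomm_ring

lemma MGrp.nor_single (L : MGrp n) (h : ∀ X : Matrix n n ℝ, Xᵀ = X → X.trace = 0 → X ∈ L.nor)
    (a b : n) (hab : a ≠ b) : Matrix.single a b (1:ℝ) ∈ L.nor := by
  have h1 : Matrix.single a b (1:ℝ) + Matrix.single b a 1 ∈ L.nor := by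
    apply h
    · simp [add_comm]
    · simp [Matrix.trace_single_eq_of_ne, hab, hab.symm]
  have h2 : Matrix.single a a (1:ℝ) - Matrix.single b b 1 ∈ L.nor := by
    apply h
    · simp
    · simp
  have h3 := L.nor_bracket _ _ h2 h1
  have h4 := L.nor.smul_mem (1/4) (L.nor.add_mem h3 (L.nor.smul_mem 2 h1))
  convert h4 using 1
  simp [Matrix.mul_add, Matrix.add_mul, Matrix.sub_mul, Matrix.mul_sub, hab, hab.symm]
  ext i j
  simp [Matrix.single_apply]
  split_ifs <;> norm_num

lemma MGrp.lie_single (L : MGrp n) (h : ∀ X : Matrix n n ℝ, Xᵀ = X → X.trace = 0 → X ∈ L.nor)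
    (h0 : ∃ X ∈ L.lie, X ≠ 0) (hn : ∀ a b : n, ∃ c, c ≠ a ∧ c ≠ b)
    (a b : n) (hab : a ≠ b) : Matrix.single a b (1:ℝ) ∈ L.lie := by
  by_contra hcon
  have hs := L.nor_single h
  have hz0 : ∀ X ∈ L.lie, X b a = 0 := by
    intro X hX
    by_contra hne
    apply hcon
    have h1 := hs a b hab _ (hs a b hab X hX)
    have h2 := L.lie.smul_mem (-(1/2) * (X b a)⁻¹) h1
    convert h2 using 1
    have e : Matrix.single a b (1:ℝ) * Matrix.single a b (1:ℝ) = 0 := by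
      simp [hab.symm]
    have e2 : Matrix.single a b (1:ℝ) * X * Matrix.single a b (1:ℝ) = X b a • Matrix.single a b 1 := by
      ext i j
      simp [Matrix.mul_apply, Matrix.single_apply, ite_and]
      split_ifs <;> rfl
    have e3 : Matrix.single a b (1:ℝ) * (Matrix.single a b (1:ℝ) * X - X * Matrix.single a b (1:ℝ))
      - (Matrix.single a b (1:ℝ) * X - X * Matrix.single a b (1:ℝ)) * Matrix.single a b (1:ℝ)
      = -(2:ℝ) • (X b a • Matrix.single a b 1) := by
      rw [← e2, Matrix.mul_sub, Matrix.sub_mul, ← Matrix.mul_assoc, e, Matrix.mul_assoc X, e]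
      simp only [Matrix.mul_assoc, Matrix.zero_mul, Matrix.mul_zero]
      rw [neg_smul, two_smul]; abel
    have e4 : (-(1 / 2) * (X b a)⁻¹) * ((-2) * X b a) = 1 := by field_simp
    rw [e3, smul_smul (-2 : ℝ), smul_smul, e4, one_smul]
  have hent : ∀ (c d i j : n) (X : Matrix n n ℝ), (Matrix.single c d (1:ℝ) * X
      - X * Matrix.single c d (1:ℝ)) i j = (if c = i then X d j else 0) -
        (if d = j then X i c else 0) := by
    intro c d i j X
    simp [Matrix.mul_apply, Matrix.single_apply, ite_and, Finset.sum_ite_irrel]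
  have hcol : ∀ i j, i ≠ j → (∀ X ∈ L.lie, X i j = 0) → ∀ d, d ≠ j → ∀ X ∈ L.lie, X d j = 0 := by
    intro i j hij hz d hd X hX
    by_cases hdi : d = i
    · rw [hdi]; exact hz X hX
    have := hz _ (hs i d (Ne.symm hdi) X hX)
    rw [hent] at this
    simpa [hd] using this
  have hrow : ∀ i j, i ≠ j → (∀ X ∈ L.lie, X i j = 0) → ∀ d, d ≠ i → ∀ X ∈ L.lie, X i d = 0 := by
    intro i j hij hz d hd X hX
    by_cases hdi : d = j
    · rw [hdi]; exact hz X hX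
    have := hz _ (hs d j hdi X hX)
    rw [hent] at this
    simpa [hd] using this
  have hall : ∀ i j, i ≠ j → ∀ X ∈ L.lie, X i j = 0 := by
    intro i j hij
    by_cases hia : i = a
    · subst hia
      obtain ⟨c, hc1, hc2⟩ := hn i j
      exact hcol c j hc2 (hrow c i hc1 (hcol b i hab.symm hz0 c hc1) j hc2.symm) i hij
    · exact hrow i a hia (hcol b a hab.symm hz0 i hia) j hij.symm
  have hdiag : ∀ i j, i ≠ j → ∀ X ∈ L.lie, X i i = X j j := by
    intro i j hij X hX
    have := hall i j hij _ (hs i j hij X hX)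
    rw [hent] at this
    simp at this
    linarith
  obtain ⟨X, hX, hX0⟩ := h0
  have hXs : X = diagonal (fun _ => X a a) := by
    ext i j
    by_cases hij : i = j
    · subst hij
      by_cases hia : i = a
      · simp [hia]
      · simp [hdiag i a hia X hX]
    · simp [hall i j hij X hX, hij]
  have h1 := L.det_one _ (hX 1)
  rw [one_smul, hXs, Matrix.exp_diagonal, Matrix.det_diagonal] at h1
  simp only [Pi.coe_exp, ← Real.exp_eq_exp_ℝ, Finset.prod_const] at h1
  rw [← Real.exp_nat_mul, Real.exp_eq_one_iff] at h1
  have : X a a = 0 := by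
    rcases mul_eq_zero.1 h1 with h | h
    · simp at h
    · exact h
  apply hX0
  rw [hXs, this]; simp

lemma aux_det (U : Matrix n n ℝ) (x : n → ℝ) (h1 : U * Uᵀ = 1) :
    (U * diagonal x * Uᵀ).det = ∏ i, x i := by
  have : U.det * Uᵀ.det = 1 := by rw [← Matrix.det_mul, h1, Matrix.det_one]
  rw [Matrix.det_mul, Matrix.det_mul, Matrix.det_diagonal]
  linear_combination (∏ i, x i) * this

lemma aux_tr (U M : Matrix n n ℝ) (h2 : Uᵀ * U = 1) : (U * M * Uᵀ).trace = M.trace := by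
  rw [Matrix.mul_assoc, Matrix.trace_mul_comm, Matrix.mul_assoc, h2, Matrix.mul_one]

lemma MGrp.log_trace (L : MGrp n) (X : Matrix n n ℝ) (hX : Xᵀ = X)
    (hL : NormedSpace.exp X ∈ L.carrier) : X.trace = 0 := by
  obtain ⟨U, x, h1, h2, rfl⟩ := aux_spec X hX
  have := L.det_one _ hL
  rw [aux_exp _ _ h1, aux_det _ _ h1, ← Real.exp_sum, Real.exp_eq_one_iff] at this
  rw [aux_tr _ _ h2, Matrix.trace_diagonal, this]

def MGrp.Perp (L : MGrp n) (Y : Matrix n n ℝ) : Prop :=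
  ∀ X : Matrix n n ℝ, Xᵀ = X → NormedSpace.exp X ∈ L.carrier → (X * Y).trace = 0

lemma MGrp.sym_nor (L : MGrp n)
    (h : ∀ Y : Matrix n n ℝ, Yᵀ = Y → Y.trace = 0 → L.Perp Y → Y = 0)
    (Z : Matrix n n ℝ) (hZ : Zᵀ = Z) (hZ0 : Z.trace = 0) : Z ∈ L.nor := by
  by_contra hcon
  obtain ⟨f, hf, hle⟩ := Submodule.exists_le_ker_of_notMem hcon
  set B : Matrix n n ℝ := Matrix.of fun j i => f (Matrix.single i j 1) with hB
  have hfB : ∀ M, f M = (M * B).trace := by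
    intro M
    conv_lhs => rw [Matrix.matrix_eq_sum_single M]
    simp only [map_sum, Matrix.trace, Matrix.diag_apply, Matrix.mul_apply]
    refine Finset.sum_congr rfl fun i _ => Finset.sum_congr rfl fun j _ => ?_
    have : Matrix.single i j (M i j) = M i j • Matrix.single i j (1:ℝ) := by simp
    rw [this, map_smul, hB]; simp
  set Y0 := (1/2 : ℝ) • (B + Bᵀ) with hY0
  have hc : (Fintype.card n : ℝ) ≠ 0 := by simp
  set Y := Y0 - (Y0.trace / Fintype.card n) • (1 : Matrix n n ℝ) with hY
  have hYt : ∀ M : Matrix n n ℝ, Mᵀ = M → M.trace = 0 → (M * Y).trace = f M := by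
    intro M hM hM0
    have e : (M * Bᵀ).trace = (M * B).trace := by
      rw [← Matrix.trace_transpose (M * B), Matrix.transpose_mul, hM, Matrix.trace_mul_comm]
    rw [hfB, hY, hY0, Matrix.mul_sub]
    simp [Matrix.mul_add, Matrix.trace_sub, Matrix.trace_add, hM0, e]
    ring
  have hYz : Y = 0 := by
    apply h
    · simp [hY, hY0, add_comm]
    · rw [hY, Matrix.trace_sub, Matrix.trace_smul _ (1 : Matrix n n ℝ), Matrix.trace_one,
        smul_eq_mul]
      field_simp
      simp
    · intro X hX hXL
      rw [hYt X hX (L.log_trace X hX hXL)]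
      have : X ∈ L.nor := fun W hW => L.ad_lie X hX hXL W hW
      exact hle this
  apply hf
  rw [← hYt Z hZ hZ0, hYz]; simp

end alg

section mini
variable {n : Type*} [Fintype n] [DecidableEq n] [Nonempty n]

lemma MGrp.exists_log (L : MGrp n) (l : Matrix n n ℝ) (hl : l ∈ L.carrier) :
    ∃ (U : Matrix n n ℝ) (x : n → ℝ), U * Uᵀ = 1 ∧ Uᵀ * U = 1 ∧
      lᵀ * l = U * diagonal (fun i => Real.exp (x i)) * Uᵀ := by
  obtain ⟨U, y, h1, h2, h3⟩ := aux_spec (lᵀ * l) (by simp)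
  have hdet : ∏ i, y i = 1 := by
    rw [← aux_det U y h1, ← h3, Matrix.det_mul, Matrix.det_transpose, L.det_one l hl]; simp
  have hy : ∀ i, 0 ≤ y i := by
    intro i
    have e : diagonal y = (l * U)ᵀ * (l * U) := by
      calc diagonal y = (Uᵀ * U) * diagonal y * (Uᵀ * U) := by rw [h2]; simp
        _ = Uᵀ * (U * diagonal y * Uᵀ) * U := by simp only [Matrix.mul_assoc]
        _ = _ := by rw [← h3, Matrix.transpose_mul]; simp only [Matrix.mul_assoc]
    have e2 : y i = ((l * U)ᵀ * (l * U)) i i := by rw [← e]; simp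
    rw [e2, Matrix.mul_apply]
    exact Finset.sum_nonneg fun j _ => by
      rw [Matrix.transpose_apply]; exact mul_self_nonneg _
  have hy' : ∀ i, 0 < y i := by
    intro i
    refine lt_of_le_of_ne (hy i) fun h => ?_
    rw [Finset.prod_eq_zero (Finset.mem_univ i) h.symm] at hdet
    exact zero_ne_one hdet
  refine ⟨U, fun i => Real.log (y i), h1, h2, ?_⟩
  simp only [Real.exp_log (hy' _)]
  exact h3

lemma MGrp.minimal (L : MGrp n) (S : Matrix n n ℝ) (hS : Sᵀ = S) (hp : L.Perp (S * S))
    (l : Matrix n n ℝ) (hl : l ∈ L.carrier) :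
    (S * S).trace ≤ ((l * S * lᵀ) * (l * S * lᵀ)).trace := by
  obtain ⟨U, x, h1, h2, h3⟩ := L.exists_log l hl
  set W := Uᵀ * S * U with hW
  have hWt : Wᵀ = W := by
    rw [hW]; simp [hS, Matrix.mul_assoc]
  have hX := hp (U * diagonal x * Uᵀ) (by simp [Matrix.mul_assoc]) (by
    rw [aux_exp _ _ h1, ← h3]; exact L.mul_mem _ (L.tr_mem _ hl) _ hl)
  have hSW : S = U * W * Uᵀ := by
    calc S = (U * Uᵀ) * S * (U * Uᵀ) := by rw [h1]; simp
      _ = _ := by rw [hW]; simp only [Matrix.mul_assoc]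
  have hc : ∀ M N : Matrix n n ℝ, (U * M * Uᵀ) * (U * N * Uᵀ) = U * (M * N) * Uᵀ := by
    intro M N
    calc (U * M * Uᵀ) * (U * N * Uᵀ) = U * M * (Uᵀ * U) * N * Uᵀ := by
          simp only [Matrix.mul_assoc]
      _ = _ := by rw [h2]; simp [Matrix.mul_assoc]
  have t1 : (S * S).trace = ∑ a, ∑ b, W a b * W a b := by
    rw [hSW, hc, aux_tr _ _ h2]
    simp only [Matrix.trace, Matrix.diag_apply, Matrix.mul_apply]
    refine Finset.sum_congr rfl fun a _ => Finset.sum_congr rfl fun b _ => ?_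
    rw [show W b a = Wᵀ a b from rfl, hWt]
  have t2 : ∑ a, ∑ b, x a * (W a b * W a b) = 0 := by
    rw [hSW, hc, hc, aux_tr _ _ h2] at hX
    rw [← hX]
    simp only [Matrix.trace, Matrix.diag_apply, Matrix.diagonal_mul]
    simp only [Matrix.mul_apply, Finset.mul_sum]
    refine Finset.sum_congr rfl fun a _ => Finset.sum_congr rfl fun b _ => ?_
    rw [show W b a = Wᵀ a b from rfl, hWt]
  have t2' : ∑ a, ∑ b, x b * (W a b * W a b) = 0 := by
    rw [← t2, Finset.sum_comm]
    refine Finset.sum_congr rfl fun a _ => Finset.sum_congr rfl fun b _ => ?_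
    rw [show W b a = Wᵀ a b from rfl, hWt]
  have t3 : ((l * S * lᵀ) * (l * S * lᵀ)).trace
      = ∑ a, ∑ b, Real.exp (x a + x b) * (W a b * W a b) := by
    have : ((l * S * lᵀ) * (l * S * lᵀ)).trace = ((lᵀ * l) * S * ((lᵀ * l) * S)).trace := by
      rw [show (l * S * lᵀ) * (l * S * lᵀ) = l * (S * lᵀ * l * S * lᵀ) by
        simp only [Matrix.mul_assoc], Matrix.trace_mul_comm]
      rw [show S * lᵀ * l * S * lᵀ * l = S * (lᵀ * l * S * (lᵀ * l)) by
        simp only [Matrix.mul_assoc], Matrix.trace_mul_comm]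
      simp only [Matrix.mul_assoc]
    rw [this, h3, hSW, hc, hc, aux_tr _ _ h2]
    simp only [Matrix.trace, Matrix.diag_apply]
    refine Finset.sum_congr rfl fun a _ => ?_
    rw [Matrix.mul_apply]
    refine Finset.sum_congr rfl fun b _ => ?_
    rw [Matrix.diagonal_mul, Matrix.diagonal_mul, show W b a = Wᵀ a b from rfl, hWt, Real.exp_add]
    ring
  rw [t3, t1]
  calc ∑ a, ∑ b, W a b * W a b
      = ∑ a, ∑ b, W a b * W a b + ∑ a, ∑ b, x a * (W a b * W a b)
        + ∑ a, ∑ b, x b * (W a b * W a b) := by rw [t2, t2']; simp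
    _ = ∑ a, ∑ b, (x a + x b + 1) * (W a b * W a b) := by
        rw [← Finset.sum_add_distrib, ← Finset.sum_add_distrib]
        refine Finset.sum_congr rfl fun a _ => ?_
        rw [← Finset.sum_add_distrib, ← Finset.sum_add_distrib]
        refine Finset.sum_congr rfl fun b _ => ?_
        ring
    _ ≤ _ := by
        refine Finset.sum_le_sum fun a _ => Finset.sum_le_sum fun b _ => ?_
        exact mul_le_mul_of_nonneg_right (Real.add_one_le_exp _) (mul_self_nonneg _)

lemma MGrp.perp_zero (L : MGrp n) (hodd : Odd (Fintype.card n)) (ε : n → ℝ)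
    (hε : ∀ i, ε i * ε i = 1) (R : ℝ)
    (hR : ∀ g : Matrix n n ℝ, g.det = 1 → ∃ l ∈ L.carrier,
      ((l * (g * diagonal ε * gᵀ) * lᵀ) * (l * (g * diagonal ε * gᵀ) * lᵀ)).trace ≤ R)
    (Y : Matrix n n ℝ) (hY : Yᵀ = Y) (hY0 : Y.trace = 0) (hp : L.Perp Y) : Y = 0 := by
  obtain ⟨U, y, h1, h2, h3, hdU⟩ : ∃ (U : Matrix n n ℝ) (x : n → ℝ),
      U * Uᵀ = 1 ∧ Uᵀ * U = 1 ∧ Y = U * diagonal x * Uᵀ ∧ U.det = 1 := by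
    obtain ⟨U, y, h1, h2, h3⟩ := aux_spec Y hY
    have hd : U.det * U.det = 1 := by
      have := congrArg Matrix.det h1
      rwa [Matrix.det_mul, Matrix.det_transpose, Matrix.det_one] at this
    rcases mul_self_eq_one_iff.1 hd with h | h
    · exact ⟨U, y, h1, h2, h3, h⟩
    · refine ⟨-U, y, by simpa using h1, by simpa using h2, by simpa using h3, ?_⟩
      rw [Matrix.det_neg, h, hodd.neg_one_pow]; norm_num
  by_contra hne
  have hsum : ∑ i, y i = 0 := by
    rw [h3, aux_tr _ _ h2, Matrix.trace_diagonal] at hY0; exact hY0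
  obtain ⟨i0, hi0⟩ := Finite.exists_min y
  have hneg : y i0 < 0 := by
    by_contra hcon
    push Not at hcon
    have hz : ∀ i, y i = 0 := by
      intro i
      exact (Finset.sum_eq_zero_iff_of_nonneg (fun i _ => hcon.trans (hi0 i))).1 hsum i
        (Finset.mem_univ i)
    apply hne
    rw [h3, show y = 0 from funext hz]; simp
  set m := - y i0 with hm
  have hmpos : 0 < m := by linarith
  set N := Fintype.card n with hN
  have hNpos : (0:ℝ) < N := by exact_mod_cast Fintype.card_pos
  have main : ∀ s : ℝ, 0 < s → s < 1 / m → (N:ℝ) ^ N ≤ R ^ N * ∏ i, (1 + s * y i) := by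
    intro s hs0 hs
    have hsm : s * m < 1 := by rwa [lt_div_iff₀ hmpos] at hs
    have hq : ∀ i, 0 < 1 + s * y i := by
      intro i
      have : s * y i0 ≤ s * y i := mul_le_mul_of_nonneg_left (hi0 i) hs0.le
      have e : s * y i0 = - (s * m) := by rw [hm]; ring
      linarith
    set μ := (∑ i, Real.log (1 + s * y i)) / N with hμ
    set d : n → ℝ := fun i => Real.exp ((Real.log (1 + s * y i) - μ) / 4) with hd
    have hd4 : ∀ i, d i * d i * (d i * d i) = Real.exp (-μ) * (1 + s * y i) := by
      intro i
      rw [hd]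
      simp only
      rw [← Real.exp_add, ← Real.exp_add, ← Real.exp_log (hq i), ← Real.exp_add,
        Real.exp_log (hq i)]
      congr 1; ring
    have hprod : ∏ i, d i = 1 := by
      rw [hd, ← Real.exp_sum, Real.exp_eq_one_iff, ← Finset.sum_div, Finset.sum_sub_distrib,
        Finset.sum_const, Finset.card_univ, ← hN, nsmul_eq_mul, hμ]
      field_simp
      simp
    obtain ⟨l, hl, hle⟩ := hR (U * diagonal d) (by
      rw [Matrix.det_mul, hdU, Matrix.det_diagonal, hprod, one_mul])
    set S := U * diagonal d * diagonal ε * (U * diagonal d)ᵀ with hSd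
    have hS' : S = U * diagonal (fun i => d i * ε i * d i) * Uᵀ := by
      rw [hSd, Matrix.transpose_mul, Matrix.diagonal_transpose, Matrix.mul_assoc U,
        Matrix.diagonal_mul_diagonal, ← Matrix.mul_assoc, Matrix.mul_assoc U,
        Matrix.diagonal_mul_diagonal]
    have hSt : Sᵀ = S := by rw [hS']; simp [Matrix.mul_assoc]
    have hSS : S * S = Real.exp (-μ) • (1 + s • Y) := by
      have e1 : S * S = U * (diagonal (fun i => d i * ε i * d i) *
          diagonal (fun i => d i * ε i * d i)) * Uᵀ := by
        rw [hS']
        calc _ = U * diagonal (fun i => d i * ε i * d i) * (Uᵀ * U) *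
                diagonal (fun i => d i * ε i * d i) * Uᵀ := by simp only [Matrix.mul_assoc]
          _ = _ := by rw [h2]; simp [Matrix.mul_assoc]
      have e2 : diagonal (fun i => d i * ε i * d i) * diagonal (fun i => d i * ε i * d i)
          = Real.exp (-μ) • (1 + s • diagonal y) := by
        rw [Matrix.diagonal_mul_diagonal]
        ext i j
        by_cases hij : i = j
        · subst hij
          simp
          have := hd4 i
          linear_combination this + d i * d i * (d i * d i) * hε i
        · simp [hij]
      rw [e1, e2, h3]
      simp [Matrix.mul_add, Matrix.add_mul, h1]
    have hSp : L.Perp (S * S) := by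
      intro X hX hXL
      rw [hSS]
      simp [Matrix.mul_add, hp X hX hXL, L.log_trace X hX hXL]
    have hmin := (L.minimal S hSt hSp l hl).trans hle
    have htr : (S * S).trace = Real.exp (-μ) * N := by
      rw [hSS]; simp [hY0, hN]
    rw [htr, Real.exp_neg] at hmin
    have hNR : (N:ℝ) ≤ R * Real.exp μ := by
      have := Real.exp_pos μ
      rw [inv_mul_le_iff₀ this] at hmin
      linarith
    calc (N:ℝ) ^ N ≤ (R * Real.exp μ) ^ N := pow_le_pow_left₀ hNpos.le hNR N
      _ = R ^ N * ∏ i, (1 + s * y i) := by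
        rw [mul_pow, ← Real.exp_nat_mul, hμ, mul_div_cancel₀ _ hNpos.ne', Real.exp_sum]
        simp only [Real.exp_log (hq _)]
  have hlim : Tendsto (fun s : ℝ => R ^ N * ∏ i, (1 + s * y i)) (𝓝[<] (1/m))
      (𝓝 (R ^ N * ∏ i, (1 + (1/m) * y i))) := by
    have : Continuous (fun s : ℝ => R ^ N * ∏ i, (1 + s * y i)) := by fun_prop
    exact (this.tendsto _).mono_left nhdsWithin_le_nhds
  have hev : ∀ᶠ s in 𝓝[<] (1/m), (N:ℝ) ^ N ≤ R ^ N * ∏ i, (1 + s * y i) := by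
    have : Set.Ioo 0 (1/m) ∈ 𝓝[<] (1/m) := Ioo_mem_nhdsLT (by positivity)
    filter_upwards [this] with s hs
    exact main s hs.1 hs.2
  have hfin := ge_of_tendsto hlim hev
  have hz : ∏ i, (1 + (1/m) * y i) = 0 := by
    apply Finset.prod_eq_zero (Finset.mem_univ i0)
    rw [show y i0 = -m by rw [hm]; ring]
    field_simp
    ring
  rw [hz, mul_zero] at hfin
  have : (0:ℝ) < (N:ℝ) ^ N := by positivity
  linarith

lemma aux_exp_finite (L : MGrp n) (hfin : L.carrier.Finite) (X : Matrix n n ℝ) (hX : Xᵀ = X)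
    (hL : NormedSpace.exp X ∈ L.carrier) : X = 0 := by
  obtain ⟨U, x, h1, h2, rfl⟩ := aux_spec X hX
  have hinf : ¬ Function.Injective (fun j : ℕ => (⟨NormedSpace.exp (U * diagonal x * Uᵀ) ^ j,
      L.pow_mem _ hL j⟩ : L.carrier)) := by
    intro h
    haveI := hfin.to_subtype
    exact not_injective_infinite_finite _ h
  simp only [Function.Injective, Subtype.mk.injEq, not_forall] at hinf
  obtain ⟨i, j, hij, hne⟩ := hinf
  rw [← Matrix.exp_nsmul, ← Matrix.exp_nsmul, ← Nat.cast_smul_eq_nsmul ℝ,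
    ← Nat.cast_smul_eq_nsmul ℝ, aux_exp_smul _ _ h1, aux_exp_smul _ _ h1] at hij
  have hd : ∀ f : n → ℝ, Uᵀ * (U * diagonal f * Uᵀ) * U = diagonal f := by
    intro f
    calc _ = (Uᵀ * U) * diagonal f * (Uᵀ * U) := by simp only [Matrix.mul_assoc]
      _ = _ := by rw [h2]; simp
  have h4 := congrArg (fun M => Uᵀ * M * U) hij
  simp only [hd] at h4
  have h5 := Matrix.diagonal_injective h4
  have hx : x = 0 := by
    ext a
    have h6 := congrFun h5 a
    simp only [Real.exp_eq_exp] at h6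
    have h7 : ((i:ℝ) - j) * x a = 0 := by linarith
    rcases mul_eq_zero.1 h7 with h | h
    · exact absurd (by exact_mod_cast sub_eq_zero.1 h) hne
    · exact h
  rw [hx]; simp

end mini

lemma aux_ring {R : Type*} [Ring R] [Algebra ℝ R] (a b p q J : R) (t c : ℝ)
    (htc : t * (1 - 2 * c) = 2)
    (haa : a * a = 0) (hab : a * b = p) (hba : b * a = q) (hbb : b * b = 0)
    (hap : a * p = 0) (haq : a * q = a) (hpa : p * a = a) (hqa : q * a = 0)
    (hpb : p * b = 0) (hbp : b * p = b) (hbq : b * q = 0) (hqb : q * b = b)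
    (hJa : J * a = a) (haJ : a * J = -a) (hJb : J * b = -b) (hbJ : b * J = b)
    (hJp : J * p = p) (hpJ : p * J = p) (hJq : J * q = -q) (hqJ : q * J = -q)
    (hpp : p * p = p) (hpq : p * q = 0) (hqp : q * p = 0) (hqq : q * q = q) :
    (1 + t • a) * ((1 + c • b) * (1 + (-1:ℝ) • a)) * J *
      ((1 + (-1:ℝ) • b) * (1 + c • a) * (1 + t • b))
    = ((1 + (-c) • b) * (1 + (1:ℝ) • a)) * J * ((1 + (1:ℝ) • b) * (1 + (-c) • a)) := by
  simp only [mul_add, add_mul, mul_one, one_mul, smul_mul_assoc, mul_smul_comm, haa, hab, hba, hbb,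
    hap, haq, hpa, hqa, hpb, hbp, hbq, hqb, hJa, haJ, hJb, hbJ, hJp, hpJ, hJq, hqJ, hpp, hpq, hqp,
    hqq, smul_zero, add_zero, zero_add, neg_mul, mul_neg, smul_neg, zero_mul, mul_zero, smul_add]
  have ht : t ≠ 0 := by rintro rfl; simp at htc
  obtain rfl : c = 1 / 2 - 1 / t := by field_simp; linarith
  match_scalars <;> field_simp <;> ring

lemma aux_mat {n : Type*} [Fintype n] [DecidableEq n] (i j : n) (hij : i ≠ j) (ε : n → ℝ)
    (hi : ε i = 1) (hj : ε j = -1) (t c : ℝ) (htc : t * (1 - 2 * c) = 2) :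
    (transvection i j t * (transvection j i c * transvection i j (-1))) * diagonal ε *
      (transvection i j t * (transvection j i c * transvection i j (-1)))ᵀ
    = (transvection j i (-c) * transvection i j 1) * diagonal ε *
      (transvection j i (-c) * transvection i j 1)ᵀ := by
  have h := aux_ring (Matrix.single i j (1:ℝ)) (Matrix.single j i (1:ℝ)) (Matrix.single i i (1:ℝ))
    (Matrix.single j j (1:ℝ)) (diagonal ε) t c htc
    (by simp [hij.symm]) (by simp) (by simp) (by simp [hij]) (by simp [hij.symm]) (by simp)
    (by simp) (by simp [hij.symm]) (by simp [hij]) (by simp) (by simp [hij]) (by simp)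
    (by ext a b; simp [Matrix.diagonal_mul, Matrix.single_apply]; grind)
    (by ext a b; simp [Matrix.mul_diagonal, Matrix.single_apply]; grind)
    (by ext a b; simp [Matrix.diagonal_mul, Matrix.single_apply]; grind)
    (by ext a b; simp [Matrix.mul_diagonal, Matrix.single_apply]; grind)
    (by ext a b; simp [Matrix.diagonal_mul, Matrix.single_apply]; grind)
    (by ext a b; simp [Matrix.mul_diagonal, Matrix.single_apply]; grind)
    (by ext a b; simp [Matrix.diagonal_mul, Matrix.single_apply]; grind)
    (by ext a b; simp [Matrix.mul_diagonal, Matrix.single_apply]; grind)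
    (by simp) (by simp [hij]) (by simp [hij.symm]) (by simp)
  simp only [Matrix.transvection, Matrix.transpose_mul, Matrix.transpose_add,
    Matrix.transpose_one, Matrix.transpose_single]
  simpa only [Matrix.smul_single, smul_eq_mul, mul_one] using h

lemma aux_H {n : Type*} [Fintype n] [DecidableEq n] (J x y : Matrix n n ℝ) (hJ : J * J = 1)
    (hy : y.det = 1) (h : x * J * xᵀ = y * J * yᵀ) : (y⁻¹ * x)ᵀ * J * (y⁻¹ * x) = J := by
  have hyu : IsUnit y.det := by rw [hy]; exact isUnit_one
  have hyt : IsUnit yᵀ.det := by rw [Matrix.det_transpose]; exact hyu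
  set z := y⁻¹ * x with hz
  have h1 : z * J * zᵀ = J := by
    calc z * J * zᵀ = y⁻¹ * (x * J * xᵀ) * (y⁻¹)ᵀ := by
          rw [hz, Matrix.transpose_mul]; simp only [Matrix.mul_assoc]
      _ = (y⁻¹ * y) * J * (yᵀ * (yᵀ)⁻¹) := by
          rw [h, Matrix.transpose_nonsing_inv]; simp only [Matrix.mul_assoc]
      _ = J := by rw [Matrix.nonsing_inv_mul _ hyu, Matrix.mul_nonsing_inv _ hyt]; simp
  have h2 : z * (J * zᵀ * J) = 1 := by
    calc z * (J * zᵀ * J) = (z * J * zᵀ) * J := by simp only [Matrix.mul_assoc]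
      _ = 1 := by rw [h1, hJ]
  have h3 : (J * zᵀ * J) * z = 1 := mul_eq_one_comm.1 h2
  calc zᵀ * J * z = (J * J) * (zᵀ * J * z) := by rw [hJ, Matrix.one_mul]
    _ = J * ((J * zᵀ * J) * z) := by simp only [Matrix.mul_assoc]
    _ = J := by rw [h3, Matrix.mul_one]

section group
variable {n : Type*} [Fintype n] [DecidableEq n] [Nonempty n]

def mkGrp (L : Subgroup (Matrix.SpecialLinearGroup n ℝ)) (hcl : IsClosed (L : Set (Matrix.SpecialLinearGroup n ℝ)))
    (g : Matrix.SpecialLinearGroup n ℝ)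
    (hg : ∀ A ∈ L, ∃ B ∈ L, (((g * A * g⁻¹ : Matrix.SpecialLinearGroup n ℝ) : Matrix n n ℝ)ᵀ)⁻¹
          = ((g * B * g⁻¹ : Matrix.SpecialLinearGroup n ℝ) : Matrix n n ℝ)) : MGrp n where
  carrier := (fun A : Matrix.SpecialLinearGroup n ℝ => (A : Matrix n n ℝ)) ''
    ((fun A => g⁻¹ * A * g) ⁻¹' (L : Set (Matrix.SpecialLinearGroup n ℝ)))
  one_mem := ⟨1, by simp [L.one_mem], by simp⟩
  mul_mem := by
    rintro _ ⟨A, hA, rfl⟩ _ ⟨B, hB, rfl⟩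
    refine ⟨A * B, ?_, by simp⟩
    have := L.mul_mem hA hB
    simpa [mul_assoc] using this
  inv_mem := by
    rintro _ ⟨A, hA, rfl⟩
    refine ⟨A⁻¹, ?_, ?_⟩
    · have := L.inv_mem hA
      simpa [mul_assoc] using this
    · symm
      apply Matrix.inv_eq_right_inv
      simp only
      rw [← Matrix.SpecialLinearGroup.coe_mul, mul_inv_cancel, Matrix.SpecialLinearGroup.coe_one]
  det_one := by
    rintro _ ⟨A, hA, rfl⟩
    exact A.2
  tr_mem := by
    rintro _ ⟨A, hA, rfl⟩
    have hA' : g⁻¹ * A * g ∈ L := hA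
    obtain ⟨B, hB, h⟩ := hg _ (L.inv_mem hA')
    refine ⟨g * B * g⁻¹, by simpa [mul_assoc] using hB, ?_⟩
    simp only
    rw [← h]
    apply Matrix.inv_eq_right_inv
    rw [← Matrix.transpose_mul, ← Matrix.SpecialLinearGroup.coe_mul]
    simp [mul_assoc]
  closed := by
    apply Matrix.SpecialLinearGroup.isClosedEmbedding_val.isClosedMap
    apply hcl.preimage
    fun_prop

end group

abbrev SLn (k : ℕ) := Matrix.SpecialLinearGroup (Fin (2*k+1)) ℝ

lemma aux_exp_single {n : Type*} [Fintype n] [DecidableEq n] (i j : n) (hij : i ≠ j) (t : ℝ) :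
    NormedSpace.exp (t • Matrix.single i j (1:ℝ)) = Matrix.transvection i j t := by
  have hN : (t • Matrix.single i j (1:ℝ)) ^ 2 = 0 := by
    rw [pow_two, Matrix.smul_mul, Matrix.mul_smul, Matrix.single_mul_single_of_ne]
    · simp
    · exact hij.symm
  rw [NormedSpace.exp_eq_tsum ℝ]
  simp only
  rw [tsum_eq_sum (s := Finset.range 2)]
  · simp [Finset.sum_range_succ, Matrix.transvection]
  · intro m hm
    simp only [Finset.mem_range, not_lt] at hm
    rw [pow_eq_zero_of_le hm hN, smul_zero]

lemma aux_transv_cont {n : Type*} [Fintype n] [DecidableEq n] (i j : n) :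
    Continuous (fun c : ℝ => Matrix.transvection i j c) := by
  have : (fun c : ℝ => Matrix.transvection i j c) = fun c => 1 + c • Matrix.single i j (1:ℝ) := by
    funext c; simp [Matrix.transvection]
  rw [this]
  exact continuous_const.add (continuous_id.smul continuous_const)

/-- For `k ≥ 5`, the homogeneous space `SL(2k+1, ℝ)/SO(k-1, k+2)` admits no
standard compact Clifford–Klein form: there is no closed subgroup `L` of `G = SL(2k+1, ℝ)` with
finitely many connected components, some conjugate of which is invariant under the Cartan
involution `A ↦ (Aᵀ)⁻¹` (i.e. `L` is reductive in `G`), acting properly on `G/H` with compact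
orbit space `L\(G/H)`. -/
theorem no_standard_compact_clifford_klein_form_SO
    (k : ℕ) (hk : 5 ≤ k)
    (J : Matrix (Fin (2*k+1)) (Fin (2*k+1)) ℝ)
    (hJ : J = Matrix.diagonal (fun i : Fin (2*k+1) => if (i : ℕ) < k - 1 then (1 : ℝ) else -1))
    (H : Subgroup (Matrix.SpecialLinearGroup (Fin (2*k+1)) ℝ))
    (hH : ∀ A : Matrix.SpecialLinearGroup (Fin (2*k+1)) ℝ,
      A ∈ H ↔ (A : Matrix (Fin (2*k+1)) (Fin (2*k+1)) ℝ)ᵀ * J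
        * (A : Matrix (Fin (2*k+1)) (Fin (2*k+1)) ℝ) = J) :
    ¬ ∃ L : Subgroup (Matrix.SpecialLinearGroup (Fin (2*k+1)) ℝ),
      -- `L` is a closed subgroup of `G`
      IsClosed (L : Set (Matrix.SpecialLinearGroup (Fin (2*k+1)) ℝ)) ∧
      -- (a) `L` has finitely many connected components
      Finite (ConnectedComponents L) ∧
      -- (b) some conjugate `g L g⁻¹` is invariant under the Cartan involution `A ↦ (Aᵀ)⁻¹`
      (∃ g : Matrix.SpecialLinearGroup (Fin (2*k+1)) ℝ, ∀ A ∈ L, ∃ B ∈ L,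
        (((g * A * g⁻¹ : Matrix.SpecialLinearGroup (Fin (2*k+1)) ℝ) :
            Matrix (Fin (2*k+1)) (Fin (2*k+1)) ℝ)ᵀ)⁻¹
          = ((g * B * g⁻¹ : Matrix.SpecialLinearGroup (Fin (2*k+1)) ℝ) :
            Matrix (Fin (2*k+1)) (Fin (2*k+1)) ℝ)) ∧
      -- (c) the left-translation action of `L` on `G/H` is proper
      (∀ C : Set (Matrix.SpecialLinearGroup (Fin (2*k+1)) ℝ ⧸ H), IsCompact C →
        IsCompact {l : L | ((fun x => l • x) '' C ∩ C).Nonempty}) ∧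
      -- (d) the orbit space `L\(G/H)` is compact
      CompactSpace (Quotient (MulAction.orbitRel L
        (Matrix.SpecialLinearGroup (Fin (2*k+1)) ℝ ⧸ H))) := by
  rintro ⟨L, hcl, hfin, ⟨g, hg⟩, hprop, hcomp⟩
  set ε : Fin (2*k+1) → ℝ := fun i => if (i : ℕ) < k - 1 then (1 : ℝ) else -1 with hε
  have hε1 : ∀ i, ε i * ε i = 1 := by
    intro i; simp only [hε]; split_ifs <;> norm_num
  have hJJ : J * J = 1 := by
    rw [hJ, Matrix.diagonal_mul_diagonal]; simp only [hε1]; simp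
  let Λ : MGrp (Fin (2*k+1)) := mkGrp L hcl g hg
  have hΛ : ∀ A ∈ L, ((g * A * g⁻¹ : (SLn k)) : Matrix (Fin (2*k+1)) (Fin (2*k+1)) ℝ) ∈ Λ.carrier := by
    intro A hA
    exact ⟨g * A * g⁻¹, by simpa [mul_assoc] using hA, rfl⟩
  have hHJ : ∀ h ∈ H, (h : Matrix (Fin (2*k+1)) (Fin (2*k+1)) ℝ) * J *
      (h : Matrix (Fin (2*k+1)) (Fin (2*k+1)) ℝ)ᵀ = J := by
    intro h hh
    have h1 := (hH h⁻¹).1 (H.inv_mem hh)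
    have e : ((h⁻¹ : (SLn k)) : Matrix (Fin (2*k+1)) (Fin (2*k+1)) ℝ) * h = 1 := by
      rw [← Matrix.SpecialLinearGroup.coe_mul, inv_mul_cancel, Matrix.SpecialLinearGroup.coe_one]
    have e1 : (h : Matrix (Fin (2*k+1)) (Fin (2*k+1)) ℝ) * (h⁻¹ : (SLn k)) = 1 := mul_eq_one_comm.1 e
    have e2 := congrArg Matrix.transpose e1
    rw [Matrix.transpose_mul, Matrix.transpose_one] at e2
    -- h⁻ᵀ J h⁻¹ = J
    have h2 : (h : Matrix (Fin (2*k+1)) (Fin (2*k+1)) ℝ)ᵀ * J * h = J := (hH h).1 hh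
    have h3 : (J * (h : Matrix (Fin (2*k+1)) (Fin (2*k+1)) ℝ)ᵀ * J) * h = 1 := by
      rw [Matrix.mul_assoc J, Matrix.mul_assoc J, h2, hJJ]
    have h4 := mul_eq_one_comm.1 h3
    calc _ = (h : Matrix (Fin (2*k+1)) (Fin (2*k+1)) ℝ) * J * (h : Matrix _ _ ℝ)ᵀ * (J * J) := by
          rw [hJJ, Matrix.mul_one]
      _ = ((h : Matrix (Fin (2*k+1)) (Fin (2*k+1)) ℝ) * (J * (h : Matrix _ _ ℝ)ᵀ * J)) * J := by
          simp only [Matrix.mul_assoc]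
      _ = J := by rw [h4, Matrix.one_mul]
  -- the bound from compactness
  obtain ⟨R, hR⟩ : ∃ R : ℝ, ∀ x : Matrix (Fin (2*k+1)) (Fin (2*k+1)) ℝ, x.det = 1 →
      ∃ l ∈ Λ.carrier, ((l * (x * diagonal ε * xᵀ) * lᵀ) *
        (l * (x * diagonal ε * xᵀ) * lᵀ)).trace ≤ R := by
    let F : (SLn k) → ℝ := fun x => ((((g * x : (SLn k)) : Matrix (Fin (2*k+1)) (Fin (2*k+1)) ℝ) * J *
      ((g * x : (SLn k)) : Matrix (Fin (2*k+1)) (Fin (2*k+1)) ℝ)ᵀ) *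
      (((g * x : (SLn k)) : Matrix (Fin (2*k+1)) (Fin (2*k+1)) ℝ) * J *
      ((g * x : (SLn k)) : Matrix (Fin (2*k+1)) (Fin (2*k+1)) ℝ)ᵀ)).trace
    have hval : Continuous (fun x : (SLn k) => ((g * x : (SLn k)) : Matrix (Fin (2*k+1)) (Fin (2*k+1)) ℝ)) :=
      continuous_subtype_val.comp (continuous_const_mul g)
    have hF : Continuous F := by
      have h1 : Continuous (fun x : (SLn k) => ((g * x : (SLn k)) : Matrix (Fin (2*k+1)) (Fin (2*k+1)) ℝ) * J *
        ((g * x : (SLn k)) : Matrix (Fin (2*k+1)) (Fin (2*k+1)) ℝ)ᵀ) :=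
        (hval.matrix_mul continuous_const).matrix_mul hval.matrix_transpose
      exact (h1.matrix_mul h1).matrix_trace
    have : ContinuousConstSMul L ((SLn k) ⧸ H) := ⟨fun l => continuous_const_smul (l : (SLn k))⟩
    let π : (SLn k) → Quotient (MulAction.orbitRel L ((SLn k) ⧸ H)) := fun x => Quotient.mk (MulAction.orbitRel L (SLn k ⧸ H)) (x : (SLn k) ⧸ H)
    have hπ : IsOpenMap π :=
      (isOpenMap_quotient_mk'_mul (Γ := L) (T := (SLn k) ⧸ H)).comp QuotientGroup.isOpenMap_coe
    obtain ⟨N, hN⟩ := isCompact_univ.elim_directed_cover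
      (fun N : ℕ => π '' (F ⁻¹' Set.Iio (N:ℝ)))
      (fun N => hπ _ (isOpen_Iio.preimage hF))
      (by
        intro q _
        obtain ⟨y, rfl⟩ := Quotient.exists_rep q
        obtain ⟨x, rfl⟩ := QuotientGroup.mk_surjective y
        obtain ⟨N, hN⟩ := exists_nat_gt (F x)
        exact Set.mem_iUnion.2 ⟨N, x, hN, rfl⟩)
      (by
        apply directed_of_isDirected_le
        intro a b hab
        apply Set.image_mono
        apply Set.preimage_mono
        apply Set.Iio_subset_Iio
        exact_mod_cast hab)
    refine ⟨N, fun x hx => ?_⟩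
    obtain ⟨x', hx'⟩ : ∃ x' : SLn k, (x' : Matrix (Fin (2*k+1)) (Fin (2*k+1)) ℝ) = x := ⟨⟨x, hx⟩, rfl⟩
    obtain ⟨y, hy, hyx⟩ := hN (Set.mem_univ (π (g⁻¹ * x')))
    have h1 : MulAction.orbitRel L ((SLn k) ⧸ H) (y : (SLn k) ⧸ H) ((g⁻¹ * x' : (SLn k)) : (SLn k) ⧸ H) :=
      Quotient.exact hyx
    rw [MulAction.orbitRel_apply] at h1
    obtain ⟨l, hl⟩ := h1
    have h2 : (((l : (SLn k)) * (g⁻¹ * x') : (SLn k)) : (SLn k) ⧸ H) = (y : (SLn k) ⧸ H) := hl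
    have h3 : ((l : (SLn k)) * (g⁻¹ * x'))⁻¹ * y ∈ H := QuotientGroup.eq.1 h2
    refine ⟨_, hΛ l l.2, ?_⟩
    have h4 := hHJ _ h3
    have e : g * y = (g * l * g⁻¹) * x' * (((l : (SLn k)) * (g⁻¹ * x'))⁻¹ * y) := by group
    set w := ((l : (SLn k)) * (g⁻¹ * x'))⁻¹ * y with hw
    have hFy : F y < N := hy
    simp only [F] at hFy
    rw [e] at hFy
    have e5 : (((g * l * g⁻¹) * x' * w : (SLn k)) : Matrix (Fin (2*k+1)) (Fin (2*k+1)) ℝ) * J *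
        (((g * l * g⁻¹) * x' * w : (SLn k)) : Matrix (Fin (2*k+1)) (Fin (2*k+1)) ℝ)ᵀ
        = ((g * l * g⁻¹ : (SLn k)) : Matrix (Fin (2*k+1)) (Fin (2*k+1)) ℝ) * (x * diagonal ε * xᵀ) *
          ((g * l * g⁻¹ : (SLn k)) : Matrix (Fin (2*k+1)) (Fin (2*k+1)) ℝ)ᵀ := by
      rw [Matrix.SpecialLinearGroup.coe_mul _ w, Matrix.SpecialLinearGroup.coe_mul _ x',
        Matrix.transpose_mul, Matrix.transpose_mul, hx']
      generalize ((g * l * g⁻¹ : (SLn k)) : Matrix (Fin (2*k+1)) (Fin (2*k+1)) ℝ) = P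
      rw [← hJ]
      calc _ = P * x * ((w : Matrix (Fin (2*k+1)) (Fin (2*k+1)) ℝ) * J * (w : Matrix _ _ ℝ)ᵀ)
            * xᵀ * Pᵀ := by simp only [Matrix.mul_assoc]
        _ = _ := by rw [h4]; simp only [Matrix.mul_assoc]
    rw [e5] at hFy
    exact hFy.le
  have hodd : Odd (Fintype.card (Fin (2*k+1))) := by simp
  have hperp := Λ.perp_zero hodd ε hε1 R hR
  let i0 : Fin (2*k+1) := ⟨0, by omega⟩
  let i1 : Fin (2*k+1) := ⟨2*k, by omega⟩
  have hi01 : i0 ≠ i1 := by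
    intro h
    have := congrArg Fin.val h
    simp only [i0, i1] at this
    omega
  have hεi0 : ε i0 = 1 := by simp only [hε, i0]; rw [if_pos (by omega)]
  have hεi1 : ε i1 = -1 := by simp only [hε, i1]; rw [if_neg (by omega)]
  -- the Lie algebra is nonzero
  have hlie : ∃ X ∈ Λ.lie, X ≠ 0 := by
    by_cases hd : DiscreteTopology L
    · exfalso
      have hLfin : Finite L := by
        refine Finite.of_injective (fun x : L => (ConnectedComponents.mk x)) ?_
        intro x y hxy
        have := ConnectedComponents.coe_eq_coe.1 hxy
        rw [connectedComponent_eq_singleton, connectedComponent_eq_singleton] at this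
        exact Set.singleton_injective this
      have hcf : Λ.carrier.Finite := by
        have h1 : (L : Set (SLn k)).Finite := Set.toFinite _
        refine Set.Finite.image _ (h1.preimage ?_)
        intro a _ b _ hab
        simpa using hab
      have h0 := hperp (Matrix.single i0 i0 1 - Matrix.single i1 i1 1) (by simp) (by simp) (by
        intro X hX hXL
        rw [aux_exp_finite Λ hcf X hX hXL]; simp)
      have := congrFun (congrFun h0 i0) i0
      simp [Matrix.single_apply, hi01.symm] at this
    · rw [discreteTopology_iff_isOpen_singleton_one] at hd
      have h1 : (1 : L) ∈ closure ({1}ᶜ : Set L) := by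
        rw [closure_compl]
        intro hmem
        apply hd
        have : interior ({1} : Set L) = {1} :=
          Set.Subset.antisymm interior_subset (by simpa using hmem)
        rw [← this]; exact isOpen_interior
      have : FirstCountableTopology (Matrix (Fin (2*k+1)) (Fin (2*k+1)) ℝ) :=
        inferInstanceAs (FirstCountableTopology (Fin (2*k+1) → Fin (2*k+1) → ℝ))
      have : FirstCountableTopology (SLn k) :=
        Matrix.SpecialLinearGroup.isClosedEmbedding_val.isEmbedding.isInducing.firstCountableTopology
      obtain ⟨u, hu, hlim⟩ := mem_closure_iff_seq_limit.1 h1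
      have hlim' : Tendsto (fun j => ((g * (u j : (SLn k)) * g⁻¹ : (SLn k)) :
          Matrix (Fin (2*k+1)) (Fin (2*k+1)) ℝ)) atTop (𝓝 1) := by
        have hc : Continuous (fun a : L => ((g * (a : (SLn k)) * g⁻¹ : (SLn k)) :
            Matrix (Fin (2*k+1)) (Fin (2*k+1)) ℝ)) :=
          continuous_subtype_val.comp (by fun_prop)
        have := (hc.tendsto 1).comp hlim
        simpa [Function.comp_def] using this
      refine Λ.exists_lie _ (fun j => hΛ _ (u j).2) ?_ hlim'
      intro j hj
      apply hu j
      have h2 : g * (u j : (SLn k)) * g⁻¹ = 1 := Subtype.ext hj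
      have h3 : (u j : (SLn k)) = 1 := by
        have := congrArg (fun a => g⁻¹ * a * g) h2
        simpa [mul_assoc] using this
      exact Subtype.ext h3
  have hsing := Λ.lie_single (Λ.sym_nor hperp) hlie (by
    intro a b
    have h3 : ({a, b} : Finset (Fin (2*k+1))).card < (Finset.univ : Finset (Fin (2*k+1))).card := by
      refine lt_of_le_of_lt Finset.card_le_two ?_
      simp; omega
    obtain ⟨c, _, hc⟩ := Finset.exists_mem_notMem_of_card_lt_card h3
    simp at hc
    exact ⟨c, hc.1, hc.2⟩) i0 i1 hi01
  have htrans : ∀ t : ℝ, transvection i0 i1 t ∈ Λ.carrier := by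
    intro t
    have h1 := hsing t
    have h2 : NormedSpace.exp (t • Matrix.single i0 i1 (1:ℝ)) = transvection i0 i1 t := aux_exp_single i0 i1 hi01 t
    rwa [h2] at h1
  -- non-properness
  let T : ∀ {i j : Fin (2*k+1)}, i ≠ j → ℝ → (SLn k) := fun h c => Matrix.SpecialLinearGroup.transvection h c
  let a : ℝ → (SLn k) := fun c => g⁻¹ * (T hi01.symm c * T hi01 (-1))
  let b : ℝ → (SLn k) := fun c => g⁻¹ * (T hi01.symm (-c) * T hi01 1)
  have hTc : ∀ {i j : Fin (2*k+1)} (h : i ≠ j), Continuous (T h) := by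
    intro i j h
    exact Continuous.subtype_mk (aux_transv_cont i j) _
  have ha : Continuous a := continuous_const.mul ((hTc hi01.symm).mul continuous_const)
  have hb : Continuous b := continuous_const.mul (((hTc hi01.symm).comp continuous_neg).mul continuous_const)
  let C : Set ((SLn k) ⧸ H) := (fun c => (a c : (SLn k) ⧸ H)) '' Set.Icc 0 (1/2) ∪
    (fun c => (b c : (SLn k) ⧸ H)) '' Set.Icc 0 (1/2)
  have hC : IsCompact C :=
    (isCompact_Icc.image (QuotientGroup.continuous_mk.comp ha)).union
      (isCompact_Icc.image (QuotientGroup.continuous_mk.comp hb))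
  have hK := hprop C hC
  let f : L → ℝ := fun l => ((g * (l : (SLn k)) * g⁻¹ : (SLn k)) : Matrix (Fin (2*k+1)) (Fin (2*k+1)) ℝ) i0 i1
  have hf : Continuous f := by
    have hc : Continuous (fun a : L => ((g * (a : (SLn k)) * g⁻¹ : (SLn k)) :
        Matrix (Fin (2*k+1)) (Fin (2*k+1)) ℝ)) :=
      continuous_subtype_val.comp (by fun_prop)
    exact hc.matrix_elem i0 i1
  obtain ⟨B, hB⟩ := (hK.image hf).bddAbove
  set t := max B 2 + 1 with ht
  have htB : B < t := by rw [ht]; linarith [le_max_left B 2]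
  have ht2 : 2 < t := by rw [ht]; linarith [le_max_right B 2]
  obtain ⟨A, hA, hAt⟩ := htrans t
  have hA' : A = T hi01 t := Subtype.ext hAt
  let l : L := ⟨g⁻¹ * A * g, hA⟩
  have hlK : l ∈ {l : L | ((fun x => l • x) '' C ∩ C).Nonempty} := by
    set c : ℝ := 1/2 - 1/t with hc
    have hcI : c ∈ Set.Icc (0:ℝ) (1/2) := by
      have h1 : 1 / t ≤ 1 / 2 := one_div_le_one_div_of_le (by norm_num) ht2.le
      have h2 : 0 < 1 / t := by positivity
      constructor <;> rw [hc] <;> linarith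
    refine ⟨(b c : (SLn k) ⧸ H), ⟨(a c : (SLn k) ⧸ H), Or.inl ⟨c, hcI, rfl⟩, ?_⟩, Or.inr ⟨c, hcI, rfl⟩⟩
    change (((g⁻¹ * A * g) * a c : (SLn k)) : (SLn k) ⧸ H) = (b c : (SLn k) ⧸ H)
    symm
    rw [QuotientGroup.eq, hH]
    have e : (b c)⁻¹ * ((g⁻¹ * A * g) * a c) = (T hi01.symm (-c) * T hi01 1)⁻¹ *
        (T hi01 t * (T hi01.symm c * T hi01 (-1))) := by
      simp only [a, b, hA']; group
    rw [e]
    set y : (SLn k) := T hi01.symm (-c) * T hi01 1 with hy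
    have hyi : ((y⁻¹ : (SLn k)) : Matrix (Fin (2*k+1)) (Fin (2*k+1)) ℝ) =
        (y : Matrix (Fin (2*k+1)) (Fin (2*k+1)) ℝ)⁻¹ := by
      symm
      apply Matrix.inv_eq_right_inv
      rw [← Matrix.SpecialLinearGroup.coe_mul, mul_inv_cancel, Matrix.SpecialLinearGroup.coe_one]
    rw [Matrix.SpecialLinearGroup.coe_mul, hyi]
    apply aux_H J _ _ hJJ y.2
    rw [hJ]
    refine aux_mat i0 i1 hi01 ε hεi0 hεi1 t c ?_
    rw [hc]; field_simp; ring
  have hfl : f l ≤ B := hB ⟨l, hlK, rfl⟩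
  have : f l = t := by
    have e : g * (l : (SLn k)) * g⁻¹ = A := by simp only [l]; group
    simp only [f]
    rw [e]
    change (fun A : (SLn k) => (A : Matrix (Fin (2*k+1)) (Fin (2*k+1)) ℝ)) A i0 i1 = t
    rw [hAt]
    simp [transvection, hi01]
  linarith
end

section
/- Let k ≥ 5 and let G = SL(2k+1, ℝ) with its standard topology. Let Ω be the standard symplectic (2k−2)×(2k−2) matrix (Ω = [[0, I_{k−1}], [−I_{k−1}, 0]] in block form), let Sp(k−1, ℝ) = {B ∈ GL(2k−2, ℝ) : Bᵀ Ω B = Ω}, and let H be the closed subgroup of G consisting of all block-diagonal matrices diag(B, I₃) with B ∈ Sp(k−1, ℝ). Then there is no closed subgroup L of G satisfying all of the following: (a) L has finitely many connected components; (b) there exists g ∈ G such that g L g⁻¹ is invariant under the map A ↦ (Aᵀ)⁻¹; (c) the action of L on the quotient space G/H by left translations is proper; and (d) the orbit space L\(G/H) of this action is compact. In other words, SL(2k+1, ℝ)/Sp(k−1, ℝ) admits no standard compact Clifford–Klein form. -/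
open scoped Matrix

/-- `SL(n, ℝ)` with its standard topology (as a subspace of the space of matrices,
which carries the product topology). -/
instance specialLinearGroup.topologicalSpace' (n : Type*) [DecidableEq n] [Fintype n] :
    TopologicalSpace (Matrix.SpecialLinearGroup n ℝ) :=
  instTopologicalSpaceSubtype

open scoped Matrix

namespace CK
open NormedSpace

section Spec
variable {n : Type*} [Fintype n] [DecidableEq n]

lemma spectral (X : Matrix n n ℝ) (hX : Xᵀ = X) :
    ∃ (U : Matrix n n ℝ) (x : n → ℝ), Uᵀ * U = 1 ∧ U * Uᵀ = 1 ∧ X = U * Matrix.diagonal x * Uᵀ := by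
  have hH : X.IsHermitian := by
    rw [Matrix.IsHermitian, Matrix.conjTranspose_eq_transpose_of_trivial, hX]
  have h1 : (hH.eigenvectorUnitary : Matrix n n ℝ)ᵀ * hH.eigenvectorUnitary = 1 := by
    have := Unitary.coe_star_mul_self hH.eigenvectorUnitary
    rwa [Matrix.star_eq_conjTranspose, Matrix.conjTranspose_eq_transpose_of_trivial] at this
  refine ⟨hH.eigenvectorUnitary, hH.eigenvalues, h1, mul_eq_one_comm.mp h1, ?_⟩
  have := hH.spectral_theorem
  rw [Unitary.conjStarAlgAut_apply, Matrix.star_eq_conjTranspose,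
    Matrix.conjTranspose_eq_transpose_of_trivial] at this
  simpa [Function.comp_def] using this

lemma exp_diag (x : n → ℝ) :
    exp (Matrix.diagonal x) = Matrix.diagonal (fun i => Real.exp (x i)) := by
  rw [Matrix.exp_diagonal]
  congr 1
  ext i
  rw [Pi.coe_exp, Real.exp_eq_exp_ℝ]

lemma exp_spec (U : Matrix n n ℝ) (x : n → ℝ) (h : U * Uᵀ = 1) :
    exp (U * Matrix.diagonal x * Uᵀ) = U * Matrix.diagonal (fun i => Real.exp (x i)) * Uᵀ := by
  have hi : U⁻¹ = Uᵀ := Matrix.inv_eq_right_inv h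
  have hu : IsUnit U := ⟨⟨U, Uᵀ, h, mul_eq_one_comm.mp h⟩, rfl⟩
  rw [← hi, Matrix.exp_conj _ _ hu, exp_diag]

/-- functional-calculus injectivity -/
lemma exp_intertwine (X Y M : Matrix n n ℝ) (hX : Xᵀ = X) (hY : Yᵀ = Y)
    (h : exp X * M = M * exp Y) : X * M = M * Y := by
  obtain ⟨U, x, hU, hU', rfl⟩ := spectral X hX
  obtain ⟨V, y, hV, hV', rfl⟩ := spectral Y hY
  rw [exp_spec _ _ hU', exp_spec _ _ hV'] at h
  have h2 : Matrix.diagonal (fun i => Real.exp (x i)) * (Uᵀ * M * V) =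
      (Uᵀ * M * V) * Matrix.diagonal (fun i => Real.exp (y i)) := by
    calc _ = Uᵀ * U * Matrix.diagonal (fun i => Real.exp (x i)) * (Uᵀ * M * V) := by rw [hU, one_mul]
      _ = Uᵀ * (U * Matrix.diagonal (fun i => Real.exp (x i)) * Uᵀ * M) * V := by
        simp only [Matrix.mul_assoc]
      _ = (Uᵀ * M * V) * Matrix.diagonal (fun i => Real.exp (y i)) * (Vᵀ * V) := by
        rw [h]; simp only [Matrix.mul_assoc]
      _ = _ := by rw [hV, mul_one]
  have h3 : Matrix.diagonal x * (Uᵀ * M * V) = (Uᵀ * M * V) * Matrix.diagonal y := by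
    ext i j
    have := congrFun (congrFun h2 i) j
    rw [Matrix.diagonal_mul, Matrix.mul_diagonal] at this ⊢
    by_cases h0 : (Uᵀ * M * V) i j = 0
    · simp [h0]
    · rw [mul_comm] at this
      have := Real.exp_injective (mul_left_cancel₀ h0 this)
      rw [this, mul_comm]
  calc _ = U * Matrix.diagonal x * Uᵀ * M * (V * Vᵀ) := by rw [hV', mul_one]
    _ = U * (Matrix.diagonal x * (Uᵀ * M * V)) * Vᵀ := by simp only [Matrix.mul_assoc]
    _ = (U * Uᵀ) * M * (V * Matrix.diagonal y * Vᵀ) := by rw [h3]; simp only [Matrix.mul_assoc]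
    _ = _ := by rw [hU', one_mul]

lemma exp_inj (X Y : Matrix n n ℝ) (hX : Xᵀ = X) (hY : Yᵀ = Y)
    (h : exp X = exp Y) : X = Y := by
  simpa using exp_intertwine X Y 1 hX hY (by simpa using h)

lemma exists_log (B : Matrix n n ℝ) (hB : IsUnit B.det) :
    ∃ X : Matrix n n ℝ, Xᵀ = X ∧ exp X = Bᵀ * B := by
  obtain ⟨U, x, hU, hU', h⟩ := spectral (Bᵀ * B) (by simp)
  have hd : Matrix.diagonal x = (B * U)ᵀ * (B * U) := by
    calc _ = (Uᵀ * U) * Matrix.diagonal x * (Uᵀ * U) := by rw [hU]; simp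
      _ = Uᵀ * (U * Matrix.diagonal x * Uᵀ) * U := by simp only [Matrix.mul_assoc]
      _ = _ := by rw [← h, Matrix.transpose_mul]; simp only [Matrix.mul_assoc]
  have hdet : IsUnit (B * U).det := by
    rw [Matrix.det_mul]
    refine hB.mul ?_
    rw [← Matrix.isUnit_iff_isUnit_det]
    exact ⟨⟨U, Uᵀ, hU', hU⟩, rfl⟩
  have hpos : ∀ i, 0 < x i := by
    intro i
    have h1 : x i = ∑ j, (B * U) j i ^ 2 := by
      have := congrFun (congrFun hd i) i
      rw [Matrix.diagonal_apply_eq, Matrix.mul_apply] at this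
      rw [this]; simp [pow_two]
    have h2 : 0 ≤ x i := by rw [h1]; positivity
    refine lt_of_le_of_ne h2 fun h0 => ?_
    have : ∏ i, x i ≠ 0 := by
      rw [← Matrix.det_diagonal, hd, Matrix.det_mul, Matrix.det_transpose]
      exact mul_ne_zero hdet.ne_zero hdet.ne_zero
    exact Finset.prod_ne_zero_iff.mp this i (Finset.mem_univ _) h0.symm
  refine ⟨U * Matrix.diagonal (fun i => Real.log (x i)) * Uᵀ, ?_, ?_⟩
  · simp [Matrix.transpose_mul, Matrix.mul_assoc]
  · rw [exp_spec _ _ hU', h]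
    congr 3
    ext i
    exact Real.exp_log (hpos i)

lemma trace_zero_of_det (X : Matrix n n ℝ) (hX : Xᵀ = X) (h : (exp X).det = 1) : X.trace = 0 := by
  obtain ⟨U, x, hU, hU', rfl⟩ := spectral X hX
  rw [exp_spec _ _ hU', Matrix.det_mul_comm, ← Matrix.mul_assoc, hU, one_mul, Matrix.det_diagonal,
    ← Real.exp_sum, Real.exp_eq_one_iff] at h
  rw [Matrix.trace_mul_comm, ← Matrix.mul_assoc, hU, one_mul, Matrix.trace_diagonal, h]

/-- the key trace inequality -/
lemma trace_ineq (Z X a : Matrix n n ℝ) (hZ : Zᵀ = Z) (hX : Xᵀ = X) (ha : aᵀ = a) :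
    (a * a).trace + (Z * (a * a)).trace + (X * (a * a)).trace ≤
      (exp Z * a * exp X * a).trace := by
  obtain ⟨U, x, hU, hU', rfl⟩ := spectral X hX
  obtain ⟨V, z, hV, hV', rfl⟩ := spectral Z hZ
  rw [exp_spec _ _ hU', exp_spec _ _ hV']
  set m := Vᵀ * a * U with hm
  have hmT : mᵀ = Uᵀ * a * V := by simp [hm, ha, Matrix.mul_assoc]
  have gen : ∀ f g : n → ℝ, (V * Matrix.diagonal f * Vᵀ * a * (U * Matrix.diagonal g * Uᵀ) * a).trace
      = ∑ i, ∑ j, f i * g j * (m i j) ^ 2 := by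
    intro f g
    calc _ = (V * (Matrix.diagonal f * Vᵀ * a * (U * Matrix.diagonal g * Uᵀ) * a)).trace := by
            simp only [Matrix.mul_assoc]
      _ = (Matrix.diagonal f * m * (Matrix.diagonal g * mᵀ)).trace := by
            rw [Matrix.trace_mul_comm, hmT, hm]; simp only [Matrix.mul_assoc]
      _ = _ := by
            simp only [Matrix.trace, Matrix.diag, Matrix.mul_apply (M := Matrix.diagonal f * m),
              Matrix.diagonal_mul, Matrix.transpose_apply]
            refine Finset.sum_congr rfl fun i _ => Finset.sum_congr rfl fun j _ => by ring
  have e1 : (a * a).trace = ∑ i, ∑ j, (m i j) ^ 2 := by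
    have := gen 1 1
    simpa [hU', hV'] using this
  have e2 : (V * Matrix.diagonal z * Vᵀ * (a * a)).trace = ∑ i, ∑ j, z i * (m i j) ^ 2 := by
    have := gen z 1
    simpa [hU', hV', Matrix.mul_assoc] using this
  have e3 : (U * Matrix.diagonal x * Uᵀ * (a * a)).trace = ∑ i, ∑ j, x j * (m i j) ^ 2 := by
    have := gen 1 x
    rw [show Matrix.diagonal (1 : n → ℝ) = 1 from Matrix.diagonal_one, mul_one, hV', one_mul,
      Matrix.mul_assoc, Matrix.trace_mul_comm, Matrix.mul_assoc] at this
    simpa using this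
  rw [gen, e1, e2, e3, ← Finset.sum_add_distrib, ← Finset.sum_add_distrib]
  refine Finset.sum_le_sum fun i _ => ?_
  rw [← Finset.sum_add_distrib, ← Finset.sum_add_distrib]
  refine Finset.sum_le_sum fun j _ => ?_
  have := Real.add_one_le_exp (z i + x j)
  rw [← Real.exp_add]
  nlinarith [sq_nonneg (m i j)]

lemma trace_sq_le (X : Matrix n n ℝ) (hX : Xᵀ = X) :
    (X * X).trace ≤ (exp X).trace ^ 2 + (exp (-X)).trace ^ 2 := by
  obtain ⟨U, x, hU, hU', rfl⟩ := spectral X hX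
  have hneg : -(U * Matrix.diagonal x * Uᵀ) = U * Matrix.diagonal (fun i => - x i) * Uᵀ := by
    rw [← Matrix.diagonal_neg, Matrix.mul_neg, Matrix.neg_mul]
  rw [hneg, exp_spec _ _ hU', exp_spec _ _ hU']
  have tr : ∀ f : n → ℝ, (U * Matrix.diagonal f * Uᵀ).trace = ∑ i, f i := by
    intro f
    rw [Matrix.trace_mul_comm, ← Matrix.mul_assoc, hU, one_mul, Matrix.trace_diagonal]
  have : U * Matrix.diagonal x * Uᵀ * (U * Matrix.diagonal x * Uᵀ) =
      U * Matrix.diagonal (fun i => x i * x i) * Uᵀ := by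
    rw [← Matrix.diagonal_mul_diagonal]
    calc _ = U * Matrix.diagonal x * (Uᵀ * U) * Matrix.diagonal x * Uᵀ := by
            simp only [Matrix.mul_assoc]
      _ = _ := by rw [hU]; simp [Matrix.mul_assoc]
  rw [this, tr, tr, tr]
  have key : ∀ f : n → ℝ, (∀ i, 0 ≤ f i) → ∑ i, f i ^ 2 ≤ (∑ i, f i) ^ 2 := fun f hf =>
    Finset.sum_sq_le_sq_sum_of_nonneg (fun i _ => hf i)
  refine le_trans ?_ (add_le_add (key _ fun i => (Real.exp_pos _).le) (key _ fun i => (Real.exp_pos _).le))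
  rw [← Finset.sum_add_distrib]
  refine Finset.sum_le_sum fun i _ => ?_
  have h1 := Real.add_one_le_exp (x i)
  have h2 := Real.add_one_le_exp (- x i)
  have h3 := Real.exp_pos (x i)
  have h4 := Real.exp_pos (- x i)
  rcases le_total 0 (x i) with h | h <;> nlinarith

lemma eq_zero_of_trace_sq (X : Matrix n n ℝ) (h : (Xᵀ * X).trace = 0) : X = 0 := by
  ext i j
  simp only [Matrix.trace, Matrix.diag, Matrix.mul_apply, Matrix.transpose_apply] at h
  have h1 := (Finset.sum_eq_zero_iff_of_nonneg (fun i _ => Finset.sum_nonneg fun j _ => mul_self_nonneg _)).mp h j (Finset.mem_univ _)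
  have h2 := (Finset.sum_eq_zero_iff_of_nonneg (fun i _ => mul_self_nonneg _)).mp h1 i (Finset.mem_univ _)
  simpa using h2

end Spec
end CK

open scoped Matrix

namespace CK
open NormedSpace

section Dexp
open scoped Matrix.Norms.Operator
open Filter Topology
variable {n : Type*} [Fintype n] [DecidableEq n]

lemma diag_single (y : n → ℝ) (i j : n) :
    Matrix.diagonal y * Matrix.single i j (1:ℝ) = y i • Matrix.single i j 1 := by
  ext a b
  simp only [Matrix.diagonal_mul, Matrix.single_apply, Matrix.smul_apply, smul_eq_mul]
  split_ifs with h
  · rw [h.1]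
  · simp

lemma single_diag (y : n → ℝ) (i j : n) :
    Matrix.single i j (1:ℝ) * Matrix.diagonal y = y j • Matrix.single i j 1 := by
  ext a b
  simp only [Matrix.mul_diagonal, Matrix.single_apply, Matrix.smul_apply, smul_eq_mul]
  split_ifs with h
  · rw [h.2, mul_comm]
  · simp

lemma exp_contDiff : ContDiff ℝ 1 (exp : Matrix n n ℝ → Matrix n n ℝ) := by
  rw [contDiff_iff_contDiffAt]
  intro x
  exact (NormedSpace.exp_analytic (𝕂 := ℝ) x).contDiffAt

lemma exp_line (X ξ : Matrix n n ℝ) :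
    HasDerivAt (fun s : ℝ => exp (X + s • ξ)) (fderiv ℝ exp X ξ) 0 := by
  have h1 : HasFDerivAt (exp : Matrix n n ℝ → Matrix n n ℝ) (fderiv ℝ exp X) (X + (0:ℝ) • ξ) := by
    rw [zero_smul, add_zero]
    exact (exp_contDiff.differentiable (by norm_num) X).hasFDerivAt
  have h2 : HasDerivAt (fun s : ℝ => X + s • ξ) ξ 0 := by
    have := ((hasDerivAt_id (0:ℝ)).smul_const ξ).const_add X
    rw [one_smul] at this
    exact this
  exact h1.comp_hasDerivAt (0:ℝ) h2

lemma exp_smul_line (ξ : Matrix n n ℝ) :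
    HasDerivAt (fun s : ℝ => exp (s • ξ)) ξ 0 := by
  have := hasDerivAt_exp_smul_const (𝕂 := ℝ) ξ (0:ℝ)
  rw [zero_smul, exp_zero, one_mul] at this
  exact this

lemma dexp_commute (X ξ : Matrix n n ℝ) (h : Commute X ξ) : fderiv ℝ exp X ξ = exp X * ξ := by
  have h1 : HasDerivAt (fun s : ℝ => exp (X + s • ξ)) (exp X * ξ) 0 := by
    have : (fun s : ℝ => exp (X + s • ξ)) = fun s : ℝ => exp X * exp (s • ξ) := by
      ext1 s
      exact Matrix.exp_add_of_commute _ _ (h.smul_right s)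
    rw [this]
    exact (exp_smul_line ξ).const_mul (exp X)
  exact (exp_line X ξ).unique h1

lemma dexp_single (x : n → ℝ) (i j : n) : ∃ c : ℝ, 0 < c ∧
    fderiv ℝ exp (Matrix.diagonal x) (Matrix.single i j 1) = c • Matrix.single i j 1 := by
  by_cases hx : x i = x j
  · refine ⟨Real.exp (x i), Real.exp_pos _, ?_⟩
    rw [dexp_commute, exp_diag]
    · exact diag_single _ _ _
    · rw [Commute, SemiconjBy]
      ext a b
      simp only [Matrix.diagonal_mul, Matrix.mul_diagonal, Matrix.single_apply]
      split_ifs with h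
      · obtain ⟨rfl, rfl⟩ := h; simp [hx]
      · simp
  · have hij : i ≠ j := fun h => hx (by rw [h])
    have hne : x j - x i ≠ 0 := sub_ne_zero.mpr (Ne.symm hx)
    refine ⟨(Real.exp (x j) - Real.exp (x i)) / (x j - x i), ?_, ?_⟩
    · rcases lt_or_gt_of_ne hx with h | h
      · exact div_pos (sub_pos.mpr (Real.exp_lt_exp.mpr h)) (sub_pos.mpr h)
      · exact div_pos_of_neg_of_neg (sub_neg.mpr (Real.exp_lt_exp.mpr h)) (sub_neg.mpr h)
    · set N : Matrix n n ℝ := Matrix.single i j 1 with hN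
      have hNN : N * N = 0 := by
        rw [hN]; exact Matrix.single_mul_single_of_ne _ _ _ _ hij.symm _
      have hc : ∀ (y : n → ℝ) (c : ℝ), (1 + c • N) * Matrix.diagonal y * (1 - c • N) =
          Matrix.diagonal y + (c * (y j - y i)) • N := by
        intro y c
        have h1 : N * Matrix.diagonal y = y j • N := by
          rw [hN, single_diag]
        have h2 : Matrix.diagonal y * N = y i • N := by
          rw [hN, diag_single]
        rw [add_mul, one_mul, smul_mul_assoc, h1, mul_sub, mul_one, add_mul, mul_smul_comm, h2,
          smul_mul_assoc, mul_smul_comm, smul_mul_assoc, hNN]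
        module
      have hexp : ∀ s : ℝ, exp (Matrix.diagonal x + s • N) =
          exp (Matrix.diagonal x) + (s * ((Real.exp (x j) - Real.exp (x i)) / (x j - x i))) • N := by
        intro s
        have h1 := hc x (s / (x j - x i))
        rw [div_mul_cancel₀ _ hne] at h1
        have hm : (1 + (s / (x j - x i)) • N) * (1 - (s / (x j - x i)) • N) = 1 := by
          have := hc 1 (s / (x j - x i))
          simpa using this
        have hinv : (1 + (s / (x j - x i)) • N)⁻¹ = 1 - (s / (x j - x i)) • N :=
          Matrix.inv_eq_right_inv hm
        rw [← h1, ← hinv, Matrix.exp_conj _ _ ⟨⟨_, _, hm, mul_eq_one_comm.mp hm⟩, rfl⟩, hinv,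
          exp_diag, hc]
        congr 2
        ring
      refine (exp_line _ _).unique ?_
      simp_rw [hexp]
      simpa using (((hasDerivAt_id (0:ℝ)).mul_const ((Real.exp (x j) - Real.exp (x i)) / (x j - x i))).smul_const N).const_add (exp (Matrix.diagonal x))

lemma dexp_diag (x : n → ℝ) : ∃ c : n → n → ℝ, (∀ i j, 0 < c i j) ∧
    ∀ ξ i j, fderiv ℝ exp (Matrix.diagonal x) ξ i j = c i j * ξ i j := by
  choose c hc h using dexp_single x
  refine ⟨c, hc, fun ξ i j => ?_⟩
  have h1 : fderiv ℝ exp (Matrix.diagonal x) ξ = ∑ a, ∑ b, (ξ a b * c a b) • Matrix.single a b 1 := by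
    conv_lhs => rw [Matrix.matrix_eq_sum_single ξ]
    rw [map_sum]
    refine Finset.sum_congr rfl fun a _ => ?_
    rw [map_sum]
    refine Finset.sum_congr rfl fun b _ => ?_
    rw [show Matrix.single a b (ξ a b) = ξ a b • Matrix.single a b (1:ℝ) by simp [Matrix.smul_single],
      map_smul, h, smul_smul]
  rw [h1]
  simp only [Matrix.sum_apply, Matrix.smul_apply, Matrix.single_apply, smul_eq_mul, mul_ite, mul_one, mul_zero]
  rw [Finset.sum_eq_single i, Finset.sum_eq_single j]
  · simp [mul_comm]
  · intro b _ hb; simp [hb]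
  · simp
  · intro a _ ha; simp [ha]
  · simp

lemma dexp_conj (U X ξ : Matrix n n ℝ) (h : U * Uᵀ = 1) :
    fderiv ℝ exp (U * X * Uᵀ) (U * ξ * Uᵀ) = U * fderiv ℝ exp X ξ * Uᵀ := by
  have hi : U⁻¹ = Uᵀ := Matrix.inv_eq_right_inv h
  have hu : IsUnit U := ⟨⟨U, Uᵀ, h, mul_eq_one_comm.mp h⟩, rfl⟩
  refine (exp_line _ _).unique ?_
  have : (fun s : ℝ => exp (U * X * Uᵀ + s • (U * ξ * Uᵀ))) = fun s : ℝ => U * exp (X + s • ξ) * Uᵀ := by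
    ext1 s
    rw [← hi, ← Matrix.exp_conj _ _ hu]
    congr 1
    simp [mul_add, add_mul]
  rw [this]
  exact ((exp_line X ξ).const_mul U).mul_const Uᵀ

lemma dexp_pos (X ξ η : Matrix n n ℝ) (hX : Xᵀ = X) (hξ : ξᵀ = ξ)
    (h : fderiv ℝ exp X ξ + exp ((1/2 : ℝ) • X) * η * exp ((1/2 : ℝ) • X) = 0)
    (ht : (ξ * η).trace = 0) : ξ = 0 := by
  obtain ⟨U, x, hU, hU', rfl⟩ := spectral X hX
  obtain ⟨c, hc, hD⟩ := dexp_diag x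
  set ξ' := Uᵀ * ξ * U with hξ'
  set η' := Uᵀ * η * U with hη'
  have r1 : ξ = U * ξ' * Uᵀ := by
    calc ξ = (U * Uᵀ) * ξ * (U * Uᵀ) := by rw [hU']; simp
      _ = _ := by simp only [hξ', Matrix.mul_assoc]
  have r2 : η = U * η' * Uᵀ := by
    calc η = (U * Uᵀ) * η * (U * Uᵀ) := by rw [hU']; simp
      _ = _ := by simp only [hη', Matrix.mul_assoc]
  have hs : ξ'ᵀ = ξ' := by simp [hξ', hξ, Matrix.mul_assoc]
  set e := fun i => Real.exp ((1/2 : ℝ) * x i) with he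
  have hE : exp ((1/2 : ℝ) • (U * Matrix.diagonal x * Uᵀ)) = U * Matrix.diagonal e * Uᵀ := by
    rw [← exp_spec _ _ hU']
    congr 1
    rw [← Matrix.smul_mul, ← Matrix.mul_smul]
    congr 2
    ext i j
    simp [Matrix.diagonal_apply]
  rw [hE, r1, dexp_conj _ _ _ hU', r2] at h
  have h2 : fderiv ℝ exp (Matrix.diagonal x) ξ' + Matrix.diagonal e * η' * Matrix.diagonal e = 0 := by
    calc _ = (Uᵀ * U) * fderiv ℝ exp (Matrix.diagonal x) ξ' * (Uᵀ * U) +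
          (Uᵀ * U) * Matrix.diagonal e * (Uᵀ * U) * η' * (Uᵀ * U) * Matrix.diagonal e * (Uᵀ * U) := by
            rw [hU]; simp
      _ = Uᵀ * (U * fderiv ℝ exp (Matrix.diagonal x) ξ' * Uᵀ +
        U * Matrix.diagonal e * Uᵀ * (U * η' * Uᵀ) * (U * Matrix.diagonal e * Uᵀ)) * U := by
            simp only [mul_add, add_mul, Matrix.mul_assoc]
      _ = 0 := by rw [h]; simp
  have h3 : ∀ i j, c i j * ξ' i j + e i * η' i j * e j = 0 := by
    intro i j
    have := congrFun (congrFun h2 i) j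
    rwa [Matrix.add_apply, hD, Matrix.mul_diagonal, Matrix.diagonal_mul] at this
  have h4 : (ξ' * η').trace = 0 := by
    rw [← ht, r1, r2]
    calc _ = (Uᵀ * U * ξ' * (Uᵀ * U) * η').trace := by rw [hU]; simp
      _ = (Uᵀ * (U * ξ' * (Uᵀ * U) * η')).trace := by simp only [Matrix.mul_assoc]
      _ = _ := by rw [Matrix.trace_mul_comm]; simp only [Matrix.mul_assoc]
  have hepos : ∀ i, 0 < e i := fun i => Real.exp_pos _
  have h5 : ∑ i, ∑ j, c j i / (e i * e j) * (ξ' i j) ^ 2 = 0 := by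
    have : ∑ i, ∑ j, c j i / (e i * e j) * (ξ' i j) ^ 2 = - (ξ' * η').trace := by
      simp only [Matrix.trace, Matrix.diag, Matrix.mul_apply, ← Finset.sum_neg_distrib]
      refine Finset.sum_congr rfl fun i _ => Finset.sum_congr rfl fun j _ => ?_
      have hsym : ξ' j i = ξ' i j := congrFun (congrFun hs i) j
      have := h3 j i
      rw [hsym] at this
      have h1 := hepos i
      have h2 := hepos j
      field_simp
      linear_combination (ξ' i j) * this
    rw [this, h4, neg_zero]
  have h6 : ξ' = 0 := by
    ext i j
    have nn : ∀ i j, 0 ≤ c j i / (e i * e j) * (ξ' i j) ^ 2 := fun i j =>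
      mul_nonneg (div_nonneg (hc _ _).le (mul_pos (hepos _) (hepos _)).le) (sq_nonneg _)
    have a1 := (Finset.sum_eq_zero_iff_of_nonneg (fun i _ => Finset.sum_nonneg fun j _ => nn i j)).mp h5 i (Finset.mem_univ _)
    have a2 := (Finset.sum_eq_zero_iff_of_nonneg (fun j _ => nn i j)).mp a1 j (Finset.mem_univ _)
    rcases mul_eq_zero.mp a2 with h | h
    · exact absurd h (div_pos (hc _ _) (mul_pos (hepos _) (hepos _))).ne'
    · simpa using h
  rw [r1, h6]; simp

end Dexp
end CK

open scoped Matrix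

namespace CK
open NormedSpace

section Lie
open scoped Matrix.Norms.Operator
open Filter Topology
variable {n : Type*} [Fintype n] [DecidableEq n]

/-- closed self-adjoint group of matrices of determinant one -/
structure Grp (S : Set (Matrix n n ℝ)) : Prop where
  closed : IsClosed S
  one : (1 : Matrix n n ℝ) ∈ S
  mul : ∀ A ∈ S, ∀ B ∈ S, A * B ∈ S
  inv : ∀ A ∈ S, A⁻¹ ∈ S
  tr : ∀ A ∈ S, Aᵀ ∈ S
  det : ∀ A ∈ S, A.det = 1

variable {S : Set (Matrix n n ℝ)}

lemma Grp.pow (hS : Grp S) {A : Matrix n n ℝ} (hA : A ∈ S) (k : ℕ) : A ^ k ∈ S := by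
  induction k with
  | zero => simpa using hS.one
  | succ k ih => rw [pow_succ]; exact hS.mul _ ih _ hA

lemma Grp.exp_zsmul (hS : Grp S) {Y : Matrix n n ℝ} (hY : exp Y ∈ S) (k : ℤ) : exp (k • Y) ∈ S := by
  obtain ⟨m, rfl | rfl⟩ := k.eq_nat_or_neg
  · rw [natCast_zsmul, Matrix.exp_nsmul]; exact hS.pow hY m
  · rw [neg_smul, natCast_zsmul, Matrix.exp_neg, Matrix.exp_nsmul]; exact hS.inv _ (hS.pow hY m)

lemma exp_cont : Continuous (exp : Matrix n n ℝ → Matrix n n ℝ) := exp_contDiff.continuous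

lemma Grp.lim (hS : Grp S) {Y : ℕ → Matrix n n ℝ} {c : ℕ → ℤ} {Z : Matrix n n ℝ}
    (hY : ∀ᶠ j in atTop, exp (Y j) ∈ S) (h : Tendsto (fun j => c j • Y j) atTop (𝓝 Z)) :
    exp Z ∈ S := by
  refine hS.closed.mem_of_tendsto ((exp_cont.tendsto Z).comp h) ?_
  filter_upwards [hY] with j hj
  exact hS.exp_zsmul hj _

lemma exp_strict_zero : HasStrictFDerivAt (exp : Matrix n n ℝ → Matrix n n ℝ)
    ((ContinuousLinearEquiv.refl ℝ (Matrix n n ℝ) : Matrix n n ℝ ≃L[ℝ] Matrix n n ℝ) :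
      Matrix n n ℝ →L[ℝ] Matrix n n ℝ) 0 :=
  hasStrictFDerivAt_exp_zero

lemma Grp.add (hS : Grp S) {X Y : Matrix n n ℝ} (hX : ∀ t : ℝ, exp (t • X) ∈ S)
    (hY : ∀ t : ℝ, exp (t • Y) ∈ S) : exp (X + Y) ∈ S := by
  have hs := exp_strict_zero (n := n)
  set lg := hs.localInverse exp _ 0 with hlg
  have hl : HasStrictFDerivAt lg _ (exp 0) := hs.to_localInverse
  have hr : ∀ᶠ y in 𝓝 (exp (0 : Matrix n n ℝ)), exp (lg y) = y := hs.eventually_right_inverse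
  have hl0 : lg (exp 0) = 0 := hs.localInverse_apply_image
  set f : ℝ → Matrix n n ℝ := fun s => exp (s • X) * exp (s • Y) with hf
  have hfd : HasDerivAt f (X + Y) 0 := by
    have := (exp_smul_line X).mul (exp_smul_line Y)
    rw [zero_smul, zero_smul, exp_zero, mul_one, one_mul] at this
    exact this
  have hf0 : f 0 = exp 0 := by simp [hf]
  have hg : HasDerivAt (fun s => lg (f s)) (X + Y) 0 := by
    have h1 := hl.hasFDerivAt
    rw [← hf0] at h1
    exact h1.comp_hasDerivAt (0:ℝ) hfd
  have ht := hasDerivAt_iff_tendsto_slope_zero.mp hg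
  have hseq : Tendsto (fun j : ℕ => ((j : ℝ) + 1)⁻¹) atTop (𝓝[≠] 0) := by
    refine tendsto_nhdsWithin_iff.mpr ⟨?_, Eventually.of_forall fun j => ?_⟩
    · simpa using tendsto_one_div_add_atTop_nhds_zero_nat (𝕜 := ℝ)
    · have : (0:ℝ) < (j:ℝ) + 1 := by positivity
      exact (inv_pos.mpr this).ne'
  have h2 := ht.comp hseq
  refine hS.lim (Y := fun j : ℕ => lg (f ((j : ℝ) + 1)⁻¹)) (c := fun j : ℕ => ((j + 1 : ℕ) : ℤ)) ?_ ?_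
  · have hc : Tendsto f (𝓝 0) (𝓝 (exp 0)) := by rw [← hf0]; exact hfd.continuousAt
    have := (hc.comp (tendsto_nhdsWithin_iff.mp hseq).1).eventually hr
    filter_upwards [this] with j hj
    simp only [Function.comp] at hj
    rw [hj]
    exact hS.mul _ (hX _) _ (hY _)
  · refine h2.congr fun j => ?_
    simp only [Function.comp, zero_add, hf0, hl0, sub_zero, inv_inv]
    rw [natCast_zsmul, ← Nat.cast_smul_eq_nsmul ℝ]
    push_cast
    rfl

/-- the symmetric part of the Lie algebra -/
def Grp.pp (hS : Grp S) : Submodule ℝ (Matrix n n ℝ) where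
  carrier := {X | Xᵀ = X ∧ ∀ t : ℝ, exp (t • X) ∈ S}
  zero_mem' := ⟨by simp, fun t => by simpa using hS.one⟩
  add_mem' := by
    rintro X Y ⟨hX, hX'⟩ ⟨hY, hY'⟩
    refine ⟨by rw [Matrix.transpose_add, hX, hY], fun t => ?_⟩
    rw [smul_add]
    refine hS.add (fun s => ?_) (fun s => ?_)
    · rw [smul_smul]; exact hX' _
    · rw [smul_smul]; exact hY' _
  smul_mem' := by
    rintro c X ⟨hX, hX'⟩
    refine ⟨by rw [Matrix.transpose_smul, hX], fun t => ?_⟩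
    rw [smul_smul]; exact hX' _

lemma Grp.mem_pp (hS : Grp S) (X : Matrix n n ℝ) :
    X ∈ hS.pp ↔ Xᵀ = X ∧ ∀ t : ℝ, exp (t • X) ∈ S := Iff.rfl

lemma Grp.exp_mem (hS : Grp S) {X : Matrix n n ℝ} (h : X ∈ hS.pp) : exp X ∈ S := by
  simpa using h.2 1

lemma Grp.small (hS : Grp S) : ∀ᶠ Y : Matrix n n ℝ in 𝓝 0,
    Yᵀ = Y → (∀ X ∈ hS.pp, (X * Y).trace = 0) → exp Y ∈ S → Y = 0 := by
  by_contra hcon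
  rw [Filter.not_eventually] at hcon
  haveI : FirstCountableTopology (Matrix n n ℝ) :=
    inferInstanceAs (FirstCountableTopology (n → n → ℝ))
  obtain ⟨Y, hY0, hY⟩ := Filter.exists_seq_forall_of_frequently hcon
  push Not at hY
  have hn : ∀ j, 0 < ‖Y j‖ := fun j => norm_pos_iff.mpr (hY j).2.2.2
  have hsph : ∀ j, (‖Y j‖)⁻¹ • Y j ∈ Metric.sphere (0 : Matrix n n ℝ) 1 := by
    intro j
    rw [mem_sphere_zero_iff_norm, norm_smul, norm_inv, norm_norm, inv_mul_cancel₀ (hn j).ne']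
  haveI : ProperSpace (Matrix n n ℝ) := FiniteDimensional.proper ℝ _
  obtain ⟨Z, hZ, φ, hφ, hlim⟩ := (isCompact_sphere (0 : Matrix n n ℝ) 1).tendsto_subseq hsph
  have hZ1 : ‖Z‖ = 1 := by simpa using hZ
  have hnorm : Tendsto (fun j => ‖Y (φ j)‖) atTop (𝓝 0) := by
    have := (hY0.comp hφ.tendsto_atTop).norm
    simpa using this
  have hZt : Zᵀ = Z := by
    have h1 : Tendsto (fun j => ((‖Y (φ j)‖)⁻¹ • Y (φ j))ᵀ) atTop (𝓝 Zᵀ) :=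
      ((continuous_id.matrix_transpose).tendsto Z).comp hlim
    refine tendsto_nhds_unique h1 (hlim.congr fun j => ?_)
    simp [Matrix.transpose_smul, (hY (φ j)).1]
  have hexp : ∀ t : ℝ, exp (t • Z) ∈ S := by
    intro t
    refine hS.lim (Y := fun j => Y (φ j)) (c := fun j => ⌊t / ‖Y (φ j)‖⌋)
      (Eventually.of_forall fun j => (hY _).2.2.1) ?_
    have h1 : Tendsto (fun j => t • ((‖Y (φ j)‖)⁻¹ • Y (φ j))) atTop (𝓝 (t • Z)) := hlim.const_smul t
    have h2 : Tendsto (fun j => (Int.fract (t / ‖Y (φ j)‖)) • Y (φ j)) atTop (𝓝 0) := by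
      refine squeeze_zero_norm (fun j => ?_) hnorm
      rw [norm_smul, Real.norm_eq_abs, abs_of_nonneg (Int.fract_nonneg _)]
      have := (Int.fract_lt_one (t / ‖Y (φ j)‖)).le
      nlinarith [hn (φ j)]
    have h3 := h1.sub h2
    rw [sub_zero] at h3
    refine h3.congr fun j => ?_
    rw [smul_smul, ← sub_smul, ← div_eq_mul_inv, Int.self_sub_fract, Int.cast_smul_eq_zsmul]
  have hZp : Z ∈ hS.pp := ⟨hZt, hexp⟩
  have htr : (Z * Z).trace = 0 := by
    have h1 : Tendsto (fun j => (Z * ((‖Y (φ j)‖)⁻¹ • Y (φ j))).trace) atTop (𝓝 (Z * Z).trace) := by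
      have hc : Continuous fun A : Matrix n n ℝ => (Z * A).trace :=
        (continuous_const.matrix_mul continuous_id).matrix_trace
      exact (hc.tendsto Z).comp hlim
    refine tendsto_nhds_unique h1 (tendsto_const_nhds.congr fun j => ?_)
    simp [(hY (φ j)).2.1 Z hZp]
  have : Z = 0 := eq_zero_of_trace_sq Z (by rw [hZt]; exact htr)
  rw [this, norm_zero] at hZ1
  exact zero_ne_one hZ1

end Lie
end CK

open scoped Matrix

namespace CK
open NormedSpace

section Cartan
open scoped Matrix.Norms.Operator
open Filter Topology
variable {n : Type*} [Fintype n] [DecidableEq n]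

variable {S : Set (Matrix n n ℝ)}

lemma exp_half (X : Matrix n n ℝ) : exp ((1/2 : ℝ) • X) * exp ((1/2 : ℝ) • X) = exp X := by
  rw [← Matrix.exp_add_of_commute _ _ (Commute.refl _), ← add_smul]
  norm_num

/-- pairing -/
def pairing (P : Submodule ℝ (Matrix n n ℝ)) : Matrix n n ℝ →ₗ[ℝ] Module.Dual ℝ P :=
  LinearMap.mk₂ ℝ (fun (Y : Matrix n n ℝ) (X : P) => ((X : Matrix n n ℝ) * Y).trace)
    (by intros; simp [Matrix.mul_add]) (by intros; simp)
    (by intros; simp [Matrix.add_mul]) (by intros; simp)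

/-- orthogonal complement -/
def perp (P : Submodule ℝ (Matrix n n ℝ)) : Submodule ℝ (Matrix n n ℝ) := LinearMap.ker (pairing P)

lemma mem_perp (P : Submodule ℝ (Matrix n n ℝ)) (Y : Matrix n n ℝ) :
    Y ∈ perp P ↔ ∀ X ∈ P, (X * Y).trace = 0 := by
  rw [perp, LinearMap.mem_ker]
  constructor
  · intro h X hX
    exact congrArg (fun f => f ⟨X, hX⟩) h
  · intro h
    ext X
    exact h X X.2

lemma finrank_perp (P : Submodule ℝ (Matrix n n ℝ)) :
    Module.finrank ℝ (Matrix n n ℝ) ≤ Module.finrank ℝ P + Module.finrank ℝ (perp P) := by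
  have h := LinearMap.finrank_range_add_finrank_ker (pairing P)
  have h2 := Submodule.finrank_le (LinearMap.range (pairing P))
  rw [Subspace.dual_finrank_eq] at h2
  rw [← h, perp]
  omega

/-- the local parametrization -/
noncomputable def Phi (P : Submodule ℝ (Matrix n n ℝ)) (z : P × perp P) : Matrix n n ℝ :=
  exp ((1/2 : ℝ) • (z.1 : Matrix n n ℝ)) * exp (z.2 : Matrix n n ℝ) *
    exp ((1/2 : ℝ) • (z.1 : Matrix n n ℝ))

lemma Phi_contDiff (P : Submodule ℝ (Matrix n n ℝ)) : ContDiff ℝ 1 (Phi P) := by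
  have h1 : ContDiff ℝ 1 (fun z : P × perp P => (z.1 : Matrix n n ℝ)) :=
    (P.subtypeL.comp (ContinuousLinearMap.fst ℝ P (perp P))).contDiff
  have h2 : ContDiff ℝ 1 (fun z : P × perp P => (z.2 : Matrix n n ℝ)) :=
    ((perp P).subtypeL.comp (ContinuousLinearMap.snd ℝ P (perp P))).contDiff
  have h3 := exp_contDiff.comp (h1.const_smul (1/2 : ℝ))
  have h4 := exp_contDiff.comp h2
  exact (h3.mul h4).mul h3

lemma Phi_map (P : Submodule ℝ (Matrix n n ℝ)) (hP : ∀ X ∈ P, Xᵀ = X) (X0 : P) :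
    map (Phi P) (𝓝 (X0, 0)) = 𝓝 (exp (X0 : Matrix n n ℝ)) := by
  have hs : HasStrictFDerivAt (Phi P) (fderiv ℝ (Phi P) (X0, 0)) (X0, 0) :=
    (Phi_contDiff P).contDiffAt.hasStrictFDerivAt (by norm_num)
  have h0 : Phi P (X0, 0) = exp (X0 : Matrix n n ℝ) := by
    simp only [Phi, ZeroMemClass.coe_zero, exp_zero, mul_one, exp_half]
  set D := fderiv ℝ (Phi P) (X0, 0) with hD
  have hline : ∀ v : P × perp P, HasDerivAt (fun s : ℝ => Phi P ((X0, 0) + s • v)) (D v) 0 := by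
    intro v
    have h1 : HasFDerivAt (Phi P) D ((X0, 0) + (0:ℝ) • v) := by
      rw [zero_smul, add_zero]; exact hs.hasFDerivAt
    have h2 : HasDerivAt (fun s : ℝ => (X0, (0 : perp P)) + s • v) v 0 := by
      have := ((hasDerivAt_id (0:ℝ)).smul_const v).const_add (X0, (0 : perp P))
      rw [one_smul] at this
      exact this
    exact h1.comp_hasDerivAt (0:ℝ) h2
  have hD1 : ∀ ξ : P, D (ξ, 0) = fderiv ℝ exp (X0 : Matrix n n ℝ) (ξ : Matrix n n ℝ) := by
    intro ξ
    refine (hline (ξ, 0)).unique ?_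
    have := exp_line (X0 : Matrix n n ℝ) (ξ : Matrix n n ℝ)
    have he : (fun s : ℝ => Phi P ((X0, 0) + s • (ξ, (0 : perp P)))) =
        fun s : ℝ => exp ((X0 : Matrix n n ℝ) + s • (ξ : Matrix n n ℝ)) := by
      funext s
      change exp ((1/2 : ℝ) • ((X0 : Matrix n n ℝ) + s • (ξ : Matrix n n ℝ))) *
        exp ((0 : Matrix n n ℝ) + s • (0 : Matrix n n ℝ)) *
        exp ((1/2 : ℝ) • ((X0 : Matrix n n ℝ) + s • (ξ : Matrix n n ℝ))) = _
      rw [smul_zero, add_zero, exp_zero, mul_one, exp_half]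
    rw [he]
    exact this
  have hD2 : ∀ η : perp P, D (0, η) =
      exp ((1/2 : ℝ) • (X0 : Matrix n n ℝ)) * (η : Matrix n n ℝ) * exp ((1/2 : ℝ) • (X0 : Matrix n n ℝ)) := by
    intro η
    refine (hline (0, η)).unique ?_
    have := ((exp_smul_line (η : Matrix n n ℝ)).const_mul (exp ((1/2 : ℝ) • (X0 : Matrix n n ℝ)))).mul_const
      (exp ((1/2 : ℝ) • (X0 : Matrix n n ℝ)))
    have he : (fun s : ℝ => Phi P ((X0, 0) + s • ((0 : P), η))) =
        fun s : ℝ => exp ((1/2 : ℝ) • (X0 : Matrix n n ℝ)) * exp (s • (η : Matrix n n ℝ)) *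
          exp ((1/2 : ℝ) • (X0 : Matrix n n ℝ)) := by
      funext s
      change exp ((1/2 : ℝ) • ((X0 : Matrix n n ℝ) + s • (0 : Matrix n n ℝ))) *
        exp ((0 : Matrix n n ℝ) + s • (η : Matrix n n ℝ)) *
        exp ((1/2 : ℝ) • ((X0 : Matrix n n ℝ) + s • (0 : Matrix n n ℝ))) = _
      rw [smul_zero, add_zero, zero_add]
    rw [he]
    exact this
  have hinj : Function.Injective D := by
    rw [injective_iff_map_eq_zero]
    rintro ⟨ξ, η⟩ h
    have hsplit : (ξ, η) = (ξ, (0 : perp P)) + ((0 : P), η) := by simp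
    rw [hsplit, map_add, hD1, hD2] at h
    have hξ := dexp_pos _ _ _ (hP _ X0.2) (hP _ ξ.2) h ((mem_perp P _).mp η.2 _ ξ.2)
    rw [hξ, map_zero, zero_add] at h
    have hu := Matrix.isUnit_exp ((1/2 : ℝ) • (X0 : Matrix n n ℝ))
    have hη : (η : Matrix n n ℝ) = 0 := by
      have h3 := (hu.mul_left_eq_zero).mp h
      exact (hu.mul_right_eq_zero).mp h3
    exact Prod.ext (Subtype.ext hξ) (Subtype.ext hη)
  have hfin : Module.finrank ℝ (P × perp P) = Module.finrank ℝ (Matrix n n ℝ) := by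
    refine le_antisymm (LinearMap.finrank_le_finrank_of_injective (f := (D : P × perp P →ₗ[ℝ] Matrix n n ℝ)) hinj) ?_
    rw [Module.finrank_prod]
    exact finrank_perp P
  have hsurj : Function.Surjective D :=
    (LinearMap.injective_iff_surjective_of_finrank_eq_finrank (f := (D : P × perp P →ₗ[ℝ] Matrix n n ℝ)) hfin).mp hinj
  rw [← h0]
  exact hs.map_nhds_eq_of_surj (LinearMap.range_eq_top.mpr hsurj)

lemma exp_locinj : ∀ᶠ Y : Matrix n n ℝ in 𝓝 0, exp Yᵀ = exp Y → Yᵀ = Y := by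
  have hs := exp_strict_zero (n := n)
  have hl := hs.eventually_left_inverse
  have ht : Tendsto (fun Y : Matrix n n ℝ => Yᵀ) (𝓝 0) (𝓝 0) := by
    have := (continuous_id.matrix_transpose).tendsto (0 : Matrix n n ℝ)
    simpa using this
  filter_upwards [hl, ht.eventually hl] with Y h1 h2 h3
  exact h2.symm.trans ((congrArg _ h3).trans h1)

lemma Grp.open_nhds (hS : Grp S) (X0 : Matrix n n ℝ) (h0 : X0 ∈ hS.pp) :
    ∀ᶠ p in 𝓝 (exp X0), pᵀ = p → p ∈ S → ∃ X ∈ hS.pp, p = exp X := by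
  have hm := Phi_map hS.pp (fun X hX => hX.1) ⟨X0, h0⟩
  rw [← hm, eventually_map]
  have ht : Tendsto (fun z : hS.pp × perp hS.pp => (z.2 : Matrix n n ℝ)) (𝓝 (⟨X0, h0⟩, 0)) (𝓝 0) := by
    have : Continuous (fun z : hS.pp × perp hS.pp => (z.2 : Matrix n n ℝ)) :=
      continuous_subtype_val.comp continuous_snd
    exact this.tendsto _
  filter_upwards [ht.eventually hS.small, ht.eventually exp_locinj] with z h1 h2 hsym hmem
  refine ⟨z.1, z.1.2, ?_⟩
  have hXt := z.1.2.1
  have hunit := Matrix.isUnit_exp ((1/2 : ℝ) • (z.1 : Matrix n n ℝ))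
  have hYsym : (z.2 : Matrix n n ℝ)ᵀ = z.2 := by
    apply h2
    rw [Phi, Matrix.transpose_mul, Matrix.transpose_mul, ← Matrix.exp_transpose, ← Matrix.exp_transpose,
      Matrix.transpose_smul, hXt, Matrix.mul_assoc] at hsym
    exact hunit.mul_left_cancel (hunit.mul_right_cancel (by simpa [Matrix.mul_assoc] using hsym))
  have hE : exp (z.2 : Matrix n n ℝ) ∈ S := by
    have hq := z.1.2.2 (-(1/2))
    have h4 := hS.mul _ (hS.mul _ hq _ hmem) _ hq
    rw [neg_smul, Matrix.exp_neg, Phi] at h4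
    have hdet := (Matrix.isUnit_iff_isUnit_det _).mp hunit
    rw [← Matrix.mul_assoc, ← Matrix.mul_assoc, Matrix.nonsing_inv_mul _ hdet, one_mul, Matrix.mul_assoc,
      Matrix.mul_nonsing_inv _ hdet, mul_one] at h4
    exact h4
  have hY0 := h1 hYsym ((mem_perp _ _).mp z.2.2) hE
  rw [Phi, hY0, exp_zero, mul_one, exp_half]

end Cartan
end CK

open scoped Matrix

namespace CK
open NormedSpace

section Cartan2
open scoped Matrix.Norms.Operator
open Filter Topology
variable {n : Type*} [Fintype n] [DecidableEq n]

variable {S : Set (Matrix n n ℝ)}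

lemma sq_le_trace (X : Matrix n n ℝ) (hX : Xᵀ = X) (i j : n) : X i j ^ 2 ≤ (X * X).trace := by
  have h : (X * X).trace = ∑ a, ∑ b, X a b ^ 2 := by
    simp only [Matrix.trace, Matrix.diag, Matrix.mul_apply]
    refine Finset.sum_congr rfl fun a _ => Finset.sum_congr rfl fun b _ => ?_
    rw [sq]
    congr 1
    exact congrFun (congrFun hX a) b
  rw [h]
  refine le_trans ?_ (Finset.single_le_sum (f := fun a => ∑ b, X a b ^ 2)
    (fun a _ => Finset.sum_nonneg fun b _ => sq_nonneg _) (Finset.mem_univ i))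
  exact Finset.single_le_sum (f := fun b => X i b ^ 2) (fun b _ => sq_nonneg _) (Finset.mem_univ j)

lemma Grp.isCompact_ball (hS : Grp S) (c : ℝ) :
    IsCompact {X : Matrix n n ℝ | X ∈ hS.pp ∧ (X * X).trace ≤ c} := by
  have hc : IsCompact (Set.pi Set.univ fun _ : n => Set.pi Set.univ fun _ : n =>
      Set.Icc (-(|c| + 1)) (|c| + 1)) :=
    isCompact_univ_pi fun i => isCompact_univ_pi fun j => isCompact_Icc
  have hcl : IsClosed {X : Matrix n n ℝ | X ∈ hS.pp ∧ (X * X).trace ≤ c} := by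
    refine IsClosed.inter ?_ (isClosed_le (continuous_id.matrix_mul continuous_id).matrix_trace continuous_const)
    have : (hS.pp : Set (Matrix n n ℝ)) = {X | Xᵀ = X} ∩ ⋂ t : ℝ, {X | exp (t • X) ∈ S} := by
      ext X; simp [Grp.mem_pp, SetLike.mem_coe]
    rw [this]
    refine IsClosed.inter (isClosed_eq continuous_id.matrix_transpose continuous_id)
      (isClosed_iInter fun t => hS.closed.preimage (exp_cont.comp (continuous_const_smul t)))
  refine hc.of_isClosed_subset hcl ?_
  rintro X ⟨hX, hX'⟩
  rw [Set.mem_univ_pi]; intro i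
  rw [Set.mem_univ_pi]; intro j
  have := sq_le_trace X hX.1 i j
  rw [Set.mem_Icc, ← abs_le]
  have h2 : X i j ^ 2 ≤ |c| := this.trans (hX'.trans (le_abs_self c))
  have h3 := abs_nonneg c
  exact abs_le_of_sq_le_sq (a := X i j) (b := |c| + 1) (by nlinarith) (by linarith)

lemma Grp.closed_exp (hS : Grp S) : IsClosed (exp '' (hS.pp : Set (Matrix n n ℝ))) := by
  rw [← closure_subset_iff_isClosed]
  intro p hp
  set f : Matrix n n ℝ → ℝ := fun p => p.trace ^ 2 + p.adjugate.trace ^ 2 with hf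
  have hfc : Continuous f := by
    have h1 : Continuous fun p : Matrix n n ℝ => p.trace := continuous_id.matrix_trace
    have h2 : Continuous fun p : Matrix n n ℝ => p.adjugate.trace := continuous_id.matrix_adjugate.matrix_trace
    exact (h1.pow 2).add (h2.pow 2)
  have hfX : ∀ X ∈ hS.pp, (X * X).trace ≤ f (exp X) := by
    intro X hX
    have := trace_sq_le X hX.1
    rw [Matrix.exp_neg, Matrix.inv_def, hS.det _ (hS.exp_mem hX), Ring.inverse_one, one_smul] at this
    exact this
  have hK := ((hS.isCompact_ball (f p + 1)).image exp_cont).isClosed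
  have hev : ∀ᶠ q in 𝓝 p, f q < f p + 1 := hfc.continuousAt.eventually_lt_const (by linarith)
  have hmem : p ∈ exp '' {X : Matrix n n ℝ | X ∈ hS.pp ∧ (X * X).trace ≤ f p + 1} := by
    rw [← hK.closure_eq, mem_closure_iff_frequently]
    refine ((mem_closure_iff_frequently.mp hp).and_eventually hev).mono ?_
    rintro q ⟨⟨X, hX, rfl⟩, h⟩
    exact ⟨X, ⟨hX, (hfX X hX).trans h.le⟩, rfl⟩
  obtain ⟨X, hX, rfl⟩ := hmem
  exact ⟨X, hX.1, rfl⟩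

lemma Grp.connected (hS : Grp S) {T : Set (Matrix n n ℝ)} (hT : T ⊆ S) (hc : IsPreconnected T)
    (h1 : (1 : Matrix n n ℝ) ∈ T) {l : Matrix n n ℝ} (hl : l ∈ T) : ∃ X ∈ hS.pp, lᵀ * l = exp X := by
  have hcont : Continuous fun l : Matrix n n ℝ => lᵀ * l := continuous_id.matrix_transpose.matrix_mul continuous_id
  have hT' := hc.image _ hcont.continuousOn
  set E := exp '' (hS.pp : Set (Matrix n n ℝ)) with hE
  set u := interior {p : Matrix n n ℝ | pᵀ = p → p ∈ S → p ∈ E} with hu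
  have hEu : E ⊆ u := by
    rintro _ ⟨X, hX, rfl⟩
    rw [hu, mem_interior_iff_mem_nhds]
    filter_upwards [hS.open_nhds X hX] with p hp h1 h2
    obtain ⟨Y, hY, rfl⟩ := hp h1 h2
    exact ⟨Y, hY, rfl⟩
  have huE : ∀ p ∈ (fun l : Matrix n n ℝ => lᵀ * l) '' T, p ∈ u → p ∈ E := by
    rintro _ ⟨l, hl, rfl⟩ h
    exact interior_subset h (by simp) (hS.mul _ (hS.tr _ (hT hl)) _ (hT hl))
  have hlE : lᵀ * l ∈ E := by
    rcases isPreconnected_iff_subset_of_disjoint.mp hT' u Eᶜ isOpen_interior hS.closed_exp.isOpen_compl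
      (fun p _ => by by_cases h : p ∈ E; exacts [Or.inl (hEu h), Or.inr h])
      (by
        rw [Set.eq_empty_iff_forall_notMem]
        rintro p ⟨hp, hpu, hpE⟩
        exact hpE (huE p hp hpu)) with h | h
    · exact huE _ ⟨l, hl, rfl⟩ (h ⟨l, hl, rfl⟩)
    · exact absurd ⟨0, hS.pp.zero_mem, by simp⟩ (h ⟨1, h1, rfl⟩)
  obtain ⟨X, hX, h⟩ := hlE
  exact ⟨X, hX, h.symm⟩

lemma Grp.cartan (hS : Grp S)
    (comp : ∀ A ∈ S, ∃ N : ℕ, 1 ≤ N ∧ ∃ T ⊆ S, IsPreconnected T ∧ (1 : Matrix n n ℝ) ∈ T ∧ A ^ N ∈ T)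
    {l : Matrix n n ℝ} (hl : l ∈ S) : ∃ X ∈ hS.pp, lᵀ * l = exp X := by
  have hp := hS.mul _ (hS.tr _ hl) _ hl
  obtain ⟨N, hN, T, hTS, hTc, hT1, hTN⟩ := comp _ hp
  obtain ⟨X, hX, h⟩ := hS.connected hTS hTc hT1 hTN
  obtain ⟨Y, hY, hYe⟩ := exists_log l (by rw [hS.det l hl]; exact isUnit_one)
  rw [← hYe, ← Matrix.exp_nsmul, ← Matrix.exp_transpose, Matrix.transpose_smul, hY,
    ← Matrix.exp_add_of_commute _ _ (Commute.refl _), ← two_nsmul, smul_smul] at h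
  have := exp_inj _ _ (by rw [Matrix.transpose_smul, hY]) hX.1 h
  have hYX : Y = ((2 * N : ℕ) : ℝ)⁻¹ • X := by
    rw [← this, ← Nat.cast_smul_eq_nsmul ℝ, smul_smul, inv_mul_cancel₀, one_smul]
    positivity
  refine ⟨Y, ?_, hYe.symm⟩
  rw [hYX]
  exact hS.pp.smul_mem _ hX

end Cartan2
end CK

open scoped Matrix

namespace CK
open NormedSpace

section Svd

lemma exp_block {a b : Type*} [Fintype a] [DecidableEq a] [Fintype b] [DecidableEq b]
    (K : Matrix a a ℝ) (hK : Kᵀ = K) :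
    exp (Matrix.fromBlocks K 0 0 (0 : Matrix b b ℝ)) = Matrix.fromBlocks (exp K) 0 0 1 := by
  obtain ⟨V, x, hV, hV', rfl⟩ := spectral K hK
  have h : Matrix.fromBlocks (V * Matrix.diagonal x * Vᵀ) 0 0 (0 : Matrix b b ℝ) =
      Matrix.fromBlocks V 0 0 1 * Matrix.diagonal (Sum.elim x 0) * (Matrix.fromBlocks V 0 0 1)ᵀ := by
    rw [← Matrix.fromBlocks_diagonal, Matrix.fromBlocks_transpose, Matrix.fromBlocks_multiply,
      Matrix.fromBlocks_multiply]
    simp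
  rw [h, exp_spec _ _ (by rw [Matrix.fromBlocks_transpose, Matrix.fromBlocks_multiply]; simp [hV']),
    exp_spec _ _ hV']
  have h2 : (fun i => Real.exp ((Sum.elim x (0 : b → ℝ)) i)) =
      Sum.elim (fun i => Real.exp (x i)) (fun _ => (1:ℝ)) := by
    ext i; cases i <;> simp
  rw [h2, ← Matrix.fromBlocks_diagonal, Matrix.fromBlocks_transpose, Matrix.fromBlocks_multiply,
      Matrix.fromBlocks_multiply]
  simp

lemma exists_U {a b : Type*} [Fintype a] [DecidableEq a] [Fintype b] [DecidableEq b]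
    (C : Matrix (a ⊕ b) a ℝ) (s : a → ℝ) (hC : Cᵀ * C = Matrix.diagonal s) :
    ∃ (U : Matrix (a ⊕ b) (a ⊕ b) ℝ) (σ : a → ℝ), Uᵀ * U = 1 ∧ ∀ p i, C p i = σ i * U p (Sum.inl i) := by
  have hdot : ∀ i j, inner ℝ (WithLp.toLp 2 (fun p => C p i) : EuclideanSpace ℝ (a ⊕ b)) (WithLp.toLp 2 (fun p => C p j)) =
      Matrix.diagonal s i j := by
    intro i j
    rw [← hC]
    simp [PiLp.inner_apply, Matrix.mul_apply, mul_comm]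
  set c : a → EuclideanSpace ℝ (a ⊕ b) := fun i => WithLp.toLp 2 (fun p => C p i) with hc
  let f : a ⊕ b → EuclideanSpace ℝ (a ⊕ b) := Sum.elim (fun i => (‖c i‖)⁻¹ • c i) 0
  let T : Set (a ⊕ b) := {p | f p ≠ 0}
  have hT : Orthonormal ℝ (T.domRestrict f) := by
    constructor
    · rintro ⟨p | p, hp⟩
      · have hp0 : c p ≠ 0 := by
          intro h; apply hp; simp [f, h]
        change ‖(‖c p‖)⁻¹ • c p‖ = 1
        rw [norm_smul, norm_inv, norm_norm, inv_mul_cancel₀ (norm_ne_zero_iff.mpr hp0)]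
      · exact absurd rfl hp
    · rintro ⟨p | p, hp⟩ ⟨q | q, hq⟩ hpq
      · have : p ≠ q := by rintro rfl; exact hpq rfl
        change inner ℝ ((‖c p‖)⁻¹ • c p) ((‖c q‖)⁻¹ • c q) = 0
        rw [real_inner_smul_left, real_inner_smul_right, hdot, Matrix.diagonal_apply_ne _ this]
        simp
      · exact absurd rfl hq
      · exact absurd rfl hp
      · exact absurd rfl hp
  obtain ⟨bb, hb⟩ := hT.exists_orthonormalBasis_extension_of_card_eq (by simp)
  refine ⟨Matrix.of fun p q => bb q p, fun i => ‖c i‖, ?_, ?_⟩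
  · ext p q
    have := orthonormal_iff_ite.mp bb.orthonormal p q
    rw [Matrix.one_apply, ← this]
    simp [PiLp.inner_apply, Matrix.mul_apply, mul_comm]
  · intro p i
    by_cases h : c i = 0
    · have : C p i = 0 := congrArg (fun v : EuclideanSpace ℝ (a ⊕ b) => v p) h
      simp [h, this]
    · have hn := norm_ne_zero_iff.mpr h
      have h1 : f (Sum.inl i) ∈ Set.univ := trivial
      have := hb (Sum.inl i) (by simp [T, f, h])
      simp only [Matrix.of_apply, this, f, Sum.elim_inl]
      simp only [PiLp.smul_apply, smul_eq_mul]
      rw [mul_inv_cancel_left₀ hn]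

/-- model matrix -/
def Dm {m : ℕ} (σ : Fin m → ℝ) : Matrix (Fin m ⊕ Fin m) (Fin m ⊕ Fin m) ℝ :=
  Matrix.fromBlocks 0 (Matrix.diagonal σ) (Matrix.diagonal σ) 0

lemma svd {m : ℕ} (X : Matrix ((Fin m ⊕ Fin m) ⊕ Fin 3) ((Fin m ⊕ Fin m) ⊕ Fin 3) ℝ) (hX : Xᵀ = X)
    (h1 : ∀ i j, X (.inl (.inl i)) (.inl (.inl j)) = 0)
    (h2 : ∀ p q, X ((Equiv.sumAssoc _ _ _).symm (.inr p)) ((Equiv.sumAssoc _ _ _).symm (.inr q)) = 0) :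
    ∃ (Q : Matrix ((Fin m ⊕ Fin m) ⊕ Fin 3) ((Fin m ⊕ Fin m) ⊕ Fin 3) ℝ) (σ : Fin m → ℝ),
      Qᵀ * Q = 1 ∧ X = Q * Matrix.fromBlocks (Dm σ) 0 0 0 * Qᵀ := by
  set e := Equiv.sumAssoc (Fin m) (Fin m) (Fin 3) with he
  set X' := X.submatrix e.symm e.symm with hX'
  set B : Matrix (Fin m ⊕ Fin 3) (Fin m) ℝ := X'.toBlocks₂₁ with hB
  have hXb : X' = Matrix.fromBlocks 0 Bᵀ B 0 := by
    ext p q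
    rcases p with p | p <;> rcases q with q | q
    · exact h1 p q
    · exact congrFun (congrFun hX.symm _) _
    · rfl
    · exact h2 p q
  obtain ⟨V, s, hV, hV', hVs⟩ := spectral (Bᵀ * B) (by simp)
  obtain ⟨U, σ, hU, hUσ⟩ := exists_U (B * V) s (by
    rw [Matrix.transpose_mul, Matrix.mul_assoc, ← Matrix.mul_assoc Bᵀ, hVs]
    simp only [Matrix.mul_assoc]
    rw [hV, mul_one, ← Matrix.mul_assoc, hV, one_mul])
  set N : Matrix (Fin m ⊕ Fin 3) (Fin m) ℝ := Matrix.fromRows (Matrix.diagonal σ) 0 with hN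
  have hBV : B * V = U * N := by
    ext p i
    rw [hUσ, Matrix.mul_apply, Fintype.sum_sum_type]
    simp [hN, Matrix.diagonal_apply, mul_comm]
  have hBN : B = U * N * Vᵀ := by
    rw [← hBV, Matrix.mul_assoc, hV', Matrix.mul_one]
  have hU' : U * Uᵀ = 1 := mul_eq_one_comm.mp hU
  set Q' := Matrix.fromBlocks V 0 0 U with hQ'
  have hQQ : Q'ᵀ * Q' = 1 := by
    rw [hQ', Matrix.fromBlocks_transpose, Matrix.fromBlocks_multiply]
    simp [hV, hU]
  have hX'Q : X' = Q' * Matrix.fromBlocks 0 Nᵀ N 0 * Q'ᵀ := by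
    rw [hXb, hQ', Matrix.fromBlocks_transpose, Matrix.fromBlocks_multiply, Matrix.fromBlocks_multiply]
    simp only [Matrix.mul_zero, Matrix.zero_mul, add_zero, zero_add, Matrix.transpose_zero]
    rw [← hBN]
    congr 1
    rw [hBN, Matrix.transpose_mul, Matrix.transpose_mul, Matrix.transpose_transpose, Matrix.mul_assoc]
  refine ⟨Q'.submatrix e e, σ, ?_, ?_⟩
  · rw [Matrix.transpose_submatrix, Matrix.submatrix_mul_equiv, hQQ, Matrix.submatrix_one_equiv]
  · have hD : Matrix.fromBlocks (Dm σ) 0 0 (0 : Matrix (Fin 3) (Fin 3) ℝ) =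
        (Matrix.fromBlocks 0 Nᵀ N 0).submatrix e e := by
      ext p q
      rcases p with (p | p) | p <;> rcases q with (q | q) | q <;>
        simp [Dm, he, hN, Matrix.diagonal_apply, eq_comm]
      split_ifs with h
      · rw [h]
      · rfl
    rw [hD, Matrix.transpose_submatrix, Matrix.submatrix_mul_equiv, Matrix.submatrix_mul_equiv, ← hX'Q, hX']
    simp

lemma exp_sympl {m : ℕ} (K : Matrix (Fin m ⊕ Fin m) (Fin m ⊕ Fin m) ℝ) (hK : Kᵀ = K)
    (h : K * Matrix.J (Fin m) ℝ = - (Matrix.J (Fin m) ℝ * K)) :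
    exp K ∈ Matrix.symplecticGroup (Fin m) ℝ := by
  rw [SymplecticGroup.mem_iff, ← Matrix.exp_transpose, hK]
  have hJ : Matrix.J (Fin m) ℝ * -(Matrix.J (Fin m) ℝ) = 1 := by
    rw [mul_neg, Matrix.J_squared, neg_neg]
  have hi : (Matrix.J (Fin m) ℝ)⁻¹ = -Matrix.J (Fin m) ℝ := Matrix.inv_eq_right_inv hJ
  have hu : IsUnit (Matrix.J (Fin m) ℝ) := ⟨⟨_, _, hJ, mul_eq_one_comm.mp hJ⟩, rfl⟩
  have h1 := Matrix.exp_conj (Matrix.J (Fin m) ℝ) (-K) hu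
  have h2 : Matrix.J (Fin m) ℝ * -K * (Matrix.J (Fin m) ℝ)⁻¹ = K := by
    rw [mul_neg, ← h, hi, Matrix.mul_assoc, hJ, mul_one]
  rw [h2, hi] at h1
  have h3 : exp K * Matrix.J (Fin m) ℝ = Matrix.J (Fin m) ℝ * exp (-K) := by
    rw [h1, Matrix.mul_assoc, mul_eq_one_comm.mp hJ, mul_one]
  rw [h3, Matrix.mul_assoc, ← Matrix.exp_add_of_commute _ _ ((Commute.refl K).neg_left)]
  simp

lemma exp_Dm {m : ℕ} (σ : Fin m → ℝ) (t : ℝ) : exp (t • Dm σ) ∈ Matrix.symplecticGroup (Fin m) ℝ := by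
  refine exp_sympl _ ?_ ?_
  · simp [Dm, Matrix.fromBlocks_transpose]
  · rw [Matrix.smul_mul, Matrix.mul_smul, ← smul_neg]
    congr 1
    simp [Dm, Matrix.J, Matrix.fromBlocks_multiply]

end Svd
end CK

open scoped Matrix

namespace CK
open NormedSpace

section Dim

/-- index type -/
abbrev Idx (m : ℕ) := (Fin m ⊕ Fin m) ⊕ Fin 3

lemma sym_out {a : Type*} (F : a → a → ℝ) (hF : ∀ i j, F i j = F j i)
    (h : ∀ s : Sym2 a, F (Quot.out s).1 (Quot.out s).2 = 0) (i j : a) : F i j = 0 := by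
  have h1 := h s(i, j)
  have h2 : Quot.mk _ (Quot.out s(i, j)) = s(i, j) := Quot.out_eq _
  have h3 : s((Quot.out s(i, j)).1, (Quot.out s(i, j)).2) = s(i, j) := h2
  rcases Sym2.eq_iff.mp h3 with ⟨e1, e2⟩ | ⟨e1, e2⟩
  · rwa [e1, e2] at h1
  · rw [e1, e2] at h1; rw [hF, h1]

/-- block conditions -/
noncomputable def cond1 (m : ℕ) : Matrix (Idx m) (Idx m) ℝ →ₗ[ℝ]
    ((Sym2 (Fin m) → ℝ) × (Sym2 (Fin m ⊕ Fin 3) → ℝ)) where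
  toFun X := (fun s => X (.inl (.inl (Quot.out s).1)) (.inl (.inl (Quot.out s).2)),
    fun s => X ((Equiv.sumAssoc _ _ _).symm (.inr (Quot.out s).1))
      ((Equiv.sumAssoc _ _ _).symm (.inr (Quot.out s).2)))
  map_add' X Y := rfl
  map_smul' c X := rfl

lemma dim_bound {m : ℕ} {S : Set (Matrix (Idx m) (Idx m) ℝ)} (hS : Grp S)
    (proper : ∀ X : Matrix (Idx m) (Idx m) ℝ, Xᵀ = X → ∀ q : Matrix (Idx m) (Idx m) ℝ, q.det = 1 →
      (∀ t : ℝ, exp (t • X) ∈ S ∧ ∃ B ∈ Matrix.symplecticGroup (Fin m) ℝ,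
        exp (t • X) = q * Matrix.fromBlocks B 0 0 1 * q⁻¹) → X = 0) :
    Module.finrank ℝ hS.pp ≤ (m + 1).choose 2 + (m + 4).choose 2 := by
  by_contra! hlt
  have hk : LinearMap.ker ((cond1 m).comp hS.pp.subtype) ≠ ⊥ := by
    apply LinearMap.ker_ne_bot_of_finrank_lt
    rw [Module.finrank_prod, Module.finrank_fintype_fun_eq_card, Module.finrank_fintype_fun_eq_card,
      Sym2.card, Sym2.card]
    simpa using hlt
  obtain ⟨⟨X, hX⟩, hX0, hne⟩ := (Submodule.ne_bot_iff _).mp hk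
  apply hne
  rw [LinearMap.mem_ker] at hX0
  have hc : cond1 m X = 0 := hX0
  have hsym : ∀ i j, X i j = X j i := fun i j => congrFun (congrFun hX.1.symm i) j
  have h1 : ∀ i j, X (.inl (.inl i)) (.inl (.inl j)) = 0 :=
    sym_out (fun i j => X (.inl (.inl i)) (.inl (.inl j))) (fun i j => hsym _ _)
      (fun s => congrFun (congrArg Prod.fst hc) s)
  have h2 := 
    sym_out (fun p q => X ((Equiv.sumAssoc _ _ _).symm (.inr p)) ((Equiv.sumAssoc _ _ _).symm (.inr q)))
      (fun i j => hsym _ _) (fun s => congrFun (congrArg Prod.snd hc) s)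
  obtain ⟨Q, σ, hQ, hXQ⟩ := svd X hX.1 h1 h2
  have key : ∀ q : Matrix (Idx m) (Idx m) ℝ, qᵀ * q = 1 → X = q * Matrix.fromBlocks (Dm σ) 0 0 0 * qᵀ →
      q.det = 1 → X = 0 := by
    intro q hq hXq hdet
    refine proper X hX.1 q hdet fun t => ⟨hX.2 t, exp (t • Dm σ), exp_Dm σ t, ?_⟩
    have hi : q⁻¹ = qᵀ := Matrix.inv_eq_left_inv hq
    have hu : IsUnit q := (Matrix.isUnit_iff_isUnit_det _).mpr (by rw [hdet]; exact isUnit_one)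
    have : t • X = q * Matrix.fromBlocks (t • Dm σ) 0 0 0 * q⁻¹ := by
      rw [hXq, hi, ← Matrix.smul_mul, ← Matrix.mul_smul, Matrix.fromBlocks_smul]
      simp
    rw [this, Matrix.exp_conj _ _ hu, exp_block]
    simp [Dm, Matrix.fromBlocks_transpose]
  have hdet : Q.det * Q.det = 1 := by
    have := congrArg Matrix.det hQ
    rwa [Matrix.det_mul, Matrix.det_transpose, Matrix.det_one] at this
  apply Subtype.ext
  rcases mul_self_eq_one_iff.mp hdet with h | h
  · exact key Q hQ hXQ h
  · refine key (-Q) (by simpa using hQ) (by simpa using hXQ) ?_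
    rw [Matrix.det_neg, h]
    have : Odd (Fintype.card (Idx m)) := ⟨m + 1, by simp; ring⟩
    rw [this.neg_one_pow]; norm_num

/-- symmetric matrix from function on unordered pairs -/
def symM (a : Type*) : (Sym2 a → ℝ) →ₗ[ℝ] Matrix a a ℝ where
  toFun f := Matrix.of fun i j => f s(i, j)
  map_add' _ _ := rfl
  map_smul' _ _ := rfl

/-- symplectic conditions -/
noncomputable def cond2 (m : ℕ) : Matrix (Idx m) (Idx m) ℝ →ₗ[ℝ]
    ((Sym2 (Fin m) → ℝ) × (Sym2 (Fin m) → ℝ)) where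
  toFun X := (fun s => X (.inl (.inl (Quot.out s).1)) (.inl (.inl (Quot.out s).2)) -
      X (.inl (.inr (Quot.out s).1)) (.inl (.inr (Quot.out s).2)),
    fun s => X (.inl (.inl (Quot.out s).1)) (.inl (.inr (Quot.out s).2)) +
      X (.inl (.inr (Quot.out s).1)) (.inl (.inl (Quot.out s).2)))
  map_add' X Y := by
    ext s <;> simp <;> ring
  map_smul' c X := by
    ext s <;> simp <;> ring

lemma exists_W {m : ℕ} (hm : 1 ≤ m) (P : Submodule ℝ (Matrix (Idx m) (Idx m) ℝ))
    (hP : Module.finrank ℝ P ≤ (m + 1).choose 2 + (m + 4).choose 2) :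
    ∃ W : Matrix (Idx m) (Idx m) ℝ, Wᵀ = W ∧ W ≠ 0 ∧ W.trace = 0 ∧ (∀ X ∈ P, (X * W).trace = 0) ∧
      ∀ A B : Matrix (Fin m) (Fin m) ℝ,
        (Matrix.fromBlocks (Matrix.fromBlocks A B B (-A)) 0 0 (0 : Matrix (Fin 3) (Fin 3) ℝ) * W).trace = 0 := by
  have hk : LinearMap.ker ((((pairing P).prod (Matrix.traceLinearMap (Idx m) ℝ ℝ)).prod (cond2 m)).comp
      (symM (Idx m))) ≠ ⊥ := by
    apply LinearMap.ker_ne_bot_of_finrank_lt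
    rw [Module.finrank_prod, Module.finrank_prod, Module.finrank_prod, Subspace.dual_finrank_eq,
      Module.finrank_fintype_fun_eq_card, Module.finrank_fintype_fun_eq_card,
      Sym2.card, Sym2.card, Module.finrank_self]
    simp only [Fintype.card_sum, Fintype.card_fin]
    have e1 : ∀ x : ℕ, ((x + 1).choose 2) * 2 = (x + 1) * x := by
      intro x
      rw [Nat.choose_two_right, Nat.add_sub_cancel]
      exact Nat.div_mul_cancel (by
        rw [mul_comm]; exact (Nat.even_mul_succ_self x).two_dvd)
    have := e1 m
    have := e1 (m + 3)
    have := e1 (m + m + 3)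
    nlinarith
  obtain ⟨f, hf0, hne⟩ := (Submodule.ne_bot_iff _).mp hk
  rw [LinearMap.mem_ker] at hf0
  set W := symM (Idx m) f with hW
  have hWs : ∀ i j, W i j = W j i := by
    intro i j
    change f s(i, j) = f s(j, i)
    rw [Sym2.eq_swap]
  have h1 : pairing P W = 0 := congrArg (fun z => z.1.1) hf0
  have h2 : W.trace = 0 := congrArg (fun z => z.1.2) hf0
  have h3 : cond2 m W = 0 := congrArg (fun z => z.2) hf0
  have c1 := sym_out (fun i j => W (.inl (.inl i)) (.inl (.inl j)) - W (.inl (.inr i)) (.inl (.inr j)))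
    (fun i j => by simp only [hWs (.inl (.inl i)), hWs (.inl (.inr i))])
    (fun s => congrFun (congrArg Prod.fst h3) s)
  have c2 := sym_out (fun i j => W (.inl (.inl i)) (.inl (.inr j)) + W (.inl (.inr i)) (.inl (.inl j)))
    (fun i j => by rw [hWs (.inl (.inl i)), hWs (.inl (.inr i)), add_comm])
    (fun s => congrFun (congrArg Prod.snd h3) s)
  refine ⟨W, ?_, ?_, h2, (mem_perp P W).mp h1, ?_⟩
  · ext i j; exact hWs j i
  · intro h0
    apply hne
    ext s
    induction s using Sym2.ind with
    | _ i j => exact congrFun (congrFun h0 i) j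
  · intro A B
    have hA : ∀ i, ∑ j, A i j * W (.inl (.inl j)) (.inl (.inl i)) = ∑ j, A i j * W (.inl (.inr j)) (.inl (.inr i)) := by
      intro i
      refine Finset.sum_congr rfl fun j _ => ?_
      have := c1 j i
      simp only [sub_eq_zero] at this
      rw [this]
    have hB : ∑ i, ∑ j, B i j * W (.inl (.inr j)) (.inl (.inl i)) = - ∑ i, ∑ j, B i j * W (.inl (.inl j)) (.inl (.inr i)) := by
      rw [← Finset.sum_neg_distrib]
      refine Finset.sum_congr rfl fun i _ => ?_
      rw [← Finset.sum_neg_distrib]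
      refine Finset.sum_congr rfl fun j _ => ?_
      have : W (.inl (.inl j)) (.inl (.inr i)) + W (.inl (.inr j)) (.inl (.inl i)) = 0 := c2 j i
      rw [eq_neg_of_add_eq_zero_right this]
      ring
    simp only [Matrix.trace, Matrix.diag, Matrix.mul_apply, Fintype.sum_sum_type,
      Matrix.fromBlocks_apply₁₁, Matrix.fromBlocks_apply₁₂, Matrix.fromBlocks_apply₂₁, Matrix.fromBlocks_apply₂₂,
      Finset.sum_add_distrib, hA, hB, Matrix.zero_apply, Matrix.neg_apply, neg_mul, zero_mul,
      Finset.sum_const_zero, Finset.sum_neg_distrib]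
    ring

end Dim
end CK

open scoped Matrix

namespace CK
open NormedSpace

section Core
open Filter Topology

lemma big_a {n : Type*} [Fintype n] [DecidableEq n] (W : Matrix n n ℝ) (hW : Wᵀ = W) (h0 : W ≠ 0)
    (htr : W.trace = 0) (R : ℝ) : ∃ (a : Matrix n n ℝ) (α β : ℝ), aᵀ = a ∧ a.det = 1 ∧
      a * a = α • (1 : Matrix n n ℝ) + β • W ∧ R < (a * a).trace := by
  obtain ⟨U, w, hU, hU', rfl⟩ := spectral W hW
  have hw0 : ∃ i, w i < 0 := by
    by_contra! hcon
    rw [Matrix.trace_mul_comm, ← Matrix.mul_assoc, hU, one_mul, Matrix.trace_diagonal,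
      Finset.sum_eq_zero_iff_of_nonneg (fun i _ => hcon i)] at htr
    apply h0
    have : Matrix.diagonal w = 0 := by
      rw [Matrix.diagonal_eq_zero]
      ext i; exact htr i (Finset.mem_univ i)
    simp [this]
  have htr' : ∑ i, w i = 0 := by
    rwa [Matrix.trace_mul_comm, ← Matrix.mul_assoc, hU, one_mul, Matrix.trace_diagonal] at htr
  haveI : Nonempty n := ⟨hw0.choose⟩
  obtain ⟨i0, hi0⟩ := Finite.exists_min w
  have hneg : w i0 < 0 := by
    obtain ⟨i, hi⟩ := hw0
    exact (hi0 i).trans_lt hi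
  set N := Fintype.card n with hN
  have hNpos : 0 < N := Fintype.card_pos
  set f : ℝ → ℝ := fun s => ∏ i, (s + w i) with hf
  have hfc : Continuous f := by fun_prop
  have hf0 : f (- w i0) = 0 := Finset.prod_eq_zero (Finset.mem_univ i0) (by simp)
  set C : ℝ := |R| / (- w i0) + 1 with hC
  have hCpos : 0 < C := by have := neg_pos.mpr hneg; positivity
  have hev : ∀ᶠ s in 𝓝[>] (- w i0), f s < (C ^ N)⁻¹ := by
    have h1 : Tendsto f (𝓝[>] (- w i0)) (𝓝 0) := by
      rw [← hf0]; exact (hfc.tendsto _).mono_left nhdsWithin_le_nhds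
    exact h1.eventually_lt_const (by positivity)
  obtain ⟨s, hs1, hs2⟩ := (hev.and self_mem_nhdsWithin).exists
  have hpos : ∀ i, 0 < s + w i := fun i => by linarith [hi0 i]
  have hfpos : 0 < f s := Finset.prod_pos fun i _ => hpos i
  set c : ℝ := ((f s)⁻¹) ^ ((N : ℝ)⁻¹) with hc
  have hcpos : 0 < c := Real.rpow_pos_of_pos (inv_pos.mpr hfpos) _
  have hcN : c ^ N = (f s)⁻¹ := Real.rpow_inv_natCast_pow (inv_pos.mpr hfpos).le hNpos.ne'
  have hcC : C < c := by
    by_contra! hle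
    have h1 : c ^ N ≤ C ^ N := pow_le_pow_left₀ hcpos.le hle N
    rw [hcN] at h1
    have h2 : C ^ N < (f s)⁻¹ := by
      rw [lt_inv_comm₀ (by positivity) hfpos]; exact hs1
    linarith
  set d : n → ℝ := fun i => Real.sqrt (c * (s + w i)) with hd
  have hdd : ∀ i, d i * d i = c * (s + w i) := fun i => Real.mul_self_sqrt (mul_pos hcpos (hpos i)).le
  have hdU : U.det * U.det = 1 := by
    have := congrArg Matrix.det hU
    rwa [Matrix.det_mul, Matrix.det_transpose, Matrix.det_one] at this
  have haa : (U * Matrix.diagonal d * Uᵀ) * (U * Matrix.diagonal d * Uᵀ) =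
      (c * s) • (1 : Matrix n n ℝ) + c • (U * Matrix.diagonal w * Uᵀ) := by
    have e1 : (U * Matrix.diagonal d * Uᵀ) * (U * Matrix.diagonal d * Uᵀ) =
        U * (Matrix.diagonal d * Matrix.diagonal d) * Uᵀ := by
      rw [show (U * Matrix.diagonal d * Uᵀ) * (U * Matrix.diagonal d * Uᵀ) =
        U * Matrix.diagonal d * (Uᵀ * U) * Matrix.diagonal d * Uᵀ by simp only [Matrix.mul_assoc], hU]
      simp only [Matrix.mul_assoc, mul_one, Matrix.one_mul]
    have e2 : Matrix.diagonal d * Matrix.diagonal d = (c * s) • (1 : Matrix n n ℝ) + c • Matrix.diagonal w := by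
      rw [Matrix.diagonal_mul_diagonal, ← Matrix.diagonal_one, ← Matrix.diagonal_smul, ← Matrix.diagonal_smul,
        Matrix.diagonal_add]
      congr 1
      ext i
      rw [hdd]; simp; ring
    rw [e1, e2, Matrix.mul_add, Matrix.add_mul, Matrix.mul_smul, Matrix.smul_mul, Matrix.mul_smul, Matrix.smul_mul,
      mul_one, hU']
  refine ⟨U * Matrix.diagonal d * Uᵀ, c * s, c, ?_, ?_, haa, ?_⟩
  · simp [Matrix.mul_assoc]
  · rw [Matrix.det_mul, Matrix.det_mul, Matrix.det_transpose, Matrix.det_diagonal, mul_right_comm, hdU, one_mul]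
    have h1 : (∏ i, d i) * (∏ i, d i) = 1 := by
      rw [← Finset.prod_mul_distrib, Finset.prod_congr rfl (fun i _ => hdd i), Finset.prod_mul_distrib,
        Finset.prod_const, Finset.card_univ, ← hN, hcN]
      exact inv_mul_cancel₀ hfpos.ne'
    have h2 : 0 ≤ ∏ i, d i := Finset.prod_nonneg fun i _ => Real.sqrt_nonneg _
    nlinarith
  · rw [haa, Matrix.trace_add, Matrix.trace_smul, Matrix.trace_smul, htr, Matrix.trace_one, ← hN]
    simp only [smul_eq_mul, mul_zero, add_zero]
    have h1 : (1:ℝ) ≤ N := by exact_mod_cast hNpos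
    have h2 : R < C * (- w i0) := by
      rw [hC, add_mul, div_mul_cancel₀ _ (neg_pos.mpr hneg).ne', one_mul]
      linarith [le_abs_self R]
    have h3 : C * (- w i0) < c * s := mul_lt_mul'' hcC hs2 hCpos.le (neg_pos.mpr hneg).le
    have h4 : 0 < c * s := mul_pos hcpos (by linarith)
    nlinarith

lemma sympl_log {m : ℕ} (B : Matrix (Fin m ⊕ Fin m) (Fin m ⊕ Fin m) ℝ)
    (hB : B ∈ Matrix.symplecticGroup (Fin m) ℝ) :
    ∃ P Q : Matrix (Fin m) (Fin m) ℝ, (Matrix.fromBlocks P Q Q (-P))ᵀ = Matrix.fromBlocks P Q Q (-P) ∧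
      exp (Matrix.fromBlocks P Q Q (-P)) = B * Bᵀ := by
  obtain ⟨Z, hZ, hZe⟩ := exists_log Bᵀ (by
    rw [Matrix.det_transpose]
    exact SymplecticGroup.symplectic_det hB)
  rw [Matrix.transpose_transpose] at hZe
  have hmem : exp Z ∈ Matrix.symplecticGroup (Fin m) ℝ := by
    rw [hZe]; exact Submonoid.mul_mem _ hB (SymplecticGroup.transpose_mem hB)
  rw [SymplecticGroup.mem_iff, ← Matrix.exp_transpose, hZ] at hmem
  have h1 : exp Z * Matrix.J (Fin m) ℝ = Matrix.J (Fin m) ℝ * exp (-Z) := by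
    have h2 : exp Z * exp (-Z) = 1 := by
      rw [← Matrix.exp_add_of_commute _ _ ((Commute.refl Z).neg_right)]; simp
    calc _ = exp Z * Matrix.J (Fin m) ℝ * (exp Z * exp (-Z)) := by rw [h2, mul_one]
      _ = exp Z * Matrix.J (Fin m) ℝ * exp Z * exp (-Z) := by simp only [Matrix.mul_assoc]
      _ = _ := by rw [hmem]
  have h3 := exp_intertwine Z (-Z) _ hZ (by rw [Matrix.transpose_neg, hZ]) h1
  have hb := Matrix.fromBlocks_toBlocks Z
  have h4 : Z = Matrix.fromBlocks Z.toBlocks₁₁ Z.toBlocks₁₂ Z.toBlocks₁₂ (-Z.toBlocks₁₁) := by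
    rw [← hb] at h3
    simp only [Matrix.J, Matrix.mul_neg, Matrix.fromBlocks_multiply, Matrix.fromBlocks_neg] at h3
    have := Matrix.fromBlocks_inj.mp h3
    simp at this
    conv_lhs => rw [← hb]
    rw [← this.1, this.2.2.1]
  refine ⟨Z.toBlocks₁₁, Z.toBlocks₁₂, ?_, ?_⟩
  · rw [← h4, hZ]
  · rw [← h4, hZe]

theorem core {m : ℕ} (hm : 1 ≤ m) {S : Set (Matrix (Idx m) (Idx m) ℝ)} (hS : Grp S)
    (comp : ∀ A ∈ S, ∃ N : ℕ, 1 ≤ N ∧ ∃ T ⊆ S, IsPreconnected T ∧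
      (1 : Matrix (Idx m) (Idx m) ℝ) ∈ T ∧ A ^ N ∈ T)
    (proper : ∀ X : Matrix (Idx m) (Idx m) ℝ, Xᵀ = X → ∀ q : Matrix (Idx m) (Idx m) ℝ, q.det = 1 →
      (∀ t : ℝ, exp (t • X) ∈ S ∧ ∃ B ∈ Matrix.symplecticGroup (Fin m) ℝ,
        exp (t • X) = q * Matrix.fromBlocks B 0 0 1 * q⁻¹) → X = 0)
    (cocpt : ∃ R : ℝ, ∀ a : Matrix (Idx m) (Idx m) ℝ, a.det = 1 →
      ∃ l ∈ S, ∃ B ∈ Matrix.symplecticGroup (Fin m) ℝ,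
        ((l * a * Matrix.fromBlocks B 0 0 1)ᵀ * (l * a * Matrix.fromBlocks B 0 0 1)).trace ≤ R) : False := by
  obtain ⟨W, hW, hW0, hWt, hWp, hWh⟩ := exists_W hm hS.pp (dim_bound hS proper)
  obtain ⟨R, hR⟩ := cocpt
  obtain ⟨a, α, β, ha, had, haa, haR⟩ := big_a W hW hW0 hWt R
  obtain ⟨l, hl, B, hB, hle⟩ := hR a had
  obtain ⟨X, hX, hlX⟩ := hS.cartan comp hl
  obtain ⟨P, Q, hsym, hPQ⟩ := sympl_log B hB
  set Z : Matrix (Idx m) (Idx m) ℝ := Matrix.fromBlocks (Matrix.fromBlocks P Q Q (-P)) 0 0 0 with hZ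
  have hZt : Zᵀ = Z := by
    rw [hZ, Matrix.fromBlocks_transpose, hsym]; simp
  have hZe : exp Z = Matrix.fromBlocks B 0 0 1 * (Matrix.fromBlocks B 0 0 1)ᵀ := by
    rw [hZ, exp_block _ hsym, hPQ, Matrix.fromBlocks_transpose, Matrix.fromBlocks_multiply]
    simp
  have hineq := trace_ineq Z X a hZt hX.1 ha
  have hZtr : Z.trace = 0 := by
    rw [hZ]; simp [Matrix.trace, Fintype.sum_sum_type]
  have hXtr : X.trace = 0 := trace_zero_of_det X hX.1 (hS.det _ (hS.exp_mem hX))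
  have e1 : (Z * (a * a)).trace = 0 := by
    rw [haa, Matrix.mul_add, Matrix.trace_add, Matrix.mul_smul, Matrix.mul_smul, Matrix.trace_smul,
      Matrix.trace_smul, mul_one, hZtr, hZ, hWh]
    simp
  have e2 : (X * (a * a)).trace = 0 := by
    rw [haa, Matrix.mul_add, Matrix.trace_add, Matrix.mul_smul, Matrix.mul_smul, Matrix.trace_smul,
      Matrix.trace_smul, mul_one, hXtr, hWp X hX]
    simp
  have e3 : ((l * a * Matrix.fromBlocks B 0 0 1)ᵀ * (l * a * Matrix.fromBlocks B 0 0 1)).trace =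
      (exp Z * a * exp X * a).trace := by
    rw [hZe, ← hlX, Matrix.transpose_mul, Matrix.transpose_mul, ha, ← Matrix.mul_assoc, ← Matrix.mul_assoc,
      Matrix.trace_mul_comm]
    simp only [Matrix.mul_assoc]
  rw [e3] at hle
  linarith

end Core
end CK

open scoped Matrix

namespace CK
open NormedSpace

section Trans
open Filter Topology

instance slTopGroup (N : Type*) [DecidableEq N] [Fintype N] :
    IsTopologicalGroup (Matrix.SpecialLinearGroup N ℝ) :=
  Matrix.SpecialLinearGroup.topologicalGroup

lemma sl_closedEmb (N : Type*) [DecidableEq N] [Fintype N] :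
    IsClosedEmbedding (fun A : Matrix.SpecialLinearGroup N ℝ => (A : Matrix N N ℝ)) :=
  Matrix.SpecialLinearGroup.isClosedEmbedding_val

variable {ι N : Type*} [Fintype N] [DecidableEq N] [Fintype ι] [DecidableEq ι] (e : ι ≃ N)

/-- reindexing -/
def rho (A : Matrix.SpecialLinearGroup N ℝ) : Matrix ι ι ℝ := (A : Matrix N N ℝ).submatrix e e

lemma rho_mul (A B : Matrix.SpecialLinearGroup N ℝ) : rho e (A * B) = rho e A * rho e B := by
  rw [rho, rho, rho, Matrix.submatrix_mul_equiv]; rfl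

lemma rho_one : rho e (1 : Matrix.SpecialLinearGroup N ℝ) = 1 := by
  rw [rho, Matrix.SpecialLinearGroup.coe_one, Matrix.submatrix_one_equiv]

lemma rho_det (A : Matrix.SpecialLinearGroup N ℝ) : (rho e A).det = 1 := by
  rw [rho, Matrix.det_submatrix_equiv_self]; exact A.2

lemma rho_inv (A : Matrix.SpecialLinearGroup N ℝ) : rho e A⁻¹ = (rho e A)⁻¹ := by
  symm
  apply Matrix.inv_eq_right_inv
  rw [← rho_mul, mul_inv_cancel, rho_one]

lemma rho_pow (A : Matrix.SpecialLinearGroup N ℝ) (k : ℕ) : rho e (A ^ k) = (rho e A) ^ k := by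
  induction k with
  | zero => simp [rho_one]
  | succ k ih => rw [pow_succ, pow_succ, rho_mul, ih]

lemma rho_inj {A B : Matrix.SpecialLinearGroup N ℝ} (h : rho e A = rho e B) : A = B := by
  apply Subtype.ext
  ext i j
  have := congrFun (congrFun h (e.symm i)) (e.symm j)
  simpa [rho] using this

lemma rho_surj (M : Matrix ι ι ℝ) (h : M.det = 1) : ∃ A : Matrix.SpecialLinearGroup N ℝ, rho e A = M :=
  ⟨⟨M.submatrix e.symm e.symm, by rw [Matrix.det_submatrix_equiv_self, h]⟩, by ext i j; simp [rho]⟩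

lemma rho_cont : Continuous (rho e : Matrix.SpecialLinearGroup N ℝ → Matrix ι ι ℝ) :=
  (sl_closedEmb N).continuous.matrix_submatrix e e

variable (L : Subgroup (Matrix.SpecialLinearGroup N ℝ)) (g : Matrix.SpecialLinearGroup N ℝ)

/-- the conjugated set of matrices -/
def conjS : Set (Matrix ι ι ℝ) := {M | ∃ A ∈ L, M = rho e (g * A * g⁻¹)}

lemma conjS_grp (hL : IsClosed (L : Set (Matrix.SpecialLinearGroup N ℝ)))
    (hb : ∀ A ∈ L, ∃ B ∈ L, (((g * A * g⁻¹ : Matrix.SpecialLinearGroup N ℝ) : Matrix N N ℝ)ᵀ)⁻¹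
          = ((g * B * g⁻¹ : Matrix.SpecialLinearGroup N ℝ) : Matrix N N ℝ)) : Grp (conjS e L g) := by
  refine ⟨?_, ⟨1, L.one_mem, by simp [rho_one]⟩, ?_, ?_, ?_, ?_⟩
  · have h1 : IsClosed ((fun A : Matrix.SpecialLinearGroup N ℝ => (A : Matrix N N ℝ)) ''
        (L : Set (Matrix.SpecialLinearGroup N ℝ))) :=
      (sl_closedEmb N).isClosedMap _ hL
    have hc : Continuous fun M : Matrix ι ι ℝ =>
        ((g⁻¹ : Matrix.SpecialLinearGroup N ℝ) : Matrix N N ℝ) * M.submatrix e.symm e.symm * (g : Matrix N N ℝ) :=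
      (continuous_const.matrix_mul (continuous_id.matrix_submatrix _ _)).matrix_mul continuous_const
    have := h1.preimage hc
    convert this using 1
    ext M
    constructor
    · rintro ⟨A, hA, rfl⟩
      refine ⟨A, hA, ?_⟩
      beta_reduce
      have : (rho e (g * A * g⁻¹)).submatrix e.symm e.symm = ((g * A * g⁻¹ : Matrix.SpecialLinearGroup N ℝ) : Matrix N N ℝ) := by
        ext i j; simp [rho]
      rw [this, ← Matrix.SpecialLinearGroup.coe_mul, ← Matrix.SpecialLinearGroup.coe_mul]
      have h0 : A = g⁻¹ * (g * A * g⁻¹) * g := by group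
      exact congrArg _ h0
    · rintro ⟨A, hA, h⟩
      refine ⟨A, hA, ?_⟩
      have h' : (A : Matrix N N ℝ) = ((g⁻¹ : Matrix.SpecialLinearGroup N ℝ) : Matrix N N ℝ) *
        M.submatrix e.symm e.symm * (g : Matrix N N ℝ) := h
      have e1 : (g : Matrix N N ℝ) * ((g⁻¹ : Matrix.SpecialLinearGroup N ℝ) : Matrix N N ℝ) = 1 := by
        rw [← Matrix.SpecialLinearGroup.coe_mul, mul_inv_cancel, Matrix.SpecialLinearGroup.coe_one]
      rw [rho, Matrix.SpecialLinearGroup.coe_mul, Matrix.SpecialLinearGroup.coe_mul, h']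
      have e2 : (g : Matrix N N ℝ) * (((g⁻¹ : Matrix.SpecialLinearGroup N ℝ) : Matrix N N ℝ) *
        M.submatrix e.symm e.symm * (g : Matrix N N ℝ)) * ((g⁻¹ : Matrix.SpecialLinearGroup N ℝ) : Matrix N N ℝ) =
        M.submatrix e.symm e.symm := by
        calc _ = ((g : Matrix N N ℝ) * ((g⁻¹ : Matrix.SpecialLinearGroup N ℝ) : Matrix N N ℝ)) *
              M.submatrix e.symm e.symm * ((g : Matrix N N ℝ) * ((g⁻¹ : Matrix.SpecialLinearGroup N ℝ) : Matrix N N ℝ)) := by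
              simp only [Matrix.mul_assoc]
          _ = _ := by rw [e1, one_mul, mul_one]
      rw [e2]
      ext i j; simp
  · rintro _ ⟨A, hA, rfl⟩ _ ⟨B, hB, rfl⟩
    refine ⟨A * B, L.mul_mem hA hB, ?_⟩
    rw [← rho_mul]; congr 1; group
  · rintro _ ⟨A, hA, rfl⟩
    refine ⟨A⁻¹, L.inv_mem hA, ?_⟩
    rw [← rho_inv]; congr 1; group
  · rintro _ ⟨A, hA, rfl⟩
    obtain ⟨B, hB, h⟩ := hb A hA
    refine ⟨B⁻¹, L.inv_mem hB, ?_⟩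
    have h1 : rho e (g * B⁻¹ * g⁻¹) = (rho e (g * B * g⁻¹))⁻¹ := by
      rw [← rho_inv]; congr 1; group
    have h2 : rho e (g * B * g⁻¹) = ((rho e (g * A * g⁻¹))ᵀ)⁻¹ := by
      rw [rho, ← h, rho, Matrix.transpose_submatrix, Matrix.inv_submatrix_equiv]
    rw [h1, h2, Matrix.nonsing_inv_nonsing_inv]
    rw [Matrix.det_transpose, rho_det]; exact isUnit_one
  · rintro _ ⟨A, hA, rfl⟩
    exact rho_det _ _

lemma conjS_comp [Finite (ConnectedComponents L)] :
    ∀ A ∈ conjS e L g, ∃ k : ℕ, 1 ≤ k ∧ ∃ T ⊆ conjS e L g, IsPreconnected T ∧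
      (1 : Matrix ι ι ℝ) ∈ T ∧ A ^ k ∈ T := by
  rintro _ ⟨A, hA, rfl⟩
  set A' : L := ⟨A, hA⟩
  obtain ⟨i, j, hij, h⟩ := Finite.exists_ne_map_eq_of_infinite
    (fun i : ℕ => (ConnectedComponents.mk (A' ^ i) : ConnectedComponents L))
  wlog hlt : i < j generalizing i j
  · exact this j i hij.symm h.symm (lt_of_le_of_ne (not_lt.mp hlt) hij.symm)
  set φ : L → Matrix ι ι ℝ := fun x => rho e (g * ((A' ^ i)⁻¹ * x : L) * g⁻¹) with hφ
  have hφc : Continuous φ := by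
    refine (rho_cont e).comp ((continuous_const.mul ?_).mul continuous_const)
    exact continuous_subtype_val.comp (continuous_const.mul continuous_id)
  refine ⟨j - i, by omega, φ '' connectedComponent (A' ^ i), ?_,
    isPreconnected_connectedComponent.image _ hφc.continuousOn,
    ⟨A' ^ i, mem_connectedComponent, by simp [hφ, rho_one]⟩, ⟨A' ^ j, ?_, ?_⟩⟩
  · rintro _ ⟨x, _, rfl⟩
    exact ⟨_, ((A' ^ i)⁻¹ * x).2, rfl⟩
  · rw [ConnectedComponents.coe_eq_coe.mp h]; exact mem_connectedComponent
  · rw [hφ, ← rho_pow, conj_pow]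
    have : (A' ^ i)⁻¹ * A' ^ j = A' ^ (j - i) := by
      rw [inv_mul_eq_iff_eq_mul, ← pow_add]; congr 1; omega
    simp only [this]
    rfl

lemma zero_of_bounded (X : Matrix ι ι ℝ) (hX : Xᵀ = X) {K : Set (Matrix ι ι ℝ)} (hK : IsCompact K)
    (h : ∀ t : ℝ, exp (t • X) ∈ K) : X = 0 := by
  have hc : Continuous fun A : Matrix ι ι ℝ => A.trace ^ 2 := continuous_id.matrix_trace.pow 2
  obtain ⟨C, hC⟩ := (hK.image hc).bddAbove
  have hC' : ∀ t : ℝ, (exp (t • X)).trace ^ 2 ≤ C := fun t => hC ⟨_, h t, rfl⟩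
  have h1 : ∀ t : ℝ, t ^ 2 * (X * X).trace ≤ 2 * C := by
    intro t
    have := trace_sq_le (t • X) (by rw [Matrix.transpose_smul, hX])
    rw [← neg_smul, Matrix.smul_mul, Matrix.mul_smul, Matrix.trace_smul, Matrix.trace_smul] at this
    simp only [smul_eq_mul] at this
    nlinarith [hC' t, hC' (-t)]
  have h2 : (X * X).trace ≤ 0 := by
    by_contra! hpos
    have h3 := h1 (2 * |C| / (X * X).trace + 1)
    have h4 : 0 ≤ |C| / (X * X).trace := by positivity
    have h5 : |C| / (X * X).trace * (X * X).trace = |C| := div_mul_cancel₀ _ hpos.ne'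
    have h6 : (2 * |C| / (X * X).trace + 1) ^ 2 * (X * X).trace =
      4 * (|C| / (X * X).trace) * |C| + 4 * |C| + (X * X).trace := by
      rw [mul_div_assoc]
      linear_combination (4 * (|C| / (X * X).trace) + 4) * h5
    rw [h6] at h3
    have := le_abs_self C
    have := abs_nonneg C
    nlinarith [mul_nonneg h4 this]
  have h3 : 0 ≤ (X * X).trace := by
    by_cases hi : Nonempty ι
    · obtain ⟨i⟩ := hi
      exact (sq_nonneg _).trans (sq_le_trace X hX i i)
    · have := not_nonempty_iff.mp hi
      simp [Matrix.trace]
  exact eq_zero_of_trace_sq X (by rw [hX]; exact le_antisymm h2 h3)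

variable (H : Subgroup (Matrix.SpecialLinearGroup N ℝ))

lemma conjS_proper
    (hp : ∀ C : Set (Matrix.SpecialLinearGroup N ℝ ⧸ H), IsCompact C →
        IsCompact {l : L | ((fun x => l • x) '' C ∩ C).Nonempty})
    (X : Matrix ι ι ℝ) (hX : Xᵀ = X) (q : Matrix ι ι ℝ) (hq : q.det = 1)
    (h : ∀ t : ℝ, exp (t • X) ∈ conjS e L g ∧ ∃ b ∈ H, exp (t • X) = q * rho e b * q⁻¹) : X = 0 := by
  obtain ⟨q', rfl⟩ := rho_surj e q hq
  have hK := hp {((g⁻¹ * q' : Matrix.SpecialLinearGroup N ℝ) : Matrix.SpecialLinearGroup N ℝ ⧸ H)} isCompact_singleton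
  have hφ : Continuous fun l : L => rho e (g * (l : Matrix.SpecialLinearGroup N ℝ) * g⁻¹) :=
    (rho_cont e).comp ((continuous_const.mul continuous_subtype_val).mul continuous_const)
  refine zero_of_bounded X hX (hK.image hφ) fun t => ?_
  obtain ⟨⟨A, hA, hAe⟩, b, hb, hbe⟩ := h t
  refine ⟨⟨A, hA⟩, ?_, hAe.symm⟩
  rw [← rho_inv, ← rho_mul, ← rho_mul, hAe] at hbe
  have h1 := rho_inj e hbe
  refine ⟨_, ⟨_, rfl, rfl⟩, ?_⟩
  change ((A * (g⁻¹ * q') : Matrix.SpecialLinearGroup N ℝ) : Matrix.SpecialLinearGroup N ℝ ⧸ H) = _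
  rw [eq_comm, QuotientGroup.eq]
  have h2 : (g⁻¹ * q')⁻¹ * (A * (g⁻¹ * q')) = q'⁻¹ * (g * A * g⁻¹) * q' := by group
  rw [h2, h1]
  have h3 : q'⁻¹ * (q' * b * q'⁻¹) * q' = b := by group
  rwa [h3]

lemma conjS_cocpt
    (hc : CompactSpace (Quotient (MulAction.orbitRel L (Matrix.SpecialLinearGroup N ℝ ⧸ H)))) :
    ∃ R : ℝ, ∀ a : Matrix ι ι ℝ, a.det = 1 → ∃ l ∈ conjS e L g, ∃ b ∈ H,
      ((l * a * rho e b)ᵀ * (l * a * rho e b)).trace ≤ R := by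
  set F : Matrix.SpecialLinearGroup N ℝ → ℝ := fun c => ((rho e (g * c))ᵀ * rho e (g * c)).trace with hF
  have hFc : Continuous F := by
    have h1 : Continuous fun c : Matrix.SpecialLinearGroup N ℝ => rho e (g * c) := (rho_cont e).comp (continuous_const.mul continuous_id)
    exact (h1.matrix_transpose.matrix_mul h1).matrix_trace
  set π : Matrix.SpecialLinearGroup N ℝ → Quotient (MulAction.orbitRel L (Matrix.SpecialLinearGroup N ℝ ⧸ H)) := fun c => Quotient.mk _ (c : Matrix.SpecialLinearGroup N ℝ ⧸ H) with hπ
  have hsm : ContinuousConstSMul L (Matrix.SpecialLinearGroup N ℝ ⧸ H) :=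
    ⟨fun l => continuous_const_smul (l : Matrix.SpecialLinearGroup N ℝ)⟩
  have hπo : IsOpenMap π :=
    (isOpenMap_quotient_mk'_mul (Γ := L) (T := Matrix.SpecialLinearGroup N ℝ ⧸ H)).comp QuotientGroup.isOpenMap_coe
  obtain ⟨r, hr⟩ := isCompact_univ.elim_directed_cover (fun r : ℕ => π '' {c | F c < r})
    (fun r => hπo _ (isOpen_lt hFc continuous_const))
    (by
      intro z _
      obtain ⟨y, rfl⟩ := Quotient.exists_rep z
      obtain ⟨c, rfl⟩ := QuotientGroup.mk_surjective y
      obtain ⟨r, hr⟩ := exists_nat_gt (F c)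
      exact Set.mem_iUnion.mpr ⟨r, c, hr, rfl⟩)
    (directed_of_isDirected_le (fun r s hrs => Set.image_mono fun c hc => by
      have : (r : ℝ) ≤ s := by exact_mod_cast hrs
      exact lt_of_lt_of_le hc this))
  refine ⟨r, fun a ha => ?_⟩
  obtain ⟨a', rfl⟩ := rho_surj e a ha
  obtain ⟨c, hc, hce⟩ := hr (Set.mem_univ (π (g⁻¹ * a')))
  have h1 := Quotient.exact hce
  obtain ⟨l, hl⟩ := MulAction.orbitRel_apply.mp h1
  have hl' : (((l : Matrix.SpecialLinearGroup N ℝ) * (g⁻¹ * a') : Matrix.SpecialLinearGroup N ℝ) : Matrix.SpecialLinearGroup N ℝ ⧸ H) = (c : Matrix.SpecialLinearGroup N ℝ ⧸ H) := hl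
  rw [QuotientGroup.eq] at hl'
  refine ⟨_, ⟨l, l.2, rfl⟩, _, hl', ?_⟩
  rw [← rho_mul, ← rho_mul]
  have h2 : g * (l : Matrix.SpecialLinearGroup N ℝ) * g⁻¹ * a' * (((l : Matrix.SpecialLinearGroup N ℝ) * (g⁻¹ * a'))⁻¹ * c) = g * c := by group
  rw [h2]
  exact le_of_lt hc

end Trans
end CK

open scoped Matrix

namespace CK
section Final

/-- index equivalence -/
def eF (m : ℕ) : Fin m ⊕ Fin m ≃ Fin (2 * (m + 1) - 2) :=
  finSumFinEquiv.trans (finCongr (by omega))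

/-- index equivalence -/
def eE (m : ℕ) : Idx m ≃ Fin (2 * (m + 1) + 1) :=
  ((Equiv.sumCongr (eF m) (Equiv.refl (Fin 3))).trans finSumFinEquiv).trans (finCongr (by omega))

lemma eF_inl (m : ℕ) (i : Fin m) : (eF m (.inl i) : ℕ) = i := by simp [eF]
lemma eF_inr (m : ℕ) (i : Fin m) : (eF m (.inr i) : ℕ) = m + i := by simp [eF, add_comm]
lemma eE_inl (m : ℕ) (p : Fin m ⊕ Fin m) : (eE m (.inl p) : ℕ) = eF m p := by simp [eE]
lemma eE_inr (m : ℕ) (j : Fin 3) : (eE m (.inr j) : ℕ) = 2 * (m + 1) - 2 + j := by simp [eE]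

lemma Omega_eq (m : ℕ) (Ω : Matrix (Fin (2*(m+1)-2)) (Fin (2*(m+1)-2)) ℝ)
    (hΩ : ∀ i j : Fin (2*(m+1)-2), Ω i j =
      if (i : ℕ) + (m + 1 - 1) = (j : ℕ) then 1
      else if (j : ℕ) + (m + 1 - 1) = (i : ℕ) then -1 else 0) :
    Ω.submatrix (eF m) (eF m) = - Matrix.J (Fin m) ℝ := by
  simp only [Nat.add_sub_cancel] at hΩ
  ext p q
  rcases p with p | p <;> rcases q with q | q <;>
    simp only [Matrix.submatrix_apply, hΩ, eF_inl, eF_inr, Matrix.J, Matrix.neg_apply,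
      Matrix.fromBlocks_apply₁₁, Matrix.fromBlocks_apply₁₂, Matrix.fromBlocks_apply₂₁, Matrix.fromBlocks_apply₂₂,
      Matrix.zero_apply, Matrix.one_apply, Fin.ext_iff, neg_zero, neg_neg]
  all_goals
    have hp : (p : ℕ) < m := p.2
    have hq : (q : ℕ) < m := q.2
    split_ifs <;> first | rfl | (exfalso; omega) | simp

lemma H_iff (m : ℕ)
    (Ω : Matrix (Fin (2*(m+1)-2)) (Fin (2*(m+1)-2)) ℝ)
    (hΩ : ∀ i j : Fin (2*(m+1)-2), Ω i j =
      if (i : ℕ) + (m + 1 - 1) = (j : ℕ) then 1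
      else if (j : ℕ) + (m + 1 - 1) = (i : ℕ) then -1 else 0)
    (A : Matrix.SpecialLinearGroup (Fin (2*(m+1)+1)) ℝ) :
    (∃ B : Matrix (Fin (2*(m+1)-2)) (Fin (2*(m+1)-2)) ℝ,
        IsUnit B.det ∧ Bᵀ * Ω * B = Ω ∧
        (∀ (i j : Fin (2*(m+1)+1)) (hi : (i : ℕ) < 2*(m+1)-2) (hj : (j : ℕ) < 2*(m+1)-2),
          (A : Matrix (Fin (2*(m+1)+1)) (Fin (2*(m+1)+1)) ℝ) i j = B ⟨(i : ℕ), hi⟩ ⟨(j : ℕ), hj⟩) ∧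
        (∀ i j : Fin (2*(m+1)+1), 2*(m+1)-2 ≤ (i : ℕ) ∨ 2*(m+1)-2 ≤ (j : ℕ) →
          (A : Matrix (Fin (2*(m+1)+1)) (Fin (2*(m+1)+1)) ℝ) i j = if i = j then 1 else 0)) ↔
    ∃ B ∈ Matrix.symplecticGroup (Fin m) ℝ, rho (eE m) A = Matrix.fromBlocks B 0 0 1 := by
  have hO := Omega_eq m Ω hΩ
  have hsp : ∀ B : Matrix (Fin (2*(m+1)-2)) (Fin (2*(m+1)-2)) ℝ, Bᵀ * Ω * B = Ω ↔
      B.submatrix (eF m) (eF m) ∈ Matrix.symplecticGroup (Fin m) ℝ := by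
    intro B
    have hJ : Matrix.J (Fin m) ℝ = -(Ω.submatrix (eF m) (eF m)) := by rw [hO, neg_neg]
    rw [SymplecticGroup.mem_iff', hJ, Matrix.mul_neg, Matrix.neg_mul, neg_inj,
      Matrix.transpose_submatrix, Matrix.submatrix_mul_equiv, Matrix.submatrix_mul_equiv]
    constructor
    · intro h; rw [h]
    · intro h
      ext i j
      have := congrFun (congrFun h ((eF m).symm i)) ((eF m).symm j)
      simpa using this
  constructor
  · rintro ⟨B, -, hB, h1, h2⟩
    refine ⟨_, (hsp B).mp hB, ?_⟩
    have hlt : ∀ p, (eE m (.inl p) : ℕ) < 2*(m+1)-2 := fun p => by rw [eE_inl]; exact (eF m p).2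
    have hge : ∀ p, 2*(m+1)-2 ≤ (eE m (.inr p) : ℕ) := fun p => by rw [eE_inr]; omega
    ext p q
    rcases p with p | p <;> rcases q with q | q
    · rw [rho, Matrix.submatrix_apply, h1 _ _ (hlt p) (hlt q), Matrix.fromBlocks_apply₁₁, Matrix.submatrix_apply]
      congr 1
    · rw [rho, Matrix.submatrix_apply, h2 _ _ (Or.inr (hge q)), if_neg (by simp)]; rfl
    · rw [rho, Matrix.submatrix_apply, h2 _ _ (Or.inl (hge p)), if_neg (by simp)]; rfl
    · rw [rho, Matrix.submatrix_apply, h2 _ _ (Or.inl (hge p)), Matrix.fromBlocks_apply₂₂, Matrix.one_apply]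
      simp
  · rintro ⟨B, hB, h⟩
    have hsub : (B.submatrix (eF m).symm (eF m).symm).submatrix (eF m) (eF m) = B := by
      ext i j; simp
    have hA : ∀ i j, (A : Matrix (Fin (2*(m+1)+1)) (Fin (2*(m+1)+1)) ℝ) i j =
        (Matrix.fromBlocks B 0 0 1 : Matrix (Idx m) (Idx m) ℝ) ((eE m).symm i) ((eE m).symm j) := by
      intro i j
      rw [← h]; simp [rho]
    have hinl : ∀ (i : Fin (2*(m+1)+1)) (hi : (i : ℕ) < 2*(m+1)-2),
        (eE m).symm i = .inl ((eF m).symm ⟨i, hi⟩) := by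
      intro i hi
      rw [Equiv.symm_apply_eq]
      apply Fin.ext
      rw [eE_inl]; simp
    have hinr : ∀ (i : Fin (2*(m+1)+1)), 2*(m+1)-2 ≤ (i : ℕ) → ∃ p, (eE m).symm i = .inr p := by
      intro i hi
      rcases h3 : (eE m).symm i with p | p
      · exfalso
        rw [Equiv.symm_apply_eq] at h3
        have := congrArg Fin.val h3
        rw [eE_inl] at this
        have := (eF m p).2
        omega
      · exact ⟨p, rfl⟩
    refine ⟨B.submatrix (eF m).symm (eF m).symm, ?_, (hsp _).mpr (by rw [hsub]; exact hB), ?_, ?_⟩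
    · rw [Matrix.det_submatrix_equiv_self]; exact SymplecticGroup.symplectic_det hB
    · intro i j hi hj
      rw [hA, hinl i hi, hinl j hj]; rfl
    · intro i j hij
      have hone : ((1 : Matrix (Idx m) (Idx m) ℝ)) ((eE m).symm i) ((eE m).symm j) = if i = j then 1 else 0 := by
        rw [Matrix.one_apply]; simp
      rw [hA, ← hone, ← Matrix.fromBlocks_one]
      rcases hij with hi | hj
      · obtain ⟨p, hp⟩ := hinr i hi
        rw [hp]
        rcases (eE m).symm j with q | q <;> rfl
      · obtain ⟨p, hp⟩ := hinr j hj
        rw [hp]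
        rcases (eE m).symm i with q | q <;> rfl

end Final
end CK


/-- For `k ≥ 5`, the homogeneous space `SL(2k+1, ℝ)/Sp(k-1, ℝ)` admits no
standard compact Clifford–Klein form: there is no closed subgroup `L` of `G = SL(2k+1, ℝ)` with
finitely many connected components, some conjugate of which is invariant under the Cartan
involution `A ↦ (Aᵀ)⁻¹` (i.e. `L` is reductive in `G`), acting properly on `G/H` with compact
orbit space `L\(G/H)`. Here `H ≅ Sp(k-1, ℝ)` consists of the block-diagonal matrices
`diag(B, I₃)` with `Bᵀ Ω B = Ω`, `Ω` the standard symplectic `(2k-2) × (2k-2)` matrix. -/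
theorem no_standard_compact_clifford_klein_form_Sp
    (k : ℕ) (hk : 5 ≤ k)
    (Ω : Matrix (Fin (2*k-2)) (Fin (2*k-2)) ℝ)
    (hΩ : ∀ i j : Fin (2*k-2), Ω i j =
      if (i : ℕ) + (k - 1) = (j : ℕ) then 1
      else if (j : ℕ) + (k - 1) = (i : ℕ) then -1 else 0)
    (H : Subgroup (Matrix.SpecialLinearGroup (Fin (2*k+1)) ℝ))
    (hH : ∀ A : Matrix.SpecialLinearGroup (Fin (2*k+1)) ℝ,
      A ∈ H ↔ ∃ B : Matrix (Fin (2*k-2)) (Fin (2*k-2)) ℝ,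
        -- `B ∈ GL(2k-2, ℝ)` and `B` is symplectic
        IsUnit B.det ∧ Bᵀ * Ω * B = Ω ∧
        -- the upper-left `(2k-2) × (2k-2)` block of `A` is `B`
        (∀ (i j : Fin (2*k+1)) (hi : (i : ℕ) < 2*k-2) (hj : (j : ℕ) < 2*k-2),
          (A : Matrix (Fin (2*k+1)) (Fin (2*k+1)) ℝ) i j = B ⟨(i : ℕ), hi⟩ ⟨(j : ℕ), hj⟩) ∧
        -- outside that block, `A` agrees with the identity matrix
        (∀ i j : Fin (2*k+1), 2*k-2 ≤ (i : ℕ) ∨ 2*k-2 ≤ (j : ℕ) →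
          (A : Matrix (Fin (2*k+1)) (Fin (2*k+1)) ℝ) i j = if i = j then 1 else 0)) :
    ¬ ∃ L : Subgroup (Matrix.SpecialLinearGroup (Fin (2*k+1)) ℝ),
      -- `L` is a closed subgroup of `G`
      IsClosed (L : Set (Matrix.SpecialLinearGroup (Fin (2*k+1)) ℝ)) ∧
      -- (a) `L` has finitely many connected components
      Finite (ConnectedComponents L) ∧
      -- (b) some conjugate `g L g⁻¹` is invariant under the Cartan involution `A ↦ (Aᵀ)⁻¹`
      (∃ g : Matrix.SpecialLinearGroup (Fin (2*k+1)) ℝ, ∀ A ∈ L, ∃ B ∈ L,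
        (((g * A * g⁻¹ : Matrix.SpecialLinearGroup (Fin (2*k+1)) ℝ) :
            Matrix (Fin (2*k+1)) (Fin (2*k+1)) ℝ)ᵀ)⁻¹
          = ((g * B * g⁻¹ : Matrix.SpecialLinearGroup (Fin (2*k+1)) ℝ) :
            Matrix (Fin (2*k+1)) (Fin (2*k+1)) ℝ)) ∧
      -- (c) the left-translation action of `L` on `G/H` is proper
      (∀ C : Set (Matrix.SpecialLinearGroup (Fin (2*k+1)) ℝ ⧸ H), IsCompact C →
        IsCompact {l : L | ((fun x => l • x) '' C ∩ C).Nonempty}) ∧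
      -- (d) the orbit space `L\(G/H)` is compact
      CompactSpace (Quotient (MulAction.orbitRel L
        (Matrix.SpecialLinearGroup (Fin (2*k+1)) ℝ ⧸ H))) := by
  obtain ⟨m, rfl⟩ : ∃ m, k = m + 1 := ⟨k - 1, by omega⟩
  rintro ⟨L, hL, hfin, ⟨g, hg⟩, hproper, hcocpt⟩
  have hH' := fun A => (hH A).trans (CK.H_iff m Ω hΩ A)
  refine CK.core (m := m) (by omega) (CK.conjS_grp (CK.eE m) L g hL hg) (CK.conjS_comp (CK.eE m) L g) ?_ ?_
  · intro X hX q hq h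
    refine CK.conjS_proper (CK.eE m) L g H hproper X hX q hq fun t => ⟨(h t).1, ?_⟩
    obtain ⟨B, hB, hBe⟩ := (h t).2
    obtain ⟨b, hb⟩ := CK.rho_surj (CK.eE m) (Matrix.fromBlocks B 0 0 1) (by
      rw [Matrix.det_fromBlocks_zero₂₁, Matrix.det_one, mul_one]
      exact SymplecticGroup.det_eq_one hB)
    exact ⟨b, (hH' b).mpr ⟨B, hB, hb⟩, by rw [hb]; exact hBe⟩
  · obtain ⟨R, hR⟩ := CK.conjS_cocpt (CK.eE m) L g H hcocpt
    refine ⟨R, fun a ha => ?_⟩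
    obtain ⟨l, hl, b, hb, hle⟩ := hR a ha
    obtain ⟨B, hB, hBe⟩ := (hH' b).mp hb
    refine ⟨l, hl, B, hB, ?_⟩
    rw [← hBe]
    exact hle
end
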